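/- Let k be a differential field of characteristic zero whose field of constants C is algebraically closed, and let k ⊂ K ⊆ E be differential fields with E a strongly normal extension of k. If there is a field embedding of K, fixing k pointwise, into a purely transcendental field extension k(Xᵢ : i ∈ I) of k (a rational function field over k in a family of independent variables), then there exists an intermediate differential field L with k ⊆ K ⊆ L ⊆ E such that L is a Picard–Vessiot extension of k for some monic linear differential operator over k. -/

import Mathlib

universe u

/-- A bundled differential field of characteristic zero: a field together with a derivation,
given as a raw function satisfying additivity and the Leibniz rule. -/
structure DFld : Type (u + 1) where
  carrier : Type u
  [fieldInst : Field carrier]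
  [charZeroInst : CharZero carrier]
  deriv : carrier → carrier
  deriv_add : ∀ a b, deriv (a + b) = deriv a + deriv b
  deriv_mul : ∀ a b, deriv (a * b) = deriv a * b + a * deriv b

attribute [instance] DFld.fieldInst DFld.charZeroInst

/-- The result of applying the monic linear differential operator
`∂^n + a_{n-1} ∂^{n-1} + ⋯ + a_1 ∂ + a_0` (with coefficients `a`) to `y`,
where the derivation is given by `D`. -/
def LApply {E : Type u} [Field E] (D : E → E) (n : ℕ) (a : Fin n → E) (y : E) : E :=
  D^[n] y + ∑ i : Fin n, a i * D^[(i : ℕ)] y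

/-- `diffGen D k S` is the smallest differential subfield (w.r.t. the derivation `D`)
containing the subfield `k` and the set `S`; i.e. the differential field `k⟨S⟩`. -/
def diffGen {E : Type u} [Field E] (D : E → E) (k : Subfield E) (S : Set E) : Subfield E :=
  sInf {F : Subfield E | k ≤ F ∧ S ⊆ ↑F ∧ ∀ x ∈ F, D x ∈ F}

/-- The subfield of constants of a differential subfield `k`: `{x ∈ k | D x = 0}`. -/
def constantsOf {E : Type u} [Field E] (D : Derivation ℤ E E) (k : Subfield E) : Subfield E where
  carrier := {x | x ∈ k ∧ D x = 0}
  zero_mem' := ⟨k.zero_mem, map_zero D⟩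
  one_mem' := ⟨k.one_mem, D.map_one_eq_zero⟩
  add_mem' := by
    rintro a b ⟨hak, ha0⟩ ⟨hbk, hb0⟩
    exact ⟨k.add_mem hak hbk, by rw [map_add, ha0, hb0, add_zero]⟩
  neg_mem' := by
    rintro a ⟨hak, ha0⟩
    exact ⟨k.neg_mem hak, by rw [map_neg, ha0, neg_zero]⟩
  mul_mem' := by
    rintro a b ⟨hak, ha0⟩ ⟨hbk, hb0⟩
    exact ⟨k.mul_mem hak hbk, by
      rw [Derivation.leibniz, ha0, hb0, smul_zero, smul_zero, add_zero]⟩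
  inv_mem' := by
    rintro x ⟨hxk, hx0⟩
    refine ⟨k.inv_mem hxk, ?_⟩
    by_cases h : x = 0
    · simp [h]
    · have h1 : D (x * x⁻¹) = 0 := by rw [mul_inv_cancel₀ h, D.map_one_eq_zero]
      rw [Derivation.leibniz, hx0, smul_zero, add_zero, smul_eq_mul] at h1
      exact (mul_eq_zero.mp h1).resolve_left h

/-- `F` is a Picard–Vessiot extension of `k` (inside a common differential field) for the
monic linear differential operator of order `n` with (lower-order) coefficients `a`:
both are differential subfields, the constants of `F` equal the constants of `k`,
the coefficients lie in `k`, and `F` is differentially generated over `k` by an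
`n`-dimensional vector space (over the constants) of solutions. -/
def IsPVWith {E : Type u} [Field E] (D : E → E) (k F : Subfield E) (n : ℕ)
    (a : Fin n → E) : Prop :=
  k ≤ F ∧ (∀ x ∈ k, D x ∈ k) ∧ (∀ x ∈ F, D x ∈ F) ∧
  (∀ x ∈ F, D x = 0 → x ∈ k) ∧
  (∀ i, a i ∈ k) ∧
  ∃ y : Fin n → E,
    (∀ i, y i ∈ F) ∧
    (∀ i, LApply D n a (y i) = 0) ∧
    (∀ c : Fin n → E, (∀ i, c i ∈ k ∧ D (c i) = 0) → (∑ i, c i * y i) = 0 → ∀ i, c i = 0) ∧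
    diffGen D k (Set.range y) = F

/-- `F` is a Picard–Vessiot extension of `k` for some monic linear differential operator. -/
def IsPV {E : Type u} [Field E] (D : E → E) (k F : Subfield E) : Prop :=
  ∃ (n : ℕ) (a : Fin n → E), IsPVWith D k F n a

/-- Relative version: the differential subfield `F` is a Picard–Vessiot extension
of the differential subfield `kb ≤ F`. -/
def IsPVRel {E : Type u} [Field E] (D : E → E) (kb F : Subfield E)
    (hF : ∀ x ∈ F, D x ∈ F) : Prop :=
  IsPV (fun x : ↥F => (⟨D ↑x, hF ↑x x.2⟩ : ↥F)) (Subfield.comap F.subtype kb) ⊤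

/-- The ambient differential field (with derivation `D`) is a strongly normal extension of
its differential subfield `k`: it is finitely generated as a field extension of `k`, has no
new constants, and every differential embedding over `k` into a differential field extension
`M` lands in the compositum of the image of the base copy with the constants of `M`. -/
def IsSN {E : Type u} [Field E] (D : E → E) (k : Subfield E) : Prop :=
  (∀ x ∈ k, D x ∈ k) ∧
  (∃ s : Finset E, Subfield.closure (↑k ∪ ↑s) = (⊤ : Subfield E)) ∧
  (∀ x : E, D x = 0 → x ∈ k) ∧
  ∀ (M : DFld.{u}) (ι σ : E →+* M.carrier),
    (∀ x, ι (D x) = M.deriv (ι x)) →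
    (∀ x, σ (D x) = M.deriv (σ x)) →
    (∀ x ∈ k, σ x = ι x) →
    ∀ e : E, σ e ∈ Subfield.closure (Set.range ι ∪ {m : M.carrier | M.deriv m = 0})

/-- Relative version: the differential subfield `F` is a strongly normal extension of the
differential subfield `kb ≤ F`. -/
def IsSNRel {E : Type u} [Field E] (D : E → E) (kb F : Subfield E)
    (hF : ∀ x ∈ F, D x ∈ F) : Prop :=
  IsSN (fun x : ↥F => (⟨D ↑x, hF ↑x x.2⟩ : ↥F)) (Subfield.comap F.subtype kb)

/-- `K` is a finite field extension of the subfield `M`. -/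
def FinExt {E : Type u} [Field E] (M K : Subfield E) : Prop :=
  ∃ h : M ≤ K,
    letI : Algebra ↥M ↥K := (Subfield.inclusion h).toAlgebra
    Module.Finite ↥M ↥K

/-- The transcendence degree of the subfield `K` over the subfield `k`, as the supremum of the
cardinalities of subsets of `K` that are algebraically independent over `k`. -/
noncomputable def trdegOf {E : Type u} [Field E] (k K : Subfield E) : Cardinal.{u} :=
  ⨆ s : {s : Set E // s ⊆ (K : Set E) ∧ AlgebraicIndependent ↥k (fun x : ↥s => (x : E))},
    Cardinal.mk ↥(s.1)

/-- `K` and `M` are free over `k`: every finite subset of `K` that is algebraically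
independent over `k` remains algebraically independent over `M`. -/
def FreeOver {E : Type u} [Field E] (k K M : Subfield E) : Prop :=
  ∀ s : Finset E, (↑s : Set E) ⊆ (K : Set E) →
    AlgebraicIndependent ↥k (fun x : ↥(↑s : Set E) => (x : E)) →
    AlgebraicIndependent ↥M (fun x : ↥(↑s : Set E) => (x : E))

/-- `K` is a `k`-irreducible differential field: it is a finitely generated differential field
extension of `k` of transcendence degree at least 1, and every intermediate differential field
`k ⊂ M ⊆ K` has transcendence degree `0` or `trdeg(K|k)` over `k`. -/
def IsIrred {E : Type u} [Field E] (D : E → E) (k K : Subfield E) : Prop :=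
  (∃ s : Finset E, diffGen D k ↑s = K) ∧
  1 ≤ trdegOf k K ∧
  ∀ M : Subfield E, (∀ x ∈ M, D x ∈ M) → k < M → M ≤ K →
    trdegOf k M = 0 ∨ trdegOf k M = trdegOf k K

/-- `Kf` is a `d`-solvable extension of `k`: there is a tower of differential fields starting
at (a copy of) `k`, each step being a finite algebraic extension or a Picard–Vessiot extension
for an operator of order at most `d`, whose top contains (the copy of) `Kf`. -/
def IsDSolvable {E : Type u} [Field E] (D : E → E) (k Kf : Subfield E) (d : ℕ) : Prop :=
  ∃ (Ω : DFld.{u}) (j : E →+* Ω.carrier),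
    (∀ x, j (D x) = Ω.deriv (j x)) ∧
    ∃ (r : ℕ) (T : Fin (r + 1) → Subfield Ω.carrier),
      T 0 = Subfield.map j k ∧
      Subfield.map j Kf ≤ T (Fin.last r) ∧
      (∀ i, ∀ x ∈ T i, Ω.deriv x ∈ T i) ∧
      ∀ i : Fin r,
        FinExt (T i.castSucc) (T i.succ) ∨
        ∃ n ≤ d, ∃ a : Fin n → Ω.carrier, IsPVWith Ω.deriv (T i.castSucc) (T i.succ) n a

/-- `Kn` is generated over `kb`, as a differential field with the same constants, by one
solution `z` of an inhomogeneous equation `L(y) = b` (with `L` monic over `kb` of order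
`n ≤ d` and `b ∈ kb`) together with an `n`-dimensional space (over the constants) of
solutions of `L(y) = 0`. -/
def IsPVInhomLe {E : Type u} [Field E] (D : E → E) (kb Kn : Subfield E) (d : ℕ) : Prop :=
  kb ≤ Kn ∧ (∀ x ∈ kb, D x ∈ kb) ∧ (∀ x ∈ Kn, D x ∈ Kn) ∧
  (∀ x ∈ Kn, D x = 0 → x ∈ kb) ∧
  ∃ n, n ≤ d ∧ ∃ (a : Fin n → E) (b z : E) (y : Fin n → E),
    (∀ i, a i ∈ kb) ∧ b ∈ kb ∧ z ∈ Kn ∧ (∀ i, y i ∈ Kn) ∧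
    LApply D n a z = b ∧
    (∀ i, LApply D n a (y i) = 0) ∧
    (∀ c : Fin n → E, (∀ i, c i ∈ kb ∧ D (c i) = 0) → (∑ i, c i * y i) = 0 → ∀ i, c i = 0) ∧
    diffGen D kb (insert z (Set.range y)) = Kn

/-- `Kf` is a `d⁺`-solvable extension of `k`. -/
def IsDPlusSolvable {E : Type u} [Field E] (D : E → E) (k Kf : Subfield E) (d : ℕ) : Prop :=
  ∃ (Ω : DFld.{u}) (j : E →+* Ω.carrier),
    (∀ x, j (D x) = Ω.deriv (j x)) ∧
    ∃ (r : ℕ) (T : Fin (r + 1) → Subfield Ω.carrier),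
      T 0 = Subfield.map j k ∧
      Subfield.map j Kf ≤ T (Fin.last r) ∧
      (∀ i, ∀ x ∈ T i, Ω.deriv x ∈ T i) ∧
      ∀ i : Fin r,
        FinExt (T i.castSucc) (T i.succ) ∨ IsPVInhomLe Ω.deriv (T i.castSucc) (T i.succ) d

/-- `TSet D kb K` is the set of elements of `K` annihilated by some monic linear differential
operator with coefficients in `kb`. -/
def TSet {E : Type u} [Field E] (D : E → E) (kb K : Subfield E) : Set E :=
  {x | x ∈ K ∧ ∃ (n : ℕ) (a : Fin n → E), (∀ i, a i ∈ kb) ∧ LApply D n a x = 0}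

namespace SNPV
open TensorProduct

lemma null {C A : Type*} [Field C] [IsAlgClosed C] [CommRing A] [IsDomain A] [Algebra C A]
    [Algebra.FiniteType C A] (c : A) (hc : c ≠ 0) : ∃ s : A →ₐ[C] C, s c ≠ 0 := by
  let B := Localization.Away c
  have : Algebra.FiniteType C B := by
    have : Algebra.FiniteType A B := IsLocalization.finiteType_of_monoid_fg (Submonoid.powers c) B
    exact Algebra.FiniteType.trans (S := A) inferInstance inferInstance
  have : Nontrivial B := (IsLocalization.injective B (M := Submonoid.powers c)
    (powers_le_nonZeroDivisors_of_noZeroDivisors hc)).nontrivial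
  obtain ⟨m, hm⟩ := Ideal.exists_maximal B
  let := Ideal.Quotient.field m
  have : Algebra.FiniteType C (B ⧸ m) := inferInstance
  have := finite_of_finite_type_of_isJacobsonRing C (B ⧸ m)
  have hb := IsAlgClosed.algebraMap_bijective_of_isIntegral (k := C) (K := B ⧸ m)
  let e : C ≃ₐ[C] (B ⧸ m) := AlgEquiv.ofBijective (Algebra.ofId C _) hb
  let f : A →ₐ[C] (B ⧸ m) := (Ideal.Quotient.mkₐ C m).comp (IsScalarTower.toAlgHom C A B)
  refine ⟨e.symm.toAlgHom.comp f, ?_⟩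
  have hu : IsUnit (algebraMap A B c) := IsLocalization.Away.algebraMap_isUnit c
  have := ((hu.map (Ideal.Quotient.mkₐ C m)).map e.symm).ne_zero
  exact this

/-- evaluation along a point. -/
noncomputable def pis {C E A : Type*} [Field C] [CommRing E] [CommRing A] [Algebra C E]
    [Algebra C A] (s : A →ₐ[C] C) : E ⊗[C] A →ₐ[E] E :=
  Algebra.TensorProduct.lift (AlgHom.id E E) ((Algebra.ofId C E).comp s)
    (fun _ _ => Commute.all _ _)

@[simp] lemma pis_tmul {C E A : Type*} [Field C] [CommRing E] [CommRing A] [Algebra C E]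
    [Algebra C A] (s : A →ₐ[C] C) (e : E) (a : A) :
    pis s (e ⊗ₜ[C] a) = e * algebraMap C E (s a) := by
  simp [pis, Algebra.ofId_apply]

lemma pis_ne {C E A : Type*} [Field C] [CommRing E] [CommRing A] [Algebra C E]
    [Algebra C A] (h : E ⊗[C] A) (hh : h ≠ 0) :
    ∃ c : A, c ≠ 0 ∧ ∀ s : A →ₐ[C] C, s c ≠ 0 → pis s h ≠ 0 := by
  classical
  let b := Module.Basis.ofVectorSpace C E
  have h0 : TensorProduct.equivFinsuppOfBasisLeft (N := A) b h ≠ 0 := by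
    simpa using hh
  obtain ⟨i, hi⟩ := Finsupp.ne_iff.mp h0
  refine ⟨TensorProduct.equivFinsuppOfBasisLeft (N := A) b h i, hi, fun s hs h1 => hs ?_⟩
  have key : ∀ z : E ⊗[C] A, b.repr (pis s z) i =
      s (TensorProduct.equivFinsuppOfBasisLeft (N := A) b z i) := by
    intro z
    induction z with
    | zero => simp
    | tmul x y =>
      rw [pis_tmul, TensorProduct.equivFinsuppOfBasisLeft_apply_tmul_apply, map_smul,
        mul_comm, ← Algebra.smul_def, map_smul]
      simp [mul_comm]
    | add x y hx hy => simp [hx, hy]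
  rw [← key, h1]; simp

/-- Base change of the inclusion of a subalgebra. -/
noncomputable def inc {C : Type*} (E : Type*) {Ω : Type*} [Field C] [CommRing E] [CommRing Ω] [Algebra C E]
    [Algebra C Ω] (A : Subalgebra C Ω) : E ⊗[C] A →ₐ[E] E ⊗[C] Ω :=
  Algebra.TensorProduct.map (AlgHom.id E E) A.val

@[simp] lemma inc_tmul {C E Ω : Type*} [Field C] [CommRing E] [CommRing Ω] [Algebra C E]
    [Algebra C Ω] (A : Subalgebra C Ω) (e : E) (a : A) : inc E A (e ⊗ₜ a) = e ⊗ₜ (a : Ω) := rfl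

lemma inc_inj {C E Ω : Type*} [Field C] [CommRing E] [CommRing Ω] [Algebra C E]
    [Algebra C Ω] (A : Subalgebra C Ω) : Function.Injective (inc E A) := by
  have := Module.Flat.lTensor_preserves_injective_linearMap (M := E) A.val.toLinearMap
    Subtype.val_injective
  exact this

lemma exists_lift {C E Ω : Type*} [Field C] [CommRing E] [CommRing Ω] [Algebra C E]
    [Algebra C Ω] (S : Set (E ⊗[C] Ω)) (hS : S.Finite) (T : Set Ω) (hT : T.Finite) :
    ∃ A : Subalgebra C Ω, Algebra.FiniteType C A ∧ T ⊆ A ∧ ∀ h ∈ S, ∃ h' : E ⊗[C] A, inc E A h' = h := by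
  obtain ⟨M', N', -, hN', hs⟩ := TensorProduct.exists_finite_submodule_of_setFinite S hS
  obtain ⟨t, ht⟩ := Module.Finite.iff_fg.mp hN'
  classical
  refine ⟨Algebra.adjoin C (t ∪ T), ?_, ?_, ?_⟩
  · have : (↑t ∪ T : Set Ω).Finite := t.finite_toSet.union hT
    obtain ⟨t', ht'⟩ := this.exists_finset_coe
    rw [← ht']
    exact (Subalgebra.fg_iff_finiteType _).mp ⟨t', rfl⟩
  · exact Set.subset_union_right.trans Algebra.subset_adjoin
  · have hle : ∀ n ∈ N', n ∈ Algebra.adjoin C (t ∪ T : Set Ω) := by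
      intro n hn
      rw [← ht] at hn
      have h1 : Submodule.span C (t : Set Ω) ≤ Subalgebra.toSubmodule (Algebra.adjoin C (t ∪ T : Set Ω)) :=
        Submodule.span_le.mpr (Set.subset_union_left.trans Algebra.subset_adjoin)
      exact h1 hn
    intro h hh
    obtain ⟨z, rfl⟩ := hs hh
    clear hh
    induction z with
    | zero => exact ⟨0, by simp⟩
    | tmul x y => exact ⟨(x : E) ⊗ₜ ⟨y, hle y y.2⟩, by simp [mapIncl]⟩
    | add x y hx hy =>
      obtain ⟨a, ha⟩ := hx
      obtain ⟨b, hb⟩ := hy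
      exact ⟨a + b, by rw [map_add, map_add, ha, hb]⟩

/-- tensor products of domains over an algebraically closed field. -/
lemma tensor_domain {C A B : Type*} [Field C] [IsAlgClosed C] [CommRing A] [IsDomain A]
    [CommRing B] [IsDomain B] [Algebra C A] [Algebra C B] : IsDomain (A ⊗[C] B) := by
  have : Nontrivial (A ⊗[C] B) := by
    have : Function.Injective (Algebra.TensorProduct.includeLeft : A →ₐ[C] A ⊗[C] B) :=
      Algebra.TensorProduct.includeLeft_injective (FaithfulSMul.algebraMap_injective C B)
    exact this.nontrivial
  have : NoZeroDivisors (A ⊗[C] B) := by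
    refine ⟨fun {x y} hxy => ?_⟩
    by_contra! hne
    obtain ⟨B0, hB0, -, hl⟩ := exists_lift {x, y} (Set.toFinite _) ∅ Set.finite_empty
    obtain ⟨x', rfl⟩ := hl x (by simp)
    obtain ⟨y', rfl⟩ := hl y (by simp)
    have hx : x' ≠ 0 := fun h => hne.1 (by simp [h])
    have hy : y' ≠ 0 := fun h => hne.2 (by simp [h])
    obtain ⟨a, ha, hsa⟩ := pis_ne x' hx
    obtain ⟨b, hb, hsb⟩ := pis_ne y' hy
    obtain ⟨s, hs⟩ := null (C := C) (a * b) (mul_ne_zero ha hb)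
    rw [map_mul] at hs
    have h1 := hsa s (left_ne_zero_of_mul hs)
    have h2 := hsb s (right_ne_zero_of_mul hs)
    have h3 : x' * y' = 0 := inc_inj B0 (by rw [map_mul, hxy, map_zero])
    exact mul_ne_zero h1 h2 (by rw [← map_mul, h3, map_zero])
  exact NoZeroDivisors.to_isDomain _

end SNPV

namespace SNPV
open TensorProduct

section units
variable {C E A O : Type*} [Field C] [Field E] [CommRing A] [Algebra C E] [Algebra C A]
  [CommRing O] [IsDomain O] [ValuationRing O] [Algebra C O] [Algebra O E] [IsFractionRing O E]
  [IsScalarTower C O E]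

variable (C E A O) in
noncomputable def mO : O ⊗[C] A →ₐ[C] E ⊗[C] A :=
  Algebra.TensorProduct.map (IsScalarTower.toAlgHom C O E) (AlgHom.id C A)

variable (C A O) in
noncomputable def mK : O ⊗[C] A →ₐ[C] (IsLocalRing.ResidueField O) ⊗[C] A :=
  Algebra.TensorProduct.map (IsScalarTower.toAlgHom C O (IsLocalRing.ResidueField O)) (AlgHom.id C A)

lemma mO_inj : Function.Injective (mO C E A O) := by
  have := Module.Flat.rTensor_preserves_injective_linearMap (M := A) (IsScalarTower.toAlgHom C O E).toLinearMap
    (IsFractionRing.injective O E)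
  exact this

lemma mO_smul (o : O) (z : O ⊗[C] A) : mO C E A O (o • z) = algebraMap O E o • mO C E A O z := by
  induction z with
  | zero => simp
  | tmul x y => simp [mO, smul_tmul', Algebra.smul_def]
  | add x y hx hy => simp [hx, hy]

lemma mK_smul (o : O) (z : O ⊗[C] A) : mK C A O (o • z) = IsLocalRing.residue O o • mK C A O z := by
  induction z with
  | zero => simp
  | tmul x y => simp [mK, smul_tmul', IsLocalRing.ResidueField.algebraMap_eq]
  | add x y hx hy => simp [hx, hy]

lemma pis_mO (s : A →ₐ[C] C) (z : O ⊗[C] A) : algebraMap O E (pis s z) = pis s (mO C E A O z) := by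
  induction z with
  | zero => simp
  | tmul x y => simp [mO, ← IsScalarTower.algebraMap_apply]
  | add x y hx hy => simp [hx, hy]

lemma prim {J : Type*} [DecidableEq J] (b : Module.Basis J C A) (z : E ⊗[C] A) (hz : z ≠ 0) :
    ∃ (a : E) (p : O ⊗[C] A), a ≠ 0 ∧ mO C E A O p = a • z ∧ mK C A O p ≠ 0 ∧
      ∀ j, ∃ o : O, algebraMap O E o = a * TensorProduct.equivFinsuppOfBasisRight (M := E) b z j := by
  set f := TensorProduct.equivFinsuppOfBasisRight (M := E) b z with hf
  have hf0 : f ≠ 0 := by simpa [hf] using hz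
  obtain ⟨j0, hj0, hmax⟩ := Finset.exists_max_image f.support
    (fun j => ValuationRing.valuation O E (f j)) (Finsupp.support_nonempty_iff.mpr hf0)
  have hj0' : f j0 ≠ 0 := Finsupp.mem_support_iff.mp hj0
  have hex : ∀ j, ∃ o : O, algebraMap O E o = (f j0)⁻¹ * f j := by
    intro j
    by_cases hj : f j = 0
    · exact ⟨0, by simp [hj]⟩
    · have h1 := hmax j (Finsupp.mem_support_iff.mpr hj)
      rw [← ValuationRing.mem_integer_iff, Valuation.mem_integer_iff, map_mul, map_inv₀, mul_comm]
      have h2 : ValuationRing.valuation O E (f j0) ≠ 0 := by simpa using hj0'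
      rw [← div_eq_mul_inv]
      exact div_le_one_of_le₀ h1 zero_le
  choose o ho using hex
  have hz' : z = ∑ j ∈ f.support, f j ⊗ₜ[C] b j := by
    have := (TensorProduct.equivFinsuppOfBasisRight (M := E) b).symm_apply_apply z
    rw [← hf, TensorProduct.equivFinsuppOfBasisRight_symm_apply] at this
    exact this.symm
  refine ⟨(f j0)⁻¹, ∑ j ∈ f.support, o j ⊗ₜ b j, inv_ne_zero hj0', ?_, ?_, fun j => ⟨o j, ho j⟩⟩
  · conv_rhs => rw [hz']
    rw [map_sum, Finset.smul_sum]
    exact Finset.sum_congr rfl fun j _ => by simp [mO, ho, smul_tmul']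
  · intro h0
    have h1 := congrArg (fun w => TensorProduct.equivFinsuppOfBasisRight b w j0) h0
    have h2 : o j0 = 1 := by
      apply IsFractionRing.injective O E
      rw [ho, inv_mul_cancel₀ hj0', map_one]
    simp [mK, Finsupp.finsetSum_apply, Finsupp.single_apply] at h1
    exact h1 hj0' (h2 ▸ isUnit_one)

lemma unit_val [IsAlgClosed C] [IsDomain A] {J : Type*} [DecidableEq J]
    (b : Module.Basis J C A) (ε ε' : E ⊗[C] A)
    (h : ε * ε' = 1) (s : A →ₐ[C] C) (j : J) :
    ∃ o : O, algebraMap O E o = TensorProduct.equivFinsuppOfBasisRight (M := E) b ε j / pis s ε := by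
  have : IsDomain (E ⊗[C] A) := tensor_domain
  have : IsDomain (IsLocalRing.ResidueField O ⊗[C] A) := tensor_domain
  have hε : ε ≠ 0 := left_ne_zero_of_mul_eq_one h
  have hε' : ε' ≠ 0 := right_ne_zero_of_mul_eq_one h
  obtain ⟨a, p, ha, hp, hpK, hc⟩ := prim (O := O) b ε hε
  obtain ⟨a', p', ha', hp', hpK', -⟩ := prim (O := O) b ε' hε'
  have hpp : mO C E A O (p * p') = (a * a') • 1 := by
    rw [map_mul, hp, hp', smul_mul_smul_comm, h]
  have hne : mK C A O (p * p') ≠ 0 := by rw [map_mul]; exact mul_ne_zero hpK hpK'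
  have hu : ∃ o : O, IsUnit o ∧ algebraMap O E o = a * a' := by
    rcases ValuationRing.isInteger_or_isInteger O (a * a') with ⟨o, ho⟩ | ⟨o, ho⟩
    · refine ⟨o, ?_, ho⟩
      have h1 : p * p' = o • 1 := mO_inj (E := E) (by rw [hpp, mO_smul, ho, map_one])
      rw [h1, mK_smul] at hne
      by_contra hnu
      rw [← mem_nonunits_iff, ← IsLocalRing.mem_maximalIdeal, ← IsLocalRing.residue_eq_zero_iff] at hnu
      exact hne (by rw [hnu, zero_smul])
    · have h1 : o • (p * p') = 1 := mO_inj (E := E) (by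
        rw [mO_smul, hpp, ho, map_one, smul_smul, inv_mul_cancel₀ (mul_ne_zero ha ha'), one_smul])
      have hou : IsUnit o := by
        by_contra hnu
        rw [← mem_nonunits_iff, ← IsLocalRing.mem_maximalIdeal, ← IsLocalRing.residue_eq_zero_iff] at hnu
        have h2 := congrArg (mK C A O) h1
        rw [mK_smul, hnu, zero_smul, map_one] at h2
        exact zero_ne_one h2
      obtain ⟨u, rfl⟩ := hou
      refine ⟨(u⁻¹ : Oˣ), Units.isUnit _, ?_⟩
      have : algebraMap O E (u⁻¹ : Oˣ) * algebraMap O E u = 1 := by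
        rw [← map_mul]; simp
      rw [ho] at this
      field_simp at this
      exact this
  obtain ⟨o, hou, ho⟩ := hu
  have e1 : algebraMap O E (pis s p) = a * pis s ε := by rw [pis_mO, hp, map_smul, smul_eq_mul]
  have e2 : algebraMap O E (pis s p') = a' * pis s ε' := by rw [pis_mO, hp', map_smul, smul_eq_mul]
  have e3 : pis s ε * pis s ε' = 1 := by rw [← map_mul, h, map_one]
  have e4 : pis s p * pis s p' = o := by
    apply IsFractionRing.injective O E
    rw [map_mul, e1, e2, ho]
    linear_combination a * a' * e3
  have hup : IsUnit (pis s p) := isUnit_of_mul_isUnit_left (e4 ▸ hou)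
  obtain ⟨u, hu⟩ := hup
  obtain ⟨oj, hoj⟩ := hc j
  refine ⟨oj * (u⁻¹ : Oˣ), ?_⟩
  have e5 : pis s ε ≠ 0 := left_ne_zero_of_mul_eq_one e3
  have : algebraMap O E (u⁻¹ : Oˣ) * algebraMap O E u = 1 := by
    rw [← map_mul]; simp
  rw [hu, e1] at this
  rw [map_mul, hoj, eq_div_iff e5]
  linear_combination (TensorProduct.equivFinsuppOfBasisRight (M := E) b ε j) * this

end units

lemma unit_pure {C E A : Type*} [Field C] [IsAlgClosed C] [Field E] [CommRing A] [IsDomain A]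
    [Algebra C E] [Algebra C A] [Algebra.FiniteType C A] (ε ε' : E ⊗[C] A) (h : ε * ε' = 1) :
    ∃ (a : E) (b : A), ε = a ⊗ₜ b := by
  classical
  obtain ⟨s, -⟩ := null (C := C) (1 : A) one_ne_zero
  let b := Module.Basis.ofVectorSpace C A
  have key : ∀ j, ∃ c : C, algebraMap C E c =
      TensorProduct.equivFinsuppOfBasisRight (M := E) b ε j / pis s ε := by
    intro j
    set x := TensorProduct.equivFinsuppOfBasisRight (M := E) b ε j / pis s ε
    have hx : x ∈ (integralClosure (Subring.closure (Set.range (algebraMap C E))) E).toSubring := by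
      rw [← iInf_valuationSubring_superset, Subring.mem_iInf]
      rintro ⟨V, hV⟩
      let : Algebra C V := ((algebraMap C E).codRestrict V.toSubring (fun c => hV ⟨c, rfl⟩)).toAlgebra
      have : IsScalarTower C V E := IsScalarTower.of_algebraMap_eq fun c => rfl
      obtain ⟨o, ho⟩ := unit_val (O := V) b ε ε' h s j
      change x ∈ V
      have : x = o := ho.symm
      rw [this]; exact o.2
    have hx2 : IsIntegral C x := by
      have h1 : IsIntegral (Subring.closure (Set.range (algebraMap C E))) x := hx
      have h2 : Subring.closure (Set.range (algebraMap C E)) = (algebraMap C E).range := by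
        rw [← RingHom.coe_range]; exact Subring.closure_eq _
      rw [h2] at h1
      obtain ⟨q, hq, hqx⟩ := h1
      have hl := (Polynomial.lifts_and_natDegree_eq_and_monic (f := (algebraMap C E).rangeRestrict) (p := q)
        (Polynomial.mem_lifts q |>.mpr (Polynomial.map_surjective _ (RingHom.rangeRestrict_surjective _) q)) hq)
      obtain ⟨r, hr, -, hrm⟩ := hl
      refine ⟨r, hrm, ?_⟩
      rw [← hr, Polynomial.eval₂_map] at hqx
      exact hqx
    obtain ⟨c, hc⟩ := (IsAlgClosed.algebraMap_bijective_of_isIntegral (k := C)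
      (K := integralClosure C E)).2 ⟨x, hx2⟩
    exact ⟨c, congrArg Subtype.val hc⟩
  choose c hc using key
  have e3 : pis s ε * pis s ε' = 1 := by rw [← map_mul, h, map_one]
  have e5 : pis s ε ≠ 0 := left_ne_zero_of_mul_eq_one e3
  set f := TensorProduct.equivFinsuppOfBasisRight (M := E) b ε with hf
  refine ⟨pis s ε, ∑ j ∈ f.support, c j • b j, ?_⟩
  have hz' : ε = ∑ j ∈ f.support, f j ⊗ₜ[C] b j := by
    have := (TensorProduct.equivFinsuppOfBasisRight (M := E) b).symm_apply_apply ε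
    rw [← hf, TensorProduct.equivFinsuppOfBasisRight_symm_apply] at this
    exact this.symm
  conv_lhs => rw [hz']
  rw [tmul_sum]
  refine Finset.sum_congr rfl fun j _ => ?_
  rw [← smul_tmul, Algebra.smul_def, hc j, div_mul_cancel₀ _ e5]

lemma unit_pure' {C E Ω : Type*} [Field C] [IsAlgClosed C] [Field E] [CommRing Ω] [IsDomain Ω]
    [Algebra C E] [Algebra C Ω] (ε ε' : E ⊗[C] Ω) (h : ε * ε' = 1) :
    ∃ (a : E) (b : Ω), ε = a ⊗ₜ b := by
  obtain ⟨A, hA, -, hl⟩ := exists_lift {ε, ε'} (Set.toFinite _) ∅ Set.finite_empty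
  obtain ⟨x, rfl⟩ := hl ε (by simp)
  obtain ⟨y, rfl⟩ := hl ε' (by simp)
  obtain ⟨a, b, rfl⟩ := unit_pure x y (inc_inj A (by rw [map_mul, h, map_one]))
  exact ⟨a, b, rfl⟩

/-- compositum -/
lemma compositum.{u1, u2, u3} {A : Type u1} {F1 : Type u2} {F2 : Type u3} [CommRing A] [IsDomain A] [Field F1] [Field F2]
    (f1 : A →+* F1) (f2 : A →+* F2) (h1 : Function.Injective f1) (h2 : Function.Injective f2) :
    ∃ (Ω : Type (max u2 u3)) (_ : Field Ω) (g1 : F1 →+* Ω) (g2 : F2 →+* Ω),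
      ∀ a, g1 (f1 a) = g2 (f2 a) := by
  let Q := FractionRing A
  let i1 : Q →+* F1 := IsFractionRing.lift h1
  let i2 : Q →+* F2 := IsFractionRing.lift h2
  let := i1.toAlgebra
  let := i2.toAlgebra
  obtain ⟨m, hm⟩ := Ideal.exists_maximal (F1 ⊗[Q] F2)
  refine ⟨(F1 ⊗[Q] F2) ⧸ m, Ideal.Quotient.field m,
    (Ideal.Quotient.mk m).comp Algebra.TensorProduct.includeLeftRingHom,
    (Ideal.Quotient.mk m).comp (Algebra.TensorProduct.includeRight : F2 →ₐ[Q] F1 ⊗[Q] F2).toRingHom, ?_⟩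
  intro a
  have e1 : f1 a = algebraMap Q F1 (algebraMap A Q a) := (IsFractionRing.lift_algebraMap h1 a).symm
  have e2 : f2 a = algebraMap Q F2 (algebraMap A Q a) := (IsFractionRing.lift_algebraMap h2 a).symm
  rw [e1, e2]
  simp only [RingHom.comp_apply, Algebra.TensorProduct.includeLeftRingHom_apply]
  congr 1
  exact Algebra.TensorProduct.tmul_one_eq_one_tmul _

/-- Places. -/
lemma place {R M E : Type*} [CommRing R] [IsDomain R] [Field M] [Field E] (i : R →+* M)
    (hi : Function.Injective i) (π : R →+* E) :
    ∃ (𝓡 : Subring M) (θ : 𝓡 →+* E), (∀ m a b, π b ≠ 0 → i b * m = i a → m ∈ 𝓡) ∧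
      (∀ m : 𝓡, ∃ a b, π b ≠ 0 ∧ i b * m = i a) ∧
      (∀ (m : 𝓡) a b, i b * m = i a → π b * θ m = π a) ∧
      (∀ m : 𝓡, θ m ≠ 0 → (m : M)⁻¹ ∈ 𝓡) := by
  let P := RingHom.ker π
  have hP : P.IsPrime := RingHom.ker_isPrime π
  let L := Localization.AtPrime P
  have hiu : ∀ y : P.primeCompl, IsUnit (i y) := by
    intro y
    rw [isUnit_iff_ne_zero]
    intro h
    have : (y : R) = 0 := hi (by rw [h, map_zero])
    exact y.2 (by rw [this]; exact P.zero_mem)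
  have hπu : ∀ y : P.primeCompl, IsUnit (π y) := fun y => isUnit_iff_ne_zero.mpr y.2
  let j : L →+* M := IsLocalization.lift hiu
  let q : L →+* E := IsLocalization.lift hπu
  have hj : Function.Injective j := by
    rw [injective_iff_map_eq_zero]
    intro x hx
    obtain ⟨⟨a, b⟩, hab⟩ := IsLocalization.surj P.primeCompl x
    have h1 := congrArg j hab
    rw [map_mul, hx, zero_mul, IsLocalization.lift_eq] at h1
    have ha : a = 0 := hi (by rw [← h1, map_zero])
    rw [ha, map_zero] at hab
    exact (IsLocalization.map_units L b).mul_left_eq_zero.mp hab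
  let e : L ≃+* j.range := RingEquiv.ofBijective j.rangeRestrict
    ⟨fun a b h => hj (congrArg Subtype.val h), j.rangeRestrict_surjective⟩
  have he : ∀ m : j.range, j (e.symm m) = m := fun m => congrArg Subtype.val (e.apply_symm_apply m)
  have hmem : ∀ m a b, π b ≠ 0 → i b * m = i a → m ∈ j.range := by
    intro m a b hb hm
    let b' : P.primeCompl := ⟨b, hb⟩
    have hib := hiu b'
    refine ⟨IsLocalization.mk' L a b', ?_⟩
    apply hib.mul_left_cancel
    rw [hm]
    have h1 : i b = j (algebraMap R L b) := by rw [IsLocalization.lift_eq]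
    change i b * _ = _
    rw [h1, ← map_mul, IsLocalization.mk'_spec' L a b', IsLocalization.lift_eq]
  have hth : ∀ (m : j.range) a b, i b * m = i a → π b * q (e.symm m) = π a := by
    intro m a b hm
    have h1 : algebraMap R L b * e.symm m = algebraMap R L a := hj (by
      rw [map_mul, he, IsLocalization.lift_eq, IsLocalization.lift_eq, hm])
    have h2 := congrArg q h1
    rwa [map_mul, IsLocalization.lift_eq, IsLocalization.lift_eq] at h2
  have hsur : ∀ m : j.range, ∃ a b, π b ≠ 0 ∧ i b * m = i a := by
    intro m
    obtain ⟨⟨a, b⟩, hab⟩ := IsLocalization.surj P.primeCompl (e.symm m)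
    refine ⟨a, b, b.2, ?_⟩
    have h1 := congrArg j hab
    rw [map_mul, he, IsLocalization.lift_eq, IsLocalization.lift_eq] at h1
    rw [mul_comm]; exact h1
  refine ⟨j.range, q.comp e.symm.toRingHom, hmem, hsur, hth, ?_⟩
  intro m hm
  obtain ⟨a, b, hb, hab⟩ := hsur m
  have h1 := hth m a b hab
  have hm' : q (e.symm m) ≠ 0 := hm
  have ha : π a ≠ 0 := by rw [← h1]; exact mul_ne_zero hb hm'
  have hm0 : (m : M) ≠ 0 := by
    intro h
    have : m = 0 := Subtype.ext h
    exact hm (by rw [this, map_zero])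
  refine hmem _ b a ha ?_
  rw [← hab, mul_assoc, mul_inv_cancel₀ hm0, mul_one]

end SNPV

namespace SNPV
open TensorProduct

lemma flat_dvd0 {R S : Type*} [CommRing R] [CommRing S] [Algebra R S] [Module.Flat R S] (α β : R)
    (h : ∀ z, β ∣ α * z → β ∣ z) (z : S) (hz : algebraMap R S β ∣ algebraMap R S α * z) :
    algebraMap R S β ∣ z := by
  obtain ⟨w, hw⟩ := hz
  let F : Fin 2 → R := ![α, -β]
  let X : Fin 2 → S := ![z, w]
  have h0 : ∑ i, F i • X i = 0 := by
    rw [Fin.sum_univ_two, Algebra.smul_def, Algebra.smul_def]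
    change algebraMap R S α * z + algebraMap R S (-β) * w = 0
    rw [hw, map_neg]; ring
  obtain ⟨n, a, y, h1, h2⟩ := Module.Flat.isTrivialRelation_of_sum_smul_eq_zero (R := R) (M := S) (f := F) (x := X) h0
  have hz : z = ∑ j, a 0 j • y j := h1 0
  rw [hz]
  refine Finset.dvd_sum fun j _ => ?_
  have h3 := h2 j
  rw [Fin.sum_univ_two] at h3
  have h4 : α * a 0 j + (-β) * a 1 j = 0 := h3
  obtain ⟨c, hc⟩ := h (a 0 j) ⟨a 1 j, by linear_combination h4⟩
  rw [Algebra.smul_def, hc, map_mul, mul_assoc]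
  exact Dvd.intro _ rfl

lemma flat_dvd {R S : Type*} [CommRing R] [CommRing S] (f : R →+* S) (hf : f.Flat) (α β : R)
    (h : ∀ z, β ∣ α * z → β ∣ z) (z : S) (hz : f β ∣ f α * z) : f β ∣ z := by
  let := f.toAlgebra
  have hfl : Module.Flat R S := hf
  exact flat_dvd0 α β h z hz

section
variable {C E Ω κ : Type*} [Field C] [Field E] [Field Ω] [Algebra C E] [Algebra C Ω]

/-- evaluation of a polynomial at a point of `Ω`, with coefficients twisted by `g`. -/
noncomputable def ev (g : E →ₐ[C] E) (w : κ → Ω) : MvPolynomial κ E →+* E ⊗[C] Ω :=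
  MvPolynomial.eval₂Hom (Algebra.TensorProduct.includeLeftRingHom.comp g.toRingHom)
    (fun i => 1 ⊗ₜ w i)

lemma ev_monomial (g : E →ₐ[C] E) (w : κ → Ω) (m : κ →₀ ℕ) (e : E) :
    ev g w (MvPolynomial.monomial m e) = g e ⊗ₜ MvPolynomial.aeval w (MvPolynomial.monomial m (1 : C)) := by
  have : ∀ i (n : ℕ), (1 ⊗ₜ[C] w i : E ⊗[C] Ω) ^ n = 1 ⊗ₜ (w i ^ n) := by
    intro i n; rw [Algebra.TensorProduct.tmul_pow, one_pow]
  simp only [ev, MvPolynomial.coe_eval₂Hom, MvPolynomial.eval₂_monomial, MvPolynomial.aeval_monomial,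
    map_one, one_mul, this]
  have h2 : (m.prod fun i n => (1 ⊗ₜ[C] (w i ^ n) : E ⊗[C] Ω)) = 1 ⊗ₜ (m.prod fun i n => w i ^ n) := by
    have := (map_finsuppProd (Algebra.TensorProduct.includeRight : Ω →ₐ[C] E ⊗[C] Ω) m (fun i n => w i ^ n)).symm
    exact this
  rw [h2]
  simp

lemma ev_eq_sum (g : E →ₐ[C] E) (w : κ → Ω) (p : MvPolynomial κ E) :
    ev g w p = ∑ m ∈ p.support, g (p.coeff m) ⊗ₜ MvPolynomial.aeval w (MvPolynomial.monomial m (1 : C)) := by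
  conv_lhs => rw [p.as_sum]
  rw [map_sum]
  exact Finset.sum_congr rfl fun m _ => ev_monomial g w m _

lemma ev_flat (g : E →ₐ[C] E) (w : κ → Ω) (hw : AlgebraicIndependent C w) : (ev g w).Flat := by
  have h1 : ev g w = (Algebra.TensorProduct.map g (MvPolynomial.aeval w : MvPolynomial κ C →ₐ[C] Ω)).toRingHom.comp
      (MvPolynomial.algebraTensorAlgEquiv C E).symm.toRingEquiv.toRingHom := by
    apply MvPolynomial.ringHom_ext
    · intro e
      have : (MvPolynomial.algebraTensorAlgEquiv (σ := κ) C E).symm (MvPolynomial.C e) = e ⊗ₜ 1 := by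
        rw [AlgEquiv.symm_apply_eq]; simp [MvPolynomial.algebraTensorAlgEquiv_tmul, MvPolynomial.smul_eq_C_mul]
      simp [ev, this]
    · intro i
      have := MvPolynomial.algebraTensorAlgEquiv_symm_X (R := C) (σ := κ) (A := E) i
      simp [ev, this]
  rw [h1]
  apply RingHom.Flat.comp
  · exact RingHom.Flat.of_bijective (RingEquiv.bijective _)
  · apply RingHom.Flat.tensorProductMap
    · exact RingHom.Flat.of_isField (Field.toIsField E) _
    · have h2 : ((MvPolynomial.aeval w : MvPolynomial κ C →ₐ[C] Ω) : MvPolynomial κ C →+* Ω) =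
          (IsFractionRing.lift (A := MvPolynomial κ C) (K := FractionRing (MvPolynomial κ C))
            (g := ((MvPolynomial.aeval w : MvPolynomial κ C →ₐ[C] Ω) : MvPolynomial κ C →+* Ω)) hw).comp
          (algebraMap _ _) := by
        refine RingHom.ext fun x => ?_
        exact (IsFractionRing.lift_algebraMap (K := FractionRing (MvPolynomial κ C)) hw x).symm
      change ((MvPolynomial.aeval w : MvPolynomial κ C →ₐ[C] Ω) : MvPolynomial κ C →+* Ω).Flat
      rw [h2]
      apply RingHom.Flat.comp
      · rw [RingHom.flat_algebraMap_iff]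
        exact IsLocalization.flat _ (nonZeroDivisors (MvPolynomial κ C))
      · exact RingHom.Flat.of_isField (Field.toIsField _) _

lemma exists_functional {V J : Type*} [AddCommGroup V] [Module C V] (v : J → V)
    (hv : LinearIndependent C v) (m : J) : ∃ l : V →ₗ[C] C, l (v m) = 1 ∧ ∀ m', m' ≠ m → l (v m') = 0 := by
  obtain ⟨l, hl⟩ := LinearMap.exists_extend ((Finsupp.lapply m : (J →₀ C) →ₗ[C] C) ∘ₗ hv.repr)
  have : ∀ m', l (v m') = Finsupp.single m' 1 m := by
    intro m'
    have h1 := LinearMap.congr_fun hl ⟨v m', Submodule.subset_span ⟨m', rfl⟩⟩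
    rw [LinearMap.comp_apply, LinearMap.comp_apply] at h1
    have h2 := hv.repr_eq_single m' ⟨v m', Submodule.subset_span ⟨m', rfl⟩⟩ rfl
    rw [h2] at h1
    exact h1
  refine ⟨l, by simp [this], fun m' hm' => by simp [this, hm']⟩

/-- span of coefficients -/
noncomputable def cspan (α β : MvPolynomial κ E) : Submodule C E :=
  Submodule.span C (Set.range α.coeff ∪ Set.range β.coeff)

lemma coef_aux (g : E →ₐ[C] E) (α β : MvPolynomial κ E) (s : E) (t : Ω)
    (w1 w2 : κ → Ω) (hw2 : AlgebraicIndependent C w2) (p : MvPolynomial κ E)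
    (hp : ∀ m, p.coeff m ∈ cspan (C := C) α β)
    (h : ev g w2 p = (s ⊗ₜ t) * ev (AlgHom.id C E) w1 p) (m : κ →₀ ℕ) :
    ∃ y ∈ cspan (C := C) α β, g (p.coeff m) = s * y := by
  classical
  have hli : LinearIndependent C (fun m : κ →₀ ℕ => MvPolynomial.aeval w2 (MvPolynomial.monomial m (1 : C))) := by
    have h1 := (MvPolynomial.basisMonomials κ C).linearIndependent
    have h2 := h1.map' (MvPolynomial.aeval w2 : MvPolynomial κ C →ₐ[C] Ω).toLinearMap
      (LinearMap.ker_eq_bot.mpr hw2)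
    simpa [Function.comp_def] using h2
  obtain ⟨l, hl1, hl0⟩ := exists_functional _ hli m
  let Λ : E ⊗[C] Ω →ₗ[C] E := (TensorProduct.rid C E).toLinearMap ∘ₗ LinearMap.lTensor E l
  have hΛ : ∀ e o, Λ (e ⊗ₜ o) = l o • e := by intro e o; simp [Λ]
  have h2 := congrArg Λ h
  rw [ev_eq_sum, ev_eq_sum, Finset.mul_sum, map_sum, map_sum] at h2
  simp only [Algebra.TensorProduct.tmul_mul_tmul, hΛ, AlgHom.id_apply] at h2
  refine ⟨∑ x ∈ p.support, l (t * MvPolynomial.aeval w1 (MvPolynomial.monomial x (1 : C))) • p.coeff x,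
    Submodule.sum_mem _ fun x _ => Submodule.smul_mem _ _ (hp x), ?_⟩
  rw [Finset.mul_sum]
  simp only [mul_smul_comm]
  rw [← h2]
  by_cases hm : m ∈ p.support
  · rw [Finset.sum_eq_single m, hl1, one_smul]
    · intro b _ hb
      rw [hl0 b hb, zero_smul]
    · exact fun h => absurd hm h
  · rw [MvPolynomial.notMem_support_iff.mp hm, map_zero]
    refine (Finset.sum_eq_zero fun b hb => ?_).symm
    rw [hl0 b (fun h => hm (h ▸ hb)), zero_smul]

lemma ev_ne [IsAlgClosed C] (g : E →ₐ[C] E) (w : κ → Ω) (hw : AlgebraicIndependent C w)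
    (β : MvPolynomial κ E) (hβ : β ≠ 0) : ev g w β ≠ 0 := by
  intro h0
  have : IsDomain (E ⊗[C] Ω) := tensor_domain
  have := flat_dvd _ (ev_flat g w hw) β 0 (by
    intro z hz
    rw [zero_dvd_iff] at hz ⊢
    exact (mul_eq_zero.mp hz).resolve_left hβ) 1 (by simp [h0])
  simp at this

lemma coef [IsAlgClosed C] (g : E →ₐ[C] E) (α β : MvPolynomial κ E) (hcop : ∀ z, β ∣ α * z → β ∣ z)
    (hβ : β ≠ 0) (w1 w2 : κ → Ω) (hw1 : AlgebraicIndependent C w1) (hw2 : AlgebraicIndependent C w2)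
    (h : ev (AlgHom.id C E) w1 α * ev g w2 β = ev g w2 α * ev (AlgHom.id C E) w1 β) :
    ∃ s : E, s ≠ 0 ∧ ∀ y ∈ cspan (C := C) α β, ∃ y' ∈ cspan (C := C) α β, g y = s * y' := by
  have : IsDomain (E ⊗[C] Ω) := tensor_domain
  have hB1 := ev_ne (AlgHom.id C E) w1 hw1 β hβ
  obtain ⟨ε, hε⟩ := flat_dvd _ (ev_flat (AlgHom.id C E) w1 hw1) α β hcop (ev g w2 β)
    ⟨ev g w2 α, by rw [h, mul_comm]⟩
  obtain ⟨ε', hε'⟩ := flat_dvd _ (ev_flat g w2 hw2) α β hcop (ev (AlgHom.id C E) w1 β)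
    ⟨ev (AlgHom.id C E) w1 α, by rw [← h, mul_comm]⟩
  have h1 : ε * ε' = 1 := by
    apply mul_left_cancel₀ hB1
    rw [← mul_assoc, ← hε, ← hε', mul_one]
  obtain ⟨s, t, rfl⟩ := unit_pure' ε ε' h1
  have hs : s ≠ 0 := by
    rintro rfl
    rw [zero_tmul, zero_mul] at h1
    exact zero_ne_one h1
  have hB : ev g w2 β = (s ⊗ₜ t) * ev (AlgHom.id C E) w1 β := by rw [hε, mul_comm]
  have hA : ev g w2 α = (s ⊗ₜ t) * ev (AlgHom.id C E) w1 α := by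
    apply mul_right_cancel₀ hB1
    rw [← h, hB]; ring
  refine ⟨s, hs, fun y hy => ?_⟩
  have hα : ∀ m, α.coeff m ∈ cspan (C := C) α β := fun m => Submodule.subset_span (Or.inl ⟨m, rfl⟩)
  have hβ' : ∀ m, β.coeff m ∈ cspan (C := C) α β := fun m => Submodule.subset_span (Or.inr ⟨m, rfl⟩)
  refine Submodule.span_induction (p := fun y _ => ∃ y' ∈ cspan (C := C) α β, g y = s * y') ?_ ?_ ?_ ?_ hy
  · rintro _ (⟨m, rfl⟩ | ⟨m, rfl⟩)
    · exact coef_aux g α β s t w1 w2 hw2 α hα hA m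
    · exact coef_aux g α β s t w1 w2 hw2 β hβ' hB m
  · exact ⟨0, Submodule.zero_mem _, by simp⟩
  · rintro a b - - ⟨a', ha', ha⟩ ⟨b', hb', hb⟩
    exact ⟨a' + b', Submodule.add_mem _ ha' hb', by rw [map_add, ha, hb, mul_add]⟩
  · rintro c a - ⟨a', ha', ha⟩
    exact ⟨c • a', Submodule.smul_mem _ _ ha', by rw [map_smul, ha, mul_smul_comm]⟩

end

instance cspan_fin {C E κ : Type*} [Field C] [Field E] [Algebra C E] (α β : MvPolynomial κ E) :
    Module.Finite C (cspan (C := C) α β) := by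
  classical
  rw [Module.Finite.iff_fg]
  have : (Set.range α.coeff ∪ Set.range β.coeff).Finite := by
    have h : ∀ p : MvPolynomial κ E, (Set.range p.coeff).Finite := by
      intro p
      refine (((p.support.image p.coeff).finite_toSet).union (Set.finite_singleton 0)).subset ?_
      rintro _ ⟨m, rfl⟩
      by_cases hm : m ∈ p.support
      · left; simpa using ⟨m, MvPolynomial.mem_support_iff.mp hm, rfl⟩
      · right; simpa using hm
    exact (h α).union (h β)
  exact Submodule.fg_span this

end SNPV

namespace SNPV
open TensorProduct

section spec
variable {C E κ : Type*} [Field C] [IsAlgClosed C] [Field E] [Algebra C E]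

lemma spec (Z : Set (FractionRing (MvPolynomial κ E))) (hZ : Z.Finite) (hZ0 : ∀ z ∈ Z, z ≠ 0)
    (T : Set E) (hT : T.Finite) :
    ∃ (𝓡 : Subring (FractionRing (MvPolynomial κ E))) (θ : 𝓡 →+* FractionRing (MvPolynomial κ C)),
      (∀ z ∈ Z, ∃ h : z ∈ 𝓡, θ ⟨z, h⟩ ≠ 0) ∧
      (∀ c : C, ∃ h : algebraMap (MvPolynomial κ E) _ (MvPolynomial.C (algebraMap C E c)) ∈ 𝓡,
        θ ⟨_, h⟩ = algebraMap (MvPolynomial κ C) _ (MvPolynomial.C c)) ∧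
      (∀ i, ∃ h : algebraMap (MvPolynomial κ E) _ (MvPolynomial.X i) ∈ 𝓡,
        θ ⟨_, h⟩ = algebraMap (MvPolynomial κ C) _ (MvPolynomial.X i)) ∧
      (∀ t ∈ T, ∃ (c : C) (h : algebraMap (MvPolynomial κ E) _ (MvPolynomial.C t) ∈ 𝓡),
        θ ⟨_, h⟩ = algebraMap (MvPolynomial κ C) _ (MvPolynomial.C c)) := by
  classical
  have key : ∀ z : FractionRing (MvPolynomial κ E), ∃ n d : MvPolynomial κ E, d ≠ 0 ∧
      algebraMap _ _ d * z = algebraMap _ _ n := by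
    intro z
    obtain ⟨n, d, hd, rfl⟩ := IsFractionRing.div_surjective (A := MvPolynomial κ E) z
    have hd0 := nonZeroDivisors.ne_zero hd
    refine ⟨n, d, hd0, ?_⟩
    rw [mul_div_cancel₀]
    simpa using hd0
  choose n d hd hnd using key
  let W : Set E := T ∪ ⋃ z ∈ Z, (((n z).coeffs : Set E) ∪ ((d z).coeffs : Set E))
  have hW : W.Finite := hT.union (hZ.biUnion fun z _ => (Finset.finite_toSet _).union (Finset.finite_toSet _))
  let O := Algebra.adjoin C W
  have hOf : Algebra.FiniteType C O := .adjoin_of_finite hW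
  have lift : ∀ p : MvPolynomial κ E, (p.coeffs : Set E) ⊆ W →
      ∃ q : MvPolynomial κ O, MvPolynomial.map (algebraMap O E) q = p := by
    intro p hp
    have := (MvPolynomial.mem_range_map_iff_coeffs_subset (f := algebraMap O E) (x := p)).2
      (fun x hx => ⟨⟨x, Algebra.subset_adjoin (hp hx)⟩, rfl⟩)
    exact this
  have hmapinj : Function.Injective (MvPolynomial.map (σ := κ) (algebraMap O E)) :=
    MvPolynomial.map_injective _ Subtype.val_injective
  have key2 : ∀ z : Z, ∃ n' d' : MvPolynomial κ O, ∃ c : O, c ≠ 0 ∧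
      MvPolynomial.map (algebraMap O E) n' = n z ∧ MvPolynomial.map (algebraMap O E) d' = d z ∧
      ∀ s : O →ₐ[C] C, s c ≠ 0 → MvPolynomial.map (s : O →+* C) n' ≠ 0 ∧
        MvPolynomial.map (s : O →+* C) d' ≠ 0 := by
    rintro ⟨z, hz⟩
    obtain ⟨n', hn'⟩ := lift (n z) (fun x hx => Or.inr (Set.mem_biUnion hz (Or.inl hx)))
    obtain ⟨d', hd'⟩ := lift (d z) (fun x hx => Or.inr (Set.mem_biUnion hz (Or.inr hx)))
    have hd0 : d' ≠ 0 := by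
      rintro rfl; exact hd z (by rw [← hd', map_zero])
    have hn0 : n' ≠ 0 := by
      rintro rfl
      have h1 := hnd z
      rw [← hn', map_zero, map_zero, mul_eq_zero] at h1
      rcases h1 with h1 | h1
      · exact hd z (by simpa using h1)
      · exact hZ0 z hz h1
    obtain ⟨m1, hm1⟩ := MvPolynomial.ne_zero_iff.1 hn0
    obtain ⟨m2, hm2⟩ := MvPolynomial.ne_zero_iff.1 hd0
    refine ⟨n', d', n'.coeff m1 * d'.coeff m2, mul_ne_zero hm1 hm2, hn', hd', fun s hs => ?_⟩
    rw [map_mul] at hs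
    constructor
    · refine MvPolynomial.ne_zero_iff.2 ⟨m1, ?_⟩
      rw [MvPolynomial.coeff_map]; exact left_ne_zero_of_mul hs
    · refine MvPolynomial.ne_zero_iff.2 ⟨m2, ?_⟩
      rw [MvPolynomial.coeff_map]; exact right_ne_zero_of_mul hs
  choose n' d' c hc hn' hd' hs using key2
  have := hZ.fintype
  obtain ⟨s, hs0⟩ := null (C := C) (∏ z, c z) (Finset.prod_ne_zero_iff.2 fun z _ => hc z)
  rw [map_prod, Finset.prod_ne_zero_iff] at hs0
  obtain ⟨𝓡, θ, h1, h2, h3, h4⟩ := place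
    ((algebraMap (MvPolynomial κ E) (FractionRing (MvPolynomial κ E))).comp
      (MvPolynomial.map (algebraMap O E)))
    ((IsFractionRing.injective _ _).comp hmapinj)
    ((algebraMap (MvPolynomial κ C) (FractionRing (MvPolynomial κ C))).comp
      (MvPolynomial.map (s : O →+* C)))
  have hp : ∀ p : MvPolynomial κ O, ∃ h : algebraMap (MvPolynomial κ E) _
      (MvPolynomial.map (algebraMap O E) p) ∈ 𝓡,
      θ ⟨_, h⟩ = algebraMap (MvPolynomial κ C) _ (MvPolynomial.map (s : O →+* C) p) := by
    intro p
    have h := h1 (algebraMap (MvPolynomial κ E) _ (MvPolynomial.map (algebraMap O E) p)) p 1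
      (by simp) (by simp)
    refine ⟨h, ?_⟩
    simpa using h3 ⟨_, h⟩ p 1 (by simp)
  refine ⟨𝓡, θ, ?_, ?_, ?_, ?_⟩
  · intro z hz
    obtain ⟨hs1, hs2⟩ := hs ⟨z, hz⟩ s (hs0 ⟨z, hz⟩ (Finset.mem_univ _))
    have e : algebraMap (MvPolynomial κ E) (FractionRing (MvPolynomial κ E))
        (MvPolynomial.map (algebraMap O E) (d' ⟨z, hz⟩)) * z =
        algebraMap (MvPolynomial κ E) (FractionRing (MvPolynomial κ E))
        (MvPolynomial.map (algebraMap O E) (n' ⟨z, hz⟩)) := by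
      rw [hn', hd']; exact hnd z
    have h := h1 z (n' ⟨z, hz⟩) (d' ⟨z, hz⟩) (by simpa using hs2) e
    refine ⟨h, fun h0 => ?_⟩
    have h5 := h3 ⟨z, h⟩ (n' ⟨z, hz⟩) (d' ⟨z, hz⟩) e
    rw [h0, mul_zero] at h5
    have h6 := h5.symm
    simp only [RingHom.comp_apply] at h6
    exact hs1 (by simpa using h6)
  · intro c
    have := hp (MvPolynomial.C (algebraMap C O c))
    simpa [← IsScalarTower.algebraMap_apply] using this
  · intro i
    have := hp (MvPolynomial.X i)
    simpa using this
  · intro t ht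
    have := hp (MvPolynomial.C ⟨t, Algebra.subset_adjoin (Or.inl ht)⟩)
    refine ⟨s ⟨t, Algebra.subset_adjoin (Or.inl ht)⟩, ?_⟩
    simp only [MvPolynomial.map_C] at this
    exact this
end spec
end SNPV

namespace SNPV
open TensorProduct MvPolynomial
section descent

lemma alg_of_X {F κ : Type u} [Field F] (B : Subalgebra F (FractionRing (MvPolynomial κ F)))
    (h : ∀ i, IsAlgebraic B (algebraMap (MvPolynomial κ F) (FractionRing (MvPolynomial κ F)) (X i))) :
    Algebra.IsAlgebraic B (FractionRing (MvPolynomial κ F)) := by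
  have hp : ∀ p : MvPolynomial κ F, IsAlgebraic B (algebraMap (MvPolynomial κ F) (FractionRing (MvPolynomial κ F)) p) := by
    intro p
    induction p using MvPolynomial.induction_on with
    | C a =>
      have : algebraMap (MvPolynomial κ F) (FractionRing (MvPolynomial κ F)) (C a) =
        algebraMap B _ (algebraMap F B a) := by
        rw [← IsScalarTower.algebraMap_apply, IsScalarTower.algebraMap_apply F (MvPolynomial κ F)]
        rfl
      rw [this]
      exact isAlgebraic_algebraMap _
    | add p q hp hq => rw [map_add]; exact hp.add hq
    | mul_X p i hp => rw [map_mul]; exact hp.mul (h i)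
  refine ⟨fun z => ?_⟩
  obtain ⟨n, d, hd, rfl⟩ := IsFractionRing.div_surjective (A := MvPolynomial κ F) z
  rw [div_eq_mul_inv]
  exact (hp n).mul (hp d).inv

lemma X_indep {F κ : Type u} [Field F] : AlgebraicIndependent F
    (fun i : κ => algebraMap (MvPolynomial κ F) (FractionRing (MvPolynomial κ F)) (X i)) := by
  have := (MvPolynomial.algebraicIndependent_X κ F).map' (f := IsScalarTower.toAlgHom F (MvPolynomial κ F) (FractionRing (MvPolynomial κ F))) (IsFractionRing.injective _ _)
  exact this

lemma X_basis {F κ : Type u} [Field F] : IsTranscendenceBasis F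
    (fun i : κ => algebraMap (MvPolynomial κ F) (FractionRing (MvPolynomial κ F)) (X i)) := by
  rw [X_indep.isTranscendenceBasis_iff_isAlgebraic]
  refine alg_of_X _ fun i => ?_
  exact isAlgebraic_algebraMap (⟨_, Algebra.subset_adjoin ⟨i, rfl⟩⟩ : Algebra.adjoin F (Set.range
    (fun i : κ => algebraMap (MvPolynomial κ F) (FractionRing (MvPolynomial κ F)) (X i))))

lemma adjoin_fin {E M : Type u} [Field E] [Field M] [Algebra E M] (u : Set M) (c : M)
    (hc : c ∈ Algebra.adjoin E u) :
    ∃ T : Set E, T.Finite ∧ c ∈ Subring.closure (algebraMap E M '' T ∪ u) := by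
  induction hc using Algebra.adjoin_induction with
  | mem x hx => exact ⟨∅, Set.finite_empty, Subring.subset_closure (Or.inr hx)⟩
  | algebraMap r => exact ⟨{r}, Set.finite_singleton r, Subring.subset_closure (Or.inl ⟨r, rfl, rfl⟩)⟩
  | add x y _ _ hx hy =>
    obtain ⟨T1, h1, h1'⟩ := hx
    obtain ⟨T2, h2, h2'⟩ := hy
    refine ⟨T1 ∪ T2, h1.union h2, add_mem ?_ ?_⟩
    · exact Subring.closure_mono (by gcongr; exact Set.subset_union_left) h1'
    · exact Subring.closure_mono (by gcongr; exact Set.subset_union_right) h2'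
  | mul x y _ _ hx hy =>
    obtain ⟨T1, h1, h1'⟩ := hx
    obtain ⟨T2, h2, h2'⟩ := hy
    refine ⟨T1 ∪ T2, h1.union h2, mul_mem ?_ ?_⟩
    · exact Subring.closure_mono (by gcongr; exact Set.subset_union_left) h1'
    · exact Subring.closure_mono (by gcongr; exact Set.subset_union_right) h2'

lemma Y_indep {C E A M : Type u} [Field C] [Field E] [CommRing A] [Field M]
    [Algebra C E] [Algebra C A] [Algebra C M] [Algebra E M] [IsScalarTower C E M] (φ : A →ₐ[C] M)
    (hφ : Function.Injective (Algebra.TensorProduct.lift (Algebra.ofId E M) φ (fun _ _ => Commute.all _ _)))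
    (d : ℕ) (g : MvPolynomial (Fin d) C →ₐ[C] A) (hg : Function.Injective g) :
    AlgebraicIndependent E (fun j => φ (g (X j))) := by
  have h1 : Function.Injective (Algebra.TensorProduct.map (AlgHom.id E E) g) :=
    Module.Flat.lTensor_preserves_injective_linearMap (M := E) g.toLinearMap hg
  have h2 : MvPolynomial.aeval (fun j => φ (g (X j))) =
      ((Algebra.TensorProduct.lift (Algebra.ofId E M) φ (fun _ _ => Commute.all _ _)).comp
        (Algebra.TensorProduct.map (AlgHom.id E E) g)).comp
        (MvPolynomial.algebraTensorAlgEquiv C E (σ := Fin d)).symm.toAlgHom := by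
    ext j
    simp
  rw [algebraicIndependent_iff_injective_aeval, h2]
  exact (hφ.comp h1).comp (AlgEquiv.injective _)

lemma descent_fin {C E A κ : Type u} [Field C] [IsAlgClosed C] [Field E] [CommRing A] [IsDomain A]
    [Algebra C E] [Algebra C A] [Algebra.FiniteType C A] [Finite κ]
    (φ : A →ₐ[C] FractionRing (MvPolynomial κ E))
    (hφ : Function.Injective (Algebra.TensorProduct.lift (Algebra.ofId E _) φ (fun _ _ => Commute.all _ _))) :
    ∃ ν : A →ₐ[C] FractionRing (MvPolynomial κ C), Function.Injective ν := by
  classical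
  obtain ⟨d, g, hg, hgi⟩ := exists_integral_inj_algHom_of_fg C A
  have hY := Y_indep φ hφ d g hg
  set M := FractionRing (MvPolynomial κ E) with hM
  set M0 := FractionRing (MvPolynomial κ C) with hM0
  set Y := fun j => φ (g (X j)) with hYdef
  let XX : κ → M := fun i => algebraMap (MvPolynomial κ E) M (X i)
  have halg : Algebra.IsAlgebraic (Algebra.adjoin E (Set.range Y ∪ Set.range XX)) M :=
    alg_of_X _ fun i => isAlgebraic_algebraMap
      (⟨_, Algebra.subset_adjoin (Or.inr ⟨i, rfl⟩)⟩ : Algebra.adjoin E (Set.range Y ∪ Set.range XX))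
  obtain ⟨u, hYu, huX, hu⟩ := exists_isTranscendenceBasis_between (R := E) (Set.range Y)
    (Set.range Y ∪ Set.range XX) Set.subset_union_left hY.to_subtype_range
  have hcard : Cardinal.mk u = Cardinal.mk κ := by
    rw [hu.cardinalMk_eq_trdeg]
    exact X_basis.cardinalMk_eq_trdeg.symm
  have hufin : Finite u := by
    rw [← Cardinal.lt_aleph0_iff_finite, hcard]; exact Cardinal.lt_aleph0_of_finite κ
  have ualg := hu.isAlgebraic
  rw [Subtype.range_coe] at ualg
  have key : ∀ i, ∃ P : Polynomial M, P ≠ 0 ∧ P.eval (XX i) = 0 ∧ ∃ T : Set E, T.Finite ∧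
      ∀ n, P.coeff n ∈ Subring.closure (algebraMap E M '' T ∪ u) := by
    intro i
    obtain ⟨p, hp0, hp⟩ := ualg.isAlgebraic (XX i)
    choose T hT hT' using fun n => adjoin_fin u (p.coeff n : M) (p.coeff n).2
    refine ⟨p.map (algebraMap _ M), ?_, ?_, ⋃ n ∈ p.support, T n, ?_, ?_⟩
    · rwa [Ne, Polynomial.map_eq_zero_iff (FaithfulSMul.algebraMap_injective _ _)]
    · rwa [Polynomial.eval_map_algebraMap]
    · exact Set.Finite.biUnion (Finset.finite_toSet _) fun n _ => hT n
    · intro n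
      rw [Polynomial.coeff_map]
      by_cases hn : n ∈ p.support
      · refine Subring.closure_mono ?_ (hT' n)
        gcongr
        exact Set.subset_biUnion_of_mem (u := T) hn
      · rw [Polynomial.notMem_support_iff.1 hn, map_zero]; exact zero_mem _
  choose P hP0 hPX T hT hPT using key
  obtain ⟨a, ha⟩ := (Algebra.FiniteType.out : (⊤ : Subalgebra C A).FG)
  let Z : Set M := ((φ '' (a : Set A)) ∪ u ∪ Set.range fun i => (P i).leadingCoeff) \ {0}
  have hZ : Z.Finite := Set.Finite.sdiff (((a.finite_toSet.image _).union
    (Set.toFinite u)).union (Set.finite_range _))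
  obtain ⟨𝓡, θ, h1, h2, h3, h4⟩ := spec (C := C) Z hZ (fun z hz => hz.2) (⋃ i, T i)
    (Set.finite_iUnion hT)
  have hZ𝓡 : ∀ z ∈ ((φ '' (a : Set A)) ∪ u ∪ Set.range fun i => (P i).leadingCoeff), z ∈ 𝓡 := by
    intro z hz
    by_cases h0 : z = 0
    · rw [h0]; exact zero_mem _
    · exact (h1 z ⟨hz, h0⟩).1
  have hamC : ∀ c : C, algebraMap C M c = algebraMap (MvPolynomial κ E) M (MvPolynomial.C (algebraMap C E c)) := by
    intro c
    rw [IsScalarTower.algebraMap_apply C (MvPolynomial κ E) M]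
    rfl
  have hamC0 : ∀ c : C, algebraMap C M0 c = algebraMap (MvPolynomial κ C) M0 (MvPolynomial.C c) := by
    intro c
    rw [IsScalarTower.algebraMap_apply C (MvPolynomial κ C) M0]
    rfl
  have hφ𝓡 : ∀ x : A, φ x ∈ 𝓡 := by
    intro x
    have hx : x ∈ Algebra.adjoin C (a : Set A) := by rw [ha]; trivial
    induction hx using Algebra.adjoin_induction with
    | mem x hx => exact hZ𝓡 _ (Or.inl (Or.inl ⟨x, hx, rfl⟩))
    | algebraMap r => rw [AlgHom.commutes, hamC]; exact (h2 r).1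
    | add x y _ _ hx hy => rw [map_add]; exact add_mem hx hy
    | mul x y _ _ hx hy => rw [map_mul]; exact mul_mem hx hy
  let ν : A →ₐ[C] M0 :=
    { θ.comp ((φ : A →+* M).codRestrict 𝓡 hφ𝓡) with
      commutes' := by
        intro c
        obtain ⟨h, h'⟩ := h2 c
        rw [hamC0, ← h']
        change θ _ = _
        congr 1
        apply Subtype.ext
        change φ _ = _
        rw [AlgHom.commutes, hamC] }
  have hνdef : ∀ x, ν x = θ ⟨φ x, hφ𝓡 x⟩ := fun _ => rfl
  let w : u → M0 := fun x => θ ⟨x, hZ𝓡 _ (Or.inl (Or.inr x.2))⟩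
  have hclos : ∀ i, ∀ m ∈ Subring.closure (algebraMap E M '' (T i) ∪ u), ∃ h : m ∈ 𝓡,
      θ ⟨m, h⟩ ∈ Algebra.adjoin C (Set.range w) := by
    intro i m hm
    let 𝓢 : Subring M := ((Algebra.adjoin C (Set.range w)).toSubring.comap θ).map 𝓡.subtype
    have : Subring.closure (algebraMap E M '' (T i) ∪ u) ≤ 𝓢 := by
      rw [Subring.closure_le]
      rintro _ (⟨t, ht, rfl⟩ | hx)
      · obtain ⟨c, h, h'⟩ := h4 t (Set.mem_iUnion.2 ⟨i, ht⟩)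
        refine ⟨⟨_, h⟩, ?_, ?_⟩
        · change θ _ ∈ Algebra.adjoin C (Set.range w)
          rw [h', ← hamC0]; exact Subalgebra.algebraMap_mem _ _
        · change algebraMap (MvPolynomial κ E) M _ = _
          rw [IsScalarTower.algebraMap_apply E (MvPolynomial κ E) M]; rfl
      · refine ⟨⟨_, hZ𝓡 _ (Or.inl (Or.inr hx))⟩, ?_, rfl⟩
        exact Algebra.subset_adjoin ⟨⟨_, hx⟩, rfl⟩
    obtain ⟨⟨m', hm'⟩, h1, rfl⟩ := this hm
    exact ⟨hm', h1⟩
  choose hc hc' using fun i n => hclos i _ (hPT i n)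
  have walg : Algebra.IsAlgebraic (Algebra.adjoin C (Set.range w)) M0 := by
    refine alg_of_X _ fun i => ?_
    obtain ⟨hX, hX'⟩ := h3 i
    let p : Polynomial (Algebra.adjoin C (Set.range w)) :=
      ∑ n ∈ Finset.range ((P i).natDegree + 1), Polynomial.monomial n ⟨_, hc' i n⟩
    refine ⟨p, ?_, ?_⟩
    · intro h0
      have := congrArg (fun q => Polynomial.coeff q (P i).natDegree) h0
      simp only [p, Polynomial.finsetSum_coeff, Polynomial.coeff_monomial] at this
      rw [Finset.sum_ite_eq' ] at this
      simp only [Finset.mem_range, Nat.lt_succ_self, if_true, Polynomial.coeff_zero] at this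
      have h5 := congrArg Subtype.val this
      exact (h1 (P i).leadingCoeff ⟨Or.inr ⟨i, rfl⟩, by simpa using hP0 i⟩).2 h5
    · have h6 := hPX i
      rw [Polynomial.eval_eq_sum_range] at h6
      have h7 : (∑ n ∈ Finset.range ((P i).natDegree + 1), (⟨_, hc i n⟩ * ⟨_, hX⟩ ^ n : 𝓡)) = 0 := by
        apply Subtype.ext
        push_cast
        exact h6
      have h8 := congrArg θ h7
      rw [map_sum, map_zero] at h8
      simp only [p, map_sum, Polynomial.aeval_monomial]
      rw [← h8]
      refine Finset.sum_congr rfl fun n _ => ?_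
      rw [map_mul, map_pow, hX']
      rfl
  have wind : AlgebraicIndependent C w := by
    refine (Algebra.IsAlgebraic.isTranscendenceBasis_of_le_trdeg_of_finite C w ?_).1
    rw [hcard]
    exact X_basis.cardinalMk_eq_trdeg.le
  refine ⟨ν, ?_⟩
  have hνY : AlgebraicIndependent C (fun j => ν (g (X j))) := by
    have := wind.comp (fun j : Fin d => (⟨Y j, hYu ⟨j, rfl⟩⟩ : u))
      (fun j j' h => hY.injective (congrArg Subtype.val h))
    exact this
  have hνg : Function.Injective (ν.comp g) := by
    rw [algebraicIndependent_iff_injective_aeval] at hνY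
    convert hνY using 1
    congr 1
    ext j
    simp
  rw [RingHom.injective_iff_ker_eq_bot]
  algebraize [g.toRingHom]
  have : Algebra.IsIntegral (MvPolynomial (Fin d) C) A := ⟨hgi⟩
  refine Ideal.eq_bot_of_comap_eq_bot (R := MvPolynomial (Fin d) C) ?_
  rw [eq_bot_iff]
  intro p hp
  have : (ν.comp g) p = 0 := hp
  exact hνg (by rw [this, map_zero])

lemma descent {C E A ι : Type u} [Field C] [IsAlgClosed C] [Field E] [CommRing A] [IsDomain A]
    [Algebra C E] [Algebra C A] [Algebra.FiniteType C A]
    (φ : A →ₐ[C] FractionRing (MvPolynomial ι E))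
    (hφ : Function.Injective (Algebra.TensorProduct.lift (Algebra.ofId E _) φ (fun _ _ => Commute.all _ _))) :
    ∃ (κ : Type u) (ν : A →ₐ[C] FractionRing (MvPolynomial κ C)), Function.Injective ν := by
  classical
  obtain ⟨a, ha⟩ := (Algebra.FiniteType.out : (⊤ : Subalgebra C A).FG)
  have key : ∀ x : A, ∃ (s : Finset ι) (n d : MvPolynomial ι E), (n.vars ⊆ s) ∧ (d.vars ⊆ s) ∧
      φ x = algebraMap _ _ n / algebraMap _ _ d := by
    intro x
    obtain ⟨n, d, hd, h⟩ := IsFractionRing.div_surjective (A := MvPolynomial ι E) (φ x)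
    exact ⟨n.vars ∪ d.vars, n, d, Finset.subset_union_left, Finset.subset_union_right, h.symm⟩
  choose s n d hn hd hnd using key
  let S := a.biUnion s
  let g : MvPolynomial S E →ₐ[E] FractionRing (MvPolynomial ι E) :=
    (IsScalarTower.toAlgHom E (MvPolynomial ι E) _).comp (rename (fun x : S => (x : ι)))
  have hg : Function.Injective g :=
    (IsFractionRing.injective (MvPolynomial ι E) _).comp (rename_injective _ Subtype.val_injective)
  let j : FractionRing (MvPolynomial S E) →ₐ[E] FractionRing (MvPolynomial ι E) :=
    IsFractionRing.liftAlgHom hg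
  have hj : ∀ p, j (algebraMap _ _ p) = g p := fun p => by
    simp [j]
  let jC : FractionRing (MvPolynomial S E) →ₐ[C] FractionRing (MvPolynomial ι E) := j.restrictScalars C
  have hlift : ∀ p : MvPolynomial ι E, (p.vars ⊆ S) → ∃ q, j q = algebraMap _ _ p := by
    intro p hp
    obtain ⟨q, hq⟩ := exists_rename_eq_of_vars_subset_range p (fun x : S => (x : ι)) Subtype.val_injective
      (by intro x hx; exact ⟨⟨x, hp hx⟩, rfl⟩)
    refine ⟨algebraMap _ _ q, ?_⟩
    rw [hj, ← hq]
    rfl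
  have hr : ∀ x, φ x ∈ jC.range := by
    intro x
    have hx : x ∈ Algebra.adjoin C (a : Set A) := by rw [ha]; trivial
    induction hx using Algebra.adjoin_induction with
    | mem x hx =>
      obtain ⟨q1, h1⟩ := hlift (n x) ((hn x).trans (Finset.subset_biUnion_of_mem s hx))
      obtain ⟨q2, h2⟩ := hlift (d x) ((hd x).trans (Finset.subset_biUnion_of_mem s hx))
      refine ⟨q1 / q2, ?_⟩
      rw [hnd x, ← h1, ← h2]
      exact map_div₀ j _ _
    | algebraMap r => rw [AlgHom.commutes]; exact Subalgebra.algebraMap_mem _ _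
    | add x y _ _ hx hy => rw [map_add]; exact add_mem hx hy
    | mul x y _ _ hx hy => rw [map_mul]; exact mul_mem hx hy
  let φ' : A →ₐ[C] FractionRing (MvPolynomial S E) :=
    (AlgEquiv.ofInjectiveField jC).symm.toAlgHom.comp (φ.codRestrict jC.range hr)
  have hφ' : ∀ x, j (φ' x) = φ x := by
    intro x
    have : (AlgEquiv.ofInjectiveField jC) (φ' x) = φ.codRestrict jC.range hr x := by
      simp [φ']
    exact congrArg Subtype.val this
  obtain ⟨ν, hν⟩ := descent_fin φ' (by
    have : Algebra.TensorProduct.lift (Algebra.ofId E _) φ (fun _ _ => Commute.all _ _) =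
      j.comp (Algebra.TensorProduct.lift (Algebra.ofId E _) φ' (fun _ _ => Commute.all _ _)) := by
      apply Algebra.TensorProduct.ext'
      intro e x
      simp only [Algebra.TensorProduct.lift_tmul, AlgHom.comp_apply, map_mul, hφ']
      congr 1
      exact (j.commutes e).symm
    rw [this] at hφ
    exact Function.Injective.of_comp (f := j) hφ)
  exact ⟨_, ν, hν⟩
end descent
end SNPV

namespace SNPV
open TensorProduct

section wr
variable {C E : Type*} [Field C] [Field E] [Algebra C E] (D : Derivation ℤ E E)
  (hDC : ∀ c : C, D (algebraMap C E c) = 0)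
  (hconst : ∀ x, D x = 0 → ∃ c : C, algebraMap C E c = x)

/-- the derivation as a linear map over the constants -/
def Dl : E →ₗ[C] E where
  toFun := D
  map_add' := map_add D
  map_smul' c x := by
    rw [Algebra.smul_def, D.leibniz, hDC, smul_zero, add_zero, RingHom.id_apply, smul_eq_mul,
      ← Algebra.smul_def]

lemma Dl_pow (r : ℕ) (x : E) : ((Dl D hDC) ^ r) x = D^[r] x := by
  rw [Module.End.pow_apply]; rfl

include hDC in
lemma it_add (r : ℕ) (x y : E) : D^[r] (x + y) = D^[r] x + D^[r] y := by
  simp only [← Dl_pow D hDC, map_add]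

include hDC in
lemma it_smul (r : ℕ) (c : C) (y : E) : D^[r] (c • y) = c • D^[r] y := by
  simp only [← Dl_pow D hDC, map_smul]

include hconst in
lemma wr_aux {ι : Type*} [DecidableEq ι] (y : ι → E) (m : ℕ) : ∀ (s : Finset ι) (v : ι → E), s.card = m →
    (∃ i ∈ s, v i ≠ 0) →
    (∀ r < m, ∑ i ∈ s, v i * D^[r] (y i) = 0) →
    ∃ c : ι → C, (∃ i ∈ s, c i ≠ 0) ∧ ∑ i ∈ s, c i • y i = 0 := by
  induction m with
  | zero =>
    rintro s v hs ⟨i, hi, _⟩ _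
    rw [Finset.card_eq_zero] at hs
    simp [hs] at hi
  | succ m ih =>
    rintro s v hs ⟨i0, hi0, hv0⟩ hr
    let v1 : ι → E := fun i => v i / v i0
    have h1 : ∀ r < m + 1, ∑ i ∈ s, v1 i * D^[r] (y i) = 0 := by
      intro r hr'
      have : ∑ i ∈ s, v1 i * D^[r] (y i) = (v i0)⁻¹ * ∑ i ∈ s, v i * D^[r] (y i) := by
        rw [Finset.mul_sum]
        refine Finset.sum_congr rfl fun i _ => ?_
        simp only [v1]; ring
      rw [this, hr r hr', mul_zero]
    have h10 : v1 i0 = 1 := div_self hv0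
    have h2 : ∀ r < m, ∑ i ∈ s.erase i0, D (v1 i) * D^[r] (y i) = 0 := by
      intro r hr'
      have e1 := congrArg D (h1 r (by omega))
      have e2 := h1 (r+1) (by omega)
      rw [map_zero, map_sum] at e1
      have e3 : ∀ i ∈ s, D (v1 i * D^[r] (y i)) = D (v1 i) * D^[r] (y i) + v1 i * D^[r+1] (y i) := by
        intro i _
        rw [D.leibniz, Function.iterate_succ_apply', smul_eq_mul, smul_eq_mul]; ring
      rw [Finset.sum_congr rfl e3, Finset.sum_add_distrib, e2, add_zero,
        ← Finset.add_sum_erase _ _ hi0, h10, D.map_one_eq_zero, zero_mul, zero_add] at e1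
      exact e1
    by_cases h3 : ∃ i ∈ s.erase i0, D (v1 i) ≠ 0
    · obtain ⟨c, ⟨i, hi, hci⟩, hc⟩ := ih (s.erase i0) (fun i => D (v1 i)) (by
        rw [Finset.card_erase_of_mem hi0]; omega) h3 h2
      refine ⟨fun i => if i = i0 then 0 else c i, ⟨i, Finset.mem_of_mem_erase hi, ?_⟩, ?_⟩
      · simp only [if_neg (Finset.ne_of_mem_erase hi)]; exact hci
      · rw [← Finset.add_sum_erase _ _ hi0]
        simp only [if_true, zero_smul, zero_add]
        rw [← hc]
        refine Finset.sum_congr rfl fun i hi => ?_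
        rw [if_neg (Finset.ne_of_mem_erase hi)]
    · push Not at h3
      have h4 : ∀ i ∈ s, D (v1 i) = 0 := by
        intro i hi
        by_cases h : i = i0
        · rw [h, h10, D.map_one_eq_zero]
        · exact h3 i (Finset.mem_erase.2 ⟨h, hi⟩)
      have h5 : ∀ i, ∃ c : C, i ∈ s → algebraMap C E c = v1 i := by
        intro i
        by_cases hi : i ∈ s
        · obtain ⟨c, hc⟩ := hconst _ (h4 i hi)
          exact ⟨c, fun _ => hc⟩
        · exact ⟨0, fun h => absurd h hi⟩
      choose c hc using h5
      refine ⟨c, ⟨i0, hi0, ?_⟩, ?_⟩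
      · intro h
        have := hc i0 hi0
        rw [h, map_zero, h10] at this
        exact zero_ne_one this
      · have := h1 0 (by omega)
        rw [← this]
        refine Finset.sum_congr rfl fun i hi => ?_
        rw [Algebra.smul_def, hc i hi]; rfl

/-- Wronskian matrix -/
def wr {n : ℕ} (y : Fin n → E) : Matrix (Fin n) (Fin n) E := Matrix.of fun r i => D^[(r : ℕ)] (y i)

include hconst in
lemma wr_ne {n : ℕ} (y : Fin n → E) (hy : LinearIndependent C y) : (wr D y).det ≠ 0 := by
  intro h
  obtain ⟨v, hv, hv'⟩ := Matrix.exists_mulVec_eq_zero_iff.2 h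
  obtain ⟨i, hi⟩ := Function.ne_iff.1 hv
  obtain ⟨c, ⟨j, _, hj⟩, hc⟩ := wr_aux D hconst y n Finset.univ v (by simp) ⟨i, Finset.mem_univ _, hi⟩ (by
    intro r hr
    have := congrFun hv' ⟨r, hr⟩
    simp only [Matrix.mulVec, dotProduct, wr, Matrix.of_apply, Pi.zero_apply] at this
    rw [← this]
    exact Finset.sum_congr rfl fun i _ => mul_comm _ _)
  exact hj (Fintype.linearIndependent_iff.1 hy c hc j)

lemma leib (s : E) (r : ℕ) : ∃ b : ℕ → E, b r = s ∧ (∀ j, r < j → b j = 0) ∧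
    ∀ z, D^[r] (s * z) = ∑ j ∈ Finset.range (r + 1), b j * D^[j] z := by
  induction r with
  | zero =>
    refine ⟨fun j => if j = 0 then s else 0, by simp, fun j hj => by simp; omega, fun z => by simp⟩
  | succ r ih =>
    obtain ⟨b, h1, h2, h3⟩ := ih
    refine ⟨fun j => D (b j) + (if j = 0 then 0 else b (j-1)), ?_, ?_, ?_⟩
    · simp [h1, h2 (r+1)]
    · intro j hj
      simp only [h2 j (by omega), map_zero, zero_add, ite_eq_left_iff]
      intro _
      exact h2 (j-1) (by omega)
    · intro z
      rw [Function.iterate_succ_apply', h3, map_sum]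
      have e : ∀ j ∈ Finset.range (r+1), D (b j * D^[j] z) = D (b j) * D^[j] z + b j * D^[j+1] z := by
        intro i _
        rw [D.leibniz, Function.iterate_succ_apply', smul_eq_mul, smul_eq_mul]; ring
      rw [Finset.sum_congr rfl e, Finset.sum_add_distrib]
      simp only [add_mul]
      rw [Finset.sum_add_distrib]
      congr 1
      · rw [Finset.sum_range_succ _ (r+1), h2 (r+1) (by omega), map_zero, zero_mul, add_zero]
      · rw [Finset.sum_range_succ' _ (r+1)]
        simp

lemma wr_mul {n : ℕ} (s : E) (z : Fin n → E) :
    (wr D (fun i => s * z i)).det = s ^ n * (wr D z).det := by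
  choose b h1 h2 h3 using leib D s
  have : wr D (fun i => s * z i) = Matrix.of (fun r j : Fin n => b r j) * wr D z := by
    ext r i
    simp only [wr, Matrix.of_apply, Matrix.mul_apply]
    rw [h3, Fin.sum_univ_eq_sum_range (fun j => b r j * D^[j] (z i))]
    refine Finset.sum_subset ?_ ?_
    · intro j hj; simp only [Finset.mem_range] at *; omega
    · intro j _ hj
      rw [h2 r j (by simp only [Finset.mem_range] at *; omega), zero_mul]
  rw [this, Matrix.det_mul, Matrix.det_of_isLowerTriangular]
  · simp [h1]
  · intro i j hij
    simp only [OrderDual.toDual_lt_toDual] at hij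
    exact h2 _ _ hij

include hDC in
lemma wr_lin {n : ℕ} (c : Matrix (Fin n) (Fin n) C) (y : Fin n → E) :
    (wr D (fun i => ∑ j, c j i • y j)).det = algebraMap C E c.det * (wr D y).det := by
  have : wr D (fun i => ∑ j, c j i • y j) = wr D y * (algebraMap C E).mapMatrix c := by
    ext r i
    simp only [wr, Matrix.of_apply, Matrix.mul_apply, RingHom.mapMatrix_apply, Matrix.map_apply]
    rw [← Dl_pow D hDC, map_sum]
    refine Finset.sum_congr rfl fun j _ => ?_
    rw [map_smul, Algebra.smul_def, mul_comm, Dl_pow]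
  rw [this, Matrix.det_mul, ← RingHom.map_det, mul_comm]

lemma it_comm (g : E →ₐ[C] E) (hg : ∀ x, g (D x) = D (g x)) (r : ℕ) (x : E) :
    g (D^[r] x) = D^[r] (g x) := by
  induction r with
  | zero => rfl
  | succ r ih => rw [Function.iterate_succ_apply', Function.iterate_succ_apply', hg, ih]

lemma wr_g {n : ℕ} (g : E →ₐ[C] E) (hg : ∀ x, g (D x) = D (g x)) (y : Fin n → E) :
    g (wr D y).det = (wr D (fun i => g (y i))).det := by
  rw [AlgHom.map_det]
  congr 1
  ext r i
  simp [wr, it_comm D g hg]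

include hDC hconst in
lemma semi (G : Set (E →ₐ[C] E)) (hG : ∀ g ∈ G, ∀ x, g (D x) = D (g x))
    (Y : Submodule C E) [Module.Finite C Y]
    (hY : ∀ g ∈ G, ∃ s : E, s ≠ 0 ∧ ∀ y ∈ Y, ∃ y' ∈ Y, g y = s * y') :
    ∃ T : Submodule C E, Module.Finite C T ∧ (∀ g ∈ G, ∀ t ∈ T, g t ∈ T) ∧
      ∀ L : Subfield E, (T : Set E) ⊆ L → ∀ y ∈ Y, ∀ y' ∈ Y, y / y' ∈ L := by
  let n := Module.finrank C Y
  let B : Module.Basis (Fin n) C Y := Module.finBasis C Y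
  let y : Fin n → E := fun i => B i
  have hy : LinearIndependent C y := B.linearIndependent.map' Y.subtype (Submodule.ker_subtype Y)
  have hw := wr_ne D hconst y hy
  set w := (wr D y).det with hwdef
  have hYfg : Y.FG := Module.Finite.iff_fg.1 inferInstance
  let T : Submodule C E := (Y ^ n).map (LinearMap.mulLeft C w⁻¹)
  refine ⟨T, Module.Finite.iff_fg.2 ((hYfg.pow n).map _), ?_, ?_⟩
  · intro g hg t ht
    obtain ⟨p, hp, rfl⟩ := ht
    obtain ⟨s, hs, hsY⟩ := hY g hg
    have hp' : ∀ m : ℕ, ∀ p ∈ Y ^ m, ∃ p' ∈ Y ^ m, g p = s ^ m * p' := by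
      intro m
      induction m with
      | zero =>
        intro p hp
        rw [pow_zero, Submodule.mem_one] at hp
        obtain ⟨c, rfl⟩ := hp
        refine ⟨algebraMap C E c, ?_, by simp⟩
        rw [pow_zero]; exact Submodule.algebraMap_mem c
      | succ m ih =>
        intro p hp
        rw [pow_succ] at hp
        induction hp using Submodule.mul_induction_on' with
        | mem_mul_mem a ha b hb =>
          obtain ⟨a', ha', e1⟩ := ih a ha
          obtain ⟨b', hb', e2⟩ := hsY b hb
          refine ⟨a' * b', ?_, ?_⟩
          · rw [pow_succ]; exact Submodule.mul_mem_mul ha' hb'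
          · rw [map_mul, e1, e2]; ring
        | add a _ b _ ha hb =>
          obtain ⟨a', ha', e1⟩ := ha
          obtain ⟨b', hb', e2⟩ := hb
          exact ⟨a' + b', add_mem ha' hb', by rw [map_add, e1, e2]; ring⟩
    obtain ⟨p', hp'm, hgp⟩ := hp' n p hp
    choose z hz hgz using fun i => hsY (y i) (B i).2
    let c : Matrix (Fin n) (Fin n) C := Matrix.of fun j i => B.repr ⟨z i, hz i⟩ j
    have hzc : ∀ i, z i = ∑ j, c j i • y j := by
      intro i
      have := congrArg Subtype.val (B.sum_repr ⟨z i, hz i⟩)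
      refine this.symm.trans ?_
      rw [Submodule.coe_sum]
      rfl
    have hgw : g w = s ^ n * (algebraMap C E c.det * w) := by
      rw [hwdef, wr_g D g (hG g hg)]
      simp only [hgz]
      rw [wr_mul, ← wr_lin D hDC]
      simp only [← hzc]
    have hc : c.det ≠ 0 := by
      intro h0
      rw [h0, map_zero, zero_mul, mul_zero] at hgw
      exact hw ((map_eq_zero g).1 hgw)
    refine ⟨c.det⁻¹ • p', Submodule.smul_mem _ _ hp'm, ?_⟩
    have hc' : algebraMap C E c.det ≠ 0 := by simpa using hc
    simp only [LinearMap.mulLeft_apply, map_mul, map_inv₀, hgp, hgw, Algebra.smul_def]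
    field_simp
  · intro L hL a ha b hb
    by_cases hb0 : b = 0
    · rw [hb0, div_zero]; exact zero_mem _
    have hn : n ≠ 0 := by
      intro h0
      have := Module.finrank_zero_iff.1 h0
      have := Subsingleton.elim (⟨b, hb⟩ : Y) 0
      exact hb0 (congrArg Subtype.val this)
    obtain ⟨m, hm⟩ := Nat.exists_eq_succ_of_ne_zero hn
    have h1 : w⁻¹ * (b ^ m * a) ∈ L := hL ⟨b ^ m * a, by
      change _ ∈ Y ^ n
      rw [hm, pow_succ]; exact Submodule.mul_mem_mul (Submodule.pow_mem_pow _ hb _) ha, rfl⟩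
    have h2 : w⁻¹ * (b ^ m * b) ∈ L := hL ⟨b ^ m * b, by
      change _ ∈ Y ^ n
      rw [hm, pow_succ]; exact Submodule.mul_mem_mul (Submodule.pow_mem_pow _ hb _) hb, rfl⟩
    have := L.div_mem h1 h2
    have e : w⁻¹ * (b ^ m * a) / (w⁻¹ * (b ^ m * b)) = a / b := by
      field_simp
    rwa [e] at this

include hDC hconst in
lemma pv (k : Subfield E) (G : Set (E →ₐ[C] E)) (hG : ∀ g ∈ G, ∀ x, g (D x) = D (g x))
    (hfix : ∀ x, (∀ g ∈ G, g x = x) → x ∈ k)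
    (T : Submodule C E) [Module.Finite C T] (hT : ∀ g ∈ G, ∀ t ∈ T, g t ∈ T) :
    ∃ (n : ℕ) (a : Fin n → E) (y : Fin n → E), (∀ i, a i ∈ k) ∧ LinearIndependent C y ∧
      Submodule.span C (Set.range y) = T ∧
      ∀ i, D^[n] (y i) + ∑ r : Fin n, a r * D^[(r : ℕ)] (y i) = 0 := by
  let n := Module.finrank C T
  let B : Module.Basis (Fin n) C T := Module.finBasis C T
  let y : Fin n → E := fun i => B i
  have hy : LinearIndependent C y := B.linearIndependent.map' T.subtype (Submodule.ker_subtype T)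
  have hspan : Submodule.span C (Set.range y) = T := by
    have : Set.range y = T.subtype '' (Set.range B) := by rw [← Set.range_comp]; rfl
    rw [this, Submodule.span_image, B.span_eq, Submodule.map_top, Submodule.range_subtype]
  have hw := wr_ne D hconst y hy
  have hW : IsUnit (wr D y).det := isUnit_iff_ne_zero.2 hw
  let a : Fin n → E := Matrix.vecMul (fun i => - D^[n] (y i)) (wr D y)⁻¹
  have ha : Matrix.vecMul a (wr D y) = fun i => - D^[n] (y i) := by
    simp only [a, Matrix.vecMul_vecMul, Matrix.nonsing_inv_mul _ hW, Matrix.vecMul_one]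
  have hiff : ∀ b : Fin n → E, (∀ i, D^[n] (y i) + ∑ r : Fin n, b r * D^[(r : ℕ)] (y i) = 0) ↔
      Matrix.vecMul b (wr D y) = fun i => - D^[n] (y i) := by
    intro b
    rw [funext_iff]
    refine forall_congr' fun i => ?_
    simp only [Matrix.vecMul, dotProduct, wr, Matrix.of_apply]
    rw [add_comm, add_eq_zero_iff_eq_neg]
  refine ⟨n, a, y, ?_, hy, hspan, (hiff a).2 ha⟩
  intro i
  refine hfix _ fun g hg => ?_
  let Lg : E →ₗ[C] E := (Dl D hDC) ^ n + ∑ r : Fin n, (LinearMap.mulLeft C (g (a r))).comp ((Dl D hDC) ^ (r : ℕ))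
  have hLg : ∀ x, Lg x = D^[n] x + ∑ r : Fin n, g (a r) * D^[(r : ℕ)] x := by
    intro x
    simp [Lg, Dl_pow]
  have h0 : ∀ i, Lg (g (y i)) = 0 := by
    intro i
    have := congrArg g ((hiff a).2 ha i)
    rw [map_zero, map_add, map_sum] at this
    simp only [map_mul, it_comm D g (hG g hg)] at this
    rw [hLg, this]
  let gT : T →ₗ[C] T := (g.toLinearMap).restrict (hT g hg)
  have hgT : Function.Injective gT := fun x x' h => Subtype.ext (g.injective (congrArg Subtype.val h))
  have hgTs := LinearMap.surjective_of_injective hgT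
  have hz : Lg.comp (T.subtype.comp gT) = 0 := by
    refine B.ext fun i => ?_
    exact h0 i
  have hy0 : ∀ i, Lg (y i) = 0 := by
    intro i
    obtain ⟨t, ht⟩ := hgTs (B i)
    have := LinearMap.congr_fun hz t
    simp only [LinearMap.comp_apply, ht, LinearMap.zero_apply] at this
    exact this
  have h1 := (hiff (fun r => g (a r))).1 (fun i => by rw [← hLg, hy0])
  have h2 : (fun r => g (a r)) = a := by
    have := congrArg (fun v => Matrix.vecMul v (wr D y)⁻¹) h1
    simp only [Matrix.vecMul_vecMul, Matrix.mul_nonsing_inv _ hW, Matrix.vecMul_one] at this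
    rw [this]
  exact congrFun h2 i
end wr
end SNPV

namespace SNPV
open TensorProduct

lemma tmul_eq {F E : Type*} [Field F] [Field E] [Algebra F E] (x : E)
    (h : x ⊗ₜ[F] (1 : E) = 1 ⊗ₜ x) : x ∈ Set.range (algebraMap F E) := by
  by_contra hx
  have hx' : x ∉ Submodule.span F {(1 : E)} := by
    rw [Submodule.mem_span_singleton]
    rintro ⟨a, rfl⟩
    exact hx ⟨a, by rw [Algebra.smul_def, mul_one]⟩
  obtain ⟨f, hf, hf'⟩ := Submodule.exists_le_ker_of_notMem hx'
  have h1 : f 1 = 0 := hf' (Submodule.mem_span_singleton_self 1)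
  have := congrArg (fun z => TensorProduct.lid F E (LinearMap.rTensor E f z)) h
  simp only [LinearMap.rTensor_tmul, TensorProduct.lid_tmul, h1, zero_smul] at this
  rw [smul_eq_zero] at this
  rcases this with h | h
  · exact hf h
  · exact one_ne_zero h

lemma fg_sub {k E : Type*} [Field k] [Field E] [Algebra k E] [Algebra.EssFiniteType k E]
    (K : IntermediateField k E) : ∃ F : Set E, F.Finite ∧ F ⊆ K ∧ K ≤ IntermediateField.adjoin k F := by
  have : IsNoetherianRing (E ⊗[k] E) := Algebra.EssFiniteType.isNoetherianRing E _
  let f : E → E ⊗[k] E := fun l => l ⊗ₜ 1 - 1 ⊗ₜ l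
  obtain ⟨s, hs, hs'⟩ := (Submodule.fg_span_iff_fg_span_finset_subset (R := E ⊗[k] E) (f '' K)).1
    (IsNoetherian.noetherian _)
  obtain ⟨F, hFK, hFfin, hF⟩ := (Set.exists_subset_image_finite_and (f := f) (s := (K : Set E)) (p := fun t => t = (s : Set (E ⊗[k] E)))).1
    ⟨s, hs, s.finite_toSet, rfl⟩
  refine ⟨F, ‹_›, ‹_›, ?_⟩
  intro x hx
  let L := IntermediateField.adjoin k F
  let Φ : E ⊗[k] E →ₐ[k] E ⊗[L] E := Algebra.TensorProduct.lift
    ((Algebra.TensorProduct.includeLeft : E →ₐ[L] E ⊗[L] E).restrictScalars k)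
    ((Algebra.TensorProduct.includeRight : E →ₐ[L] E ⊗[L] E).restrictScalars k)
    (fun _ _ => Commute.all _ _)
  have hΦ : ∀ l, Φ (f l) = l ⊗ₜ 1 - 1 ⊗ₜ l := by intro l; simp [Φ, f]
  have hle : Submodule.span (E ⊗[k] E) (f '' K) ≤ RingHom.ker Φ := by
    rw [hs', ← hF]
    refine Submodule.span_le.2 ?_
    rintro _ ⟨l, hl, rfl⟩
    change Φ (f l) = 0
    rw [hΦ, sub_eq_zero]
    have : l = algebraMap L E ⟨l, IntermediateField.subset_adjoin k F hl⟩ := rfl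
    rw [this, Algebra.algebraMap_eq_smul_one, TensorProduct.smul_tmul]
  have h0 : Φ (f x) = 0 := hle (Submodule.subset_span ⟨x, hx, rfl⟩)
  rw [hΦ, sub_eq_zero] at h0
  obtain ⟨y, rfl⟩ := tmul_eq x h0
  exact y.2

lemma two_emb {k E : Type u} [Field k] [CharZero k] [Field E] [Algebra k E] (e : E)
    (he : e ∉ Set.range (algebraMap k E)) :
    ∃ (Ω : Type u) (_ : Field Ω) (_ : Algebra k Ω) (g1 g2 : E →ₐ[k] Ω), g1 e ≠ g2 e := by
  suffices h : ∃ (A : Type u) (_ : CommRing A) (_ : IsDomain A) (_ : Algebra k A) (f2 : A →ₐ[k] E)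
    (f1 : A →ₐ[k] AlgebraicClosure E) (a : A), Function.Injective f1 ∧ Function.Injective f2 ∧
      f2 a = e ∧ f1 a ≠ algebraMap E _ e by
    obtain ⟨A, _, _, _, f2, f1, a, h1, h2, h3, h4⟩ := h
    obtain ⟨Ω, _, g1, g2, hg⟩ := compositum (f1 : A →+* AlgebraicClosure E) (f2 : A →+* E) h1 h2
    let _ : Algebra k Ω := (g2.comp (algebraMap k E)).toAlgebra
    refine ⟨Ω, inferInstance, inferInstance, { g1.comp (algebraMap E (AlgebraicClosure E)) with
      commutes' := ?_ }, {g2 with commutes' := fun _ => rfl}, ?_⟩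
    · intro r
      have := hg (algebraMap k A r)
      simp only [RingHom.coe_coe, AlgHom.commutes] at this
      change g1 (algebraMap E _ (algebraMap k E r)) = g2 (algebraMap k E r)
      rw [← this, ← IsScalarTower.algebraMap_apply]
    · change g1 (algebraMap E _ e) ≠ g2 e
      have := hg a
      simp only [RingHom.coe_coe, h3] at this
      rw [← this]
      exact fun h => h4 (g1.injective h).symm
  by_cases hal : IsAlgebraic k e
  · have hint := hal.isIntegral
    have hirr := minpoly.irreducible hint
    have hsep : (minpoly k e).Separable := hirr.separable
    have hdeg : 1 < (minpoly k e).natDegree := by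
      by_contra h
      have h1 := minpoly.natDegree_pos hint
      have h2 : (minpoly k e).natDegree = 1 := by omega
      refine he (minpoly.mem_range_of_degree_eq_one k e ?_)
      rw [Polynomial.degree_eq_natDegree (minpoly.ne_zero hint), h2]; rfl
    have hcard := Polynomial.card_rootSet_eq_natDegree (K := AlgebraicClosure E) hsep
      (IsAlgClosed.splits _)
    rw [← hcard, Fintype.one_lt_card_iff_nontrivial] at hdeg
    obtain ⟨⟨r, hr⟩, hre⟩ := exists_ne (⟨algebraMap E (AlgebraicClosure E) e, by
      rw [Polynomial.mem_rootSet]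
      exact ⟨minpoly.ne_zero hint, by rw [Polynomial.aeval_algebraMap_apply, minpoly.aeval, map_zero]⟩⟩ : (minpoly k e).rootSet (AlgebraicClosure E))
    have : Fact (Irreducible (minpoly k e)) := ⟨hirr⟩
    refine ⟨AdjoinRoot (minpoly k e), inferInstance, inferInstance, inferInstance,
      AdjoinRoot.liftAlgHom _ (Algebra.ofId k E) e (minpoly.aeval k e),
      AdjoinRoot.liftAlgHom _ (Algebra.ofId k _) r (Polynomial.mem_rootSet.1 hr).2,
      AdjoinRoot.root _, RingHom.injective _, RingHom.injective _, AdjoinRoot.liftAlgHom_root .., ?_⟩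
    intro h
    exact hre (Subtype.ext ((AdjoinRoot.liftAlgHom_root ..).symm.trans h))
  · have ht : Transcendental k e := hal
    have ht1 : Transcendental k (e + 1) := by
      intro h
      have := h.sub (isAlgebraic_one (R := k) (A := E))
      rw [add_sub_cancel_right] at this
      exact ht this
    have ht2 : Transcendental k (algebraMap E (AlgebraicClosure E) (e + 1)) :=
      (transcendental_algebraMap_iff (FaithfulSMul.algebraMap_injective _ _)).2 ht1
    refine ⟨Polynomial k, inferInstance, inferInstance, inferInstance,
      Polynomial.aeval e, Polynomial.aeval (algebraMap E (AlgebraicClosure E) (e + 1)), Polynomial.X,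
      transcendental_iff_injective.1 ht2, transcendental_iff_injective.1 ht, by simp, ?_⟩
    simp

lemma avoid {k E : Type u} [Field k] [CharZero k] [Field E] [Algebra k E] (e : E)
    (he : e ∉ Set.range (algebraMap k E)) :
    ∃ p ∈ minimalPrimes (E ⊗[k] E), e ⊗ₜ[k] (1 : E) - 1 ⊗ₜ e ∉ p := by
  obtain ⟨Ω, _, _, g1, g2, hg⟩ := two_emb e he
  let h : E ⊗[k] E →ₐ[k] Ω := Algebra.TensorProduct.lift g1 g2 (fun _ _ => Commute.all _ _)
  have : (RingHom.ker h).IsPrime := RingHom.ker_isPrime _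
  obtain ⟨p, hp, hle⟩ := Ideal.exists_minimalPrimes_le (I := ⊥) (J := RingHom.ker h) bot_le
  refine ⟨p, hp, fun hf => hg ?_⟩
  have := hle hf
  rw [RingHom.mem_ker] at this
  simpa [h, sub_eq_zero] using this
end SNPV

namespace SNPV
open TensorProduct

lemma minprime_pow {R : Type*} [CommRing R] {p : Ideal R} (hp : p ∈ minimalPrimes R) {x : R} (hx : x ∈ p) :
    ∃ n : ℕ, ∃ y ∉ p, x ^ n * y = 0 := by
  have hpp : p.IsPrime := hp.1.1
  by_contra! h
  let S : Submonoid R := Submonoid.powers x ⊔ p.primeCompl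
  have hd : Disjoint ((⊥ : Ideal R) : Set R) (S : Set R) := by
    rw [Set.disjoint_left]
    rintro a ha hS
    obtain ⟨u, ⟨n, rfl⟩, y, hy, rfl⟩ := Submonoid.mem_sup.1 hS
    exact h n y hy ha
  obtain ⟨q, hq, -, hqS⟩ := Ideal.exists_le_prime_disjoint ⊥ S hd
  have hqp : q ≤ p := by
    intro a ha
    by_contra hap
    exact Set.disjoint_left.1 hqS ha ((le_sup_right : p.primeCompl ≤ S) hap)
  have := hp.2 ⟨hq, bot_le⟩ hqp hx
  exact Set.disjoint_left.1 hqS this ((le_sup_left : Submonoid.powers x ≤ S) (Submonoid.mem_powers x))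

lemma minprime_diff {R : Type*} [CommRing R] [Algebra ℚ R] (d : Derivation ℤ R R) {p : Ideal R}
    (hp : p ∈ minimalPrimes R) {x : R} (hx : x ∈ p) : d x ∈ p := by
  have hpp : p.IsPrime := hp.1.1
  classical
  have H := minprime_pow hp hx
  obtain ⟨y, hy, hxy⟩ := Nat.find_spec H
  have hn : Nat.find H ≠ 0 := by
    intro h
    rw [h, pow_zero, one_mul] at hxy
    exact hy (hxy ▸ p.zero_mem)
  obtain ⟨m, hm⟩ := Nat.exists_eq_succ_of_ne_zero hn
  rw [hm] at hxy
  have hlt : m < Nat.find H := by omega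
  have h1 := congrArg (fun z => d z * y) hxy
  simp only [Derivation.leibniz, Derivation.leibniz_pow, map_zero, smul_eq_mul, zero_mul] at h1
  by_contra hdx
  refine Nat.find_min H hlt ⟨d x * (y * y), ?_, ?_⟩
  · intro h
    rcases hpp.mem_or_mem h with h | h
    · exact hdx h
    · rcases hpp.mem_or_mem h with h | h <;> exact hy h
  · have h2 : ((m + 1 : ℕ) : R) * (x ^ m * (d x * (y * y))) = 0 := by
      have h3 : x ^ (m+1) * d y * y = 0 := by rw [mul_right_comm]; rw [hxy, zero_mul]
      simp only [Nat.succ_eq_add_one, add_tsub_cancel_right, nsmul_eq_mul] at h1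
      linear_combination h1 - h3
    have h4 : ((m + 1 : ℕ) : R) = algebraMap ℚ R (m+1 : ℕ) := by simp
    have h5 : algebraMap ℚ R ((m+1 : ℕ) : ℚ)⁻¹ * algebraMap ℚ R ((m+1 : ℕ) : ℚ) = 1 := by
      rw [← map_mul, inv_mul_cancel₀ (by positivity), map_one]
    rw [h4] at h2
    have := congrArg (fun z => algebraMap ℚ R ((m+1 : ℕ) : ℚ)⁻¹ * z) h2
    simpa only [← mul_assoc, h5, one_mul, mul_zero] using this

/-- extension of derivations to fraction fields -/
lemma frac_deriv {B M : Type*} [CommRing B] [IsDomain B] [Field M] [Algebra B M] [IsFractionRing B M]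
    (d : B → M) (hadd : ∀ a b, d (a + b) = d a + d b)
    (hmul : ∀ a b, d (a * b) = d a * algebraMap B M b + algebraMap B M a * d b) :
    ∃ δδ : M → M, (∀ a b, δδ (a + b) = δδ a + δδ b) ∧ (∀ a b, δδ (a * b) = δδ a * b + a * δδ b) ∧
      ∀ b, δδ (algebraMap B M b) = d b := by
  have h0 : d 0 = 0 := by have := hadd 0 0; simpa using this
  have h1 : d 1 = 0 := by have := hmul 1 1; simpa using this
  let f : B →+* TrivSqZeroExt M M :=
    { toFun := fun b => TrivSqZeroExt.inl (algebraMap B M b) + TrivSqZeroExt.inr (d b)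
      map_zero' := by ext <;> simp [h0]
      map_one' := by ext <;> simp [h1]
      map_add' := fun a b => by ext <;> simp [hadd]
      map_mul' := fun a b => by ext <;> simp [hmul]; ring }
  have hf : ∀ y : nonZeroDivisors B, IsUnit (f y) := by
    intro y
    rw [TrivSqZeroExt.isUnit_iff_isUnit_fst]
    simpa [f] using IsLocalization.map_units M y
  let g : M →+* TrivSqZeroExt M M := IsLocalization.lift hf
  have hg : ∀ b, g (algebraMap B M b) = f b := fun b => IsLocalization.lift_eq hf b
  have hfst : ∀ m, (g m).fst = m := by
    intro m
    have : (TrivSqZeroExt.fstHom M M M : TrivSqZeroExt M M →+* M).comp g = RingHom.id M := by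
      apply IsLocalization.ringHom_ext (nonZeroDivisors B)
      ext b
      simp [hg, f]
    exact congrArg (fun φ : M →+* M => φ m) this
  refine ⟨fun m => (g m).snd, ?_, ?_, ?_⟩
  · intro a b; simp
  · intro a b; simp [hfst]; ring
  · intro b; simp [hg, f]

section tens
variable {k E : Type u} [Field k] [Field E] [Algebra k E] (D : Derivation ℤ E E) (dk : k → k)
  (hdk : ∀ x, D (algebraMap k E x) = algebraMap k E (dk x))

include hdk in
lemma tens_smul (r : k) (a : E) : D (r • a) = dk r • a + r • D a := by
  rw [Algebra.smul_def, Derivation.leibniz, hdk, smul_eq_mul, smul_eq_mul, Algebra.smul_def,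
    Algebra.smul_def]; ring

lemma tens_deriv (hdk : ∀ x, D (algebraMap k E x) = algebraMap k E (dk x)) :
    ∃ d : Derivation ℤ (E ⊗[k] E) (E ⊗[k] E), ∀ a b, d (a ⊗ₜ b) = D a ⊗ₜ b + a ⊗ₜ D b := by
  let f : E →+ E →+ E ⊗[k] E := AddMonoidHom.mk' (fun a => AddMonoidHom.mk'
    (fun b => D a ⊗ₜ b + a ⊗ₜ D b) (by intro b c; simp only [map_add, tmul_add]; abel))
    (by intro a b; ext c; simp only [AddMonoidHom.mk'_apply, AddMonoidHom.add_apply, map_add, add_tmul]; abel)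
  let δ : E ⊗[k] E →+ E ⊗[k] E := TensorProduct.liftAddHom f (by
    intro r a b
    simp only [f, AddMonoidHom.mk'_apply, tens_smul D dk hdk, add_tmul, tmul_add, smul_tmul]
    abel)
  have hδ : ∀ a b, δ (a ⊗ₜ b) = D a ⊗ₜ b + a ⊗ₜ D b := fun a b => rfl
  refine ⟨Derivation.mk' δ.toIntLinearMap ?_, hδ⟩
  intro x y
  change δ (x * y) = x * δ y + y * δ x
  induction x using TensorProduct.induction_on with
  | zero => simp
  | add x1 x2 h1 h2 => rw [add_mul, map_add, h1, h2, map_add]; ring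
  | tmul a b =>
    induction y using TensorProduct.induction_on with
    | zero => simp
    | add x1 x2 h1 h2 => rw [mul_add, map_add, h1, h2, map_add]; ring
    | tmul a' b' =>
      simp only [Algebra.TensorProduct.tmul_mul_tmul, hδ, mul_add, Derivation.leibniz, smul_eq_mul, add_tmul, tmul_add]
      rw [mul_comm b b', mul_comm a a']
      abel

lemma exists_M [CharZero k] (hdk : ∀ x, D (algebraMap k E x) = algebraMap k E (dk x))
    (p : Ideal (E ⊗[k] E)) (hp : p ∈ minimalPrimes (E ⊗[k] E)) :
    ∃ (M : DFld.{u}) (ι σ : E →+* M.carrier), (∀ x, ι (D x) = M.deriv (ι x)) ∧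
      (∀ x, σ (D x) = M.deriv (σ x)) ∧ (∀ x : k, σ (algebraMap k E x) = ι (algebraMap k E x)) ∧
      ∃ q : E ⊗[k] E →+* M.carrier, RingHom.ker q = p ∧ (∀ a b, q (a ⊗ₜ b) = ι a * σ b) := by
  have hpp : p.IsPrime := hp.1.1
  obtain ⟨d, hd⟩ := tens_deriv D dk hdk
  let B := (E ⊗[k] E) ⧸ p
  let _ : Algebra ℚ k := DivisionRing.toRatAlgebra
  let _ : Algebra ℚ (E ⊗[k] E) := ((algebraMap k (E ⊗[k] E)).comp (algebraMap ℚ k)).toAlgebra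
  let M := FractionRing B
  let mk := Ideal.Quotient.mk p
  have hmk : Function.Surjective mk := Ideal.Quotient.mk_surjective
  let dB : B → B := fun b => mk (d (Function.surjInv hmk b))
  have hdB : ∀ x, dB (mk x) = mk (d x) := by
    intro x
    refine Ideal.Quotient.eq.2 ?_
    rw [← map_sub]
    exact minprime_diff d hp (Ideal.Quotient.eq.1 (Function.surjInv_eq hmk (mk x)))
  obtain ⟨δδ, h1, h2, h3⟩ := frac_deriv (B := B) (M := M) (fun b => algebraMap B M (dB b))
    (by
      intro a b
      obtain ⟨a, rfl⟩ := hmk a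
      obtain ⟨b, rfl⟩ := hmk b
      have h : dB (mk a + mk b) = dB (mk a) + dB (mk b) := by
        rw [← map_add mk, hdB, hdB, hdB, map_add, map_add]
      rw [h, map_add])
    (by
      intro a b
      obtain ⟨a, rfl⟩ := hmk a
      obtain ⟨b, rfl⟩ := hmk b
      have h : dB (mk a * mk b) = dB (mk a) * mk b + mk a * dB (mk b) := by
        rw [← map_mul mk, hdB, hdB, hdB, Derivation.leibniz, map_add, smul_eq_mul, smul_eq_mul, map_mul, map_mul]; ring
      rw [h, map_add, map_mul, map_mul])
  let q : E ⊗[k] E →+* M := (algebraMap B M).comp mk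
  have hq : ∀ x, δδ (q x) = q (d x) := by
    intro x
    change δδ (algebraMap B M (mk x)) = algebraMap B M (mk (d x))
    rw [h3, hdB]
  have : CharZero M := charZero_of_injective_ringHom ((q.comp (algebraMap k (E ⊗[k] E))).injective)
  let ι : E →+* M := q.comp (Algebra.TensorProduct.includeLeftRingHom)
  let σ : E →+* M := q.comp (Algebra.TensorProduct.includeRight : E →ₐ[k] E ⊗[k] E).toRingHom
  refine ⟨⟨M, δδ, h1, h2⟩, ι, σ, ?_, ?_, ?_, q, ?_, ?_⟩
  · intro x
    change q (D x ⊗ₜ 1) = δδ (q (x ⊗ₜ 1))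
    rw [hq, hd]; simp
  · intro x
    change q (1 ⊗ₜ D x) = δδ (q (1 ⊗ₜ x))
    rw [hq, hd]; simp
  · intro x
    change q (1 ⊗ₜ _) = (q (_ ⊗ₜ 1))
    rw [Algebra.algebraMap_eq_smul_one, smul_tmul]
  · ext x
    rw [RingHom.mem_ker]
    change algebraMap B M (mk x) = 0 ↔ _
    rw [map_eq_zero_iff _ (IsFractionRing.injective B M)]
    exact Ideal.Quotient.eq_zero_iff_mem
  · intro a b
    change q _ = q (a ⊗ₜ 1) * q (1 ⊗ₜ b)
    rw [← map_mul]; simp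
end tens
end SNPV

namespace SNPV
open TensorProduct

lemma indep_const {F N M J : Type*} [Field F] [Field N] [Field M] [Algebra F N] [Algebra F M] [Algebra N M]
    [IsScalarTower F N M] (DM : Derivation ℤ M M) (δ : N → N)
    (hδ : ∀ n, DM (algebraMap N M n) = algebraMap N M (δ n))
    (hF : ∀ n, δ n = 0 → n ∈ Set.range (algebraMap F N)) (c : J → M) (hc : ∀ j, DM (c j) = 0)
    (hli : LinearIndependent F c) : LinearIndependent N c := by
  classical
  rw [linearIndependent_iff]
  have hδ0 : δ 0 = 0 := by
    apply (algebraMap N M).injective; rw [← hδ]; simp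
  have key : ∀ (n : ℕ) (l : J →₀ N), l.support.card ≤ n → Finsupp.linearCombination N c l = 0 → l = 0 := by
    intro n
    induction n with
    | zero => intro l hl _; simpa using hl
    | succ n ih =>
      intro l hl h0
      by_contra hne
      obtain ⟨j0, hj0⟩ := Finsupp.support_nonempty_iff.2 hne
      have hj0' : l j0 ≠ 0 := Finsupp.mem_support_iff.1 hj0
      let l1 := (l j0)⁻¹ • l
      have hl1 : l1 ≠ 0 := smul_ne_zero (inv_ne_zero hj0') hne
      have h1 : Finsupp.linearCombination N c l1 = 0 := by rw [map_smul, h0, smul_zero]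
      have hs1 : l1.support ⊆ l.support := Finsupp.support_smul
      have h1j : l1 j0 = 1 := by simp [l1, hj0']
      let l2 : J →₀ N := l1.mapRange δ hδ0
      have h2 : Finsupp.linearCombination N c l2 = 0 := by
        have := congrArg DM h1
        rw [Finsupp.linearCombination_apply, Finsupp.sum, map_sum, map_zero] at this
        rw [Finsupp.linearCombination_apply, Finsupp.sum_of_support_subset l2 (s := l1.support) Finsupp.support_mapRange _ (by simp)]
        rw [← this]
        refine Finset.sum_congr rfl fun j _ => ?_
        rw [Algebra.smul_def, Algebra.smul_def, Derivation.leibniz, hc, smul_zero, zero_add, hδ, smul_eq_mul, mul_comm]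
        rfl
      have hδ1 : δ 1 = 0 := by
        apply (algebraMap N M).injective; rw [← hδ]; simp
      have hs2 : l2.support ⊆ l.support.erase j0 := by
        intro j hj
        refine Finset.mem_erase.2 ⟨?_, hs1 (Finsupp.support_mapRange hj)⟩
        rintro rfl
        rw [Finsupp.mem_support_iff] at hj
        exact hj (by simp [l2, h1j, hδ1])
      have h20 := ih l2 (by
        have := Finset.card_le_card hs2
        rw [Finset.card_erase_of_mem hj0] at this
        omega) h2
      have hall : ∀ j, ∃ a, algebraMap F N a = l1 j := by
        intro j
        exact hF _ (by have := DFunLike.congr_fun h20 j; simpa [l2] using this)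
      choose a ha using hall
      have ha0 : ∀ j, l1 j = 0 → a j = 0 := by
        intro j hj; apply (algebraMap F N).injective; rw [ha, hj, map_zero]
      let l3 : J →₀ F := Finsupp.onFinset l1.support a (by
        intro j hj; rw [Finsupp.mem_support_iff]; exact fun h => hj (ha0 j h))
      have h3 : Finsupp.linearCombination F c l3 = 0 := by
        rw [← h1, Finsupp.linearCombination_apply, Finsupp.linearCombination_apply,
          Finsupp.sum_of_support_subset l3 (s := l1.support) Finsupp.support_onFinset_subset _ (by simp)]
        refine Finset.sum_congr rfl fun j _ => ?_
        rw [← ha]; exact (algebraMap_smul N (a j) (c j)).symm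
      have h30 := (linearIndependent_iff.1 hli) l3 h3
      apply hl1
      ext j
      rw [← ha]
      have : l3 j = 0 := by rw [h30]; rfl
      change a j = 0 at this
      rw [this]; simp
  exact fun l hl => key _ l le_rfl hl

section mu
variable {C E M A : Type*} [Field C] [Field E] [Field M] [Algebra C E] [Algebra C M] [CommRing A] [Algebra C A]

noncomputable def mu (i : E →ₐ[C] M) (v : A →ₐ[C] M) : E ⊗[C] A →ₐ[C] M :=
  Algebra.TensorProduct.lift i v (fun _ _ => Commute.all _ _)

@[simp] lemma mu_tmul (i : E →ₐ[C] M) (v : A →ₐ[C] M) (e : E) (a : A) : mu i v (e ⊗ₜ a) = i e * v a := by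
  simp [mu]

lemma mu_inj (D : Derivation ℤ E E) (DM : Derivation ℤ M M)
    (hconst : ∀ x, D x = 0 → ∃ c : C, algebraMap C E c = x) (i : E →ₐ[C] M)
    (hi : ∀ x, i (D x) = DM (i x)) (v : A →ₐ[C] M) (hv : Function.Injective v) (hDv : ∀ a, DM (v a) = 0) :
    Function.Injective (mu i v) := by
  rw [injective_iff_map_eq_zero]
  intro x hx
  let b := Module.Free.chooseBasis C A
  let _ : Algebra E M := i.toRingHom.toAlgebra
  have hal : ∀ e : E, algebraMap E M e = i e := fun _ => rfl
  have : IsScalarTower C E M := IsScalarTower.of_algebraMap_eq fun c => by rw [hal, AlgHom.commutes]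
  have hli : LinearIndependent C (v ∘ b) := by
    have := b.linearIndependent.map' v.toLinearMap (LinearMap.ker_eq_bot.2 hv)
    exact this
  have hli2 := indep_const (N := E) DM D (fun n => by rw [hal, hal, hi]) hconst (v ∘ b) (fun j => hDv _) hli
  let φ := TensorProduct.equivFinsuppOfBasisRight (M := E) b
  obtain ⟨l, rfl⟩ := φ.symm.surjective x
  have : l = 0 := by
    refine (linearIndependent_iff.1 hli2) l ?_
    rw [← hx, TensorProduct.equivFinsuppOfBasisRight_symm_apply, Finsupp.linearCombination_apply, Finsupp.sum, Finsupp.sum, map_sum]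
    refine Finset.sum_congr rfl fun j _ => ?_
    rw [mu_tmul, Algebra.smul_def, hal]; rfl
  rw [this, map_zero]

lemma deriv_inv_zero (DM : Derivation ℤ M M) {x : M} (hx : DM x = 0) : DM x⁻¹ = 0 := by
  by_cases h : x = 0
  · simp [h]
  · have h1 : DM (x * x⁻¹) = 0 := by rw [mul_inv_cancel₀ h, DM.map_one_eq_zero]
    rw [Derivation.leibniz, hx, smul_zero, add_zero, smul_eq_mul] at h1
    exact (mul_eq_zero.mp h1).resolve_left h

/-- constants in `N` -/
def cst (DM : Derivation ℤ M M) (hC : ∀ c : C, DM (algebraMap C M c) = 0) (N : Subfield M)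
    (hN : ∀ c : C, algebraMap C M c ∈ N) : IntermediateField C M where
  carrier := {x | x ∈ N ∧ DM x = 0}
  zero_mem' := ⟨N.zero_mem, map_zero DM⟩
  one_mem' := ⟨N.one_mem, DM.map_one_eq_zero⟩
  add_mem' := by
    rintro a b ⟨hak, ha0⟩ ⟨hbk, hb0⟩
    exact ⟨N.add_mem hak hbk, by rw [map_add, ha0, hb0, add_zero]⟩
  mul_mem' := by
    rintro a b ⟨hak, ha0⟩ ⟨hbk, hb0⟩
    exact ⟨N.mul_mem hak hbk, by
      rw [Derivation.leibniz, ha0, hb0, smul_zero, smul_zero, add_zero]⟩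
  inv_mem' := by
    rintro x ⟨hxk, hx0⟩
    exact ⟨N.inv_mem hxk, deriv_inv_zero DM hx0⟩
  algebraMap_mem' := fun c => ⟨hN c, hC c⟩

lemma mem_cst {DM : Derivation ℤ M M} {hC : ∀ c : C, DM (algebraMap C M c) = 0} {N : Subfield M}
    {hN : ∀ c : C, algebraMap C M c ∈ N} {x : M} : x ∈ cst DM hC N hN ↔ x ∈ N ∧ DM x = 0 := Iff.rfl

lemma kolchin (D : Derivation ℤ E E) (DM : Derivation ℤ M M) (hC : ∀ c : C, DM (algebraMap C M c) = 0)
    (i : E →ₐ[C] M) (hi : ∀ x, i (D x) = DM (i x))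
    (N : Subfield M) (hN : ∀ c : C, algebraMap C M c ∈ N) (hND : ∀ n ∈ N, DM n ∈ N)
    (hiN : ∀ e, i e ∈ N) (f : M) (hfN : f ∈ N)
    (hf : f ∈ Subfield.closure (Set.range i ∪ {m | DM m = 0})) :
    ∃ α β : E ⊗[C] (cst DM hC N hN), mu i (cst DM hC N hN).val β ≠ 0 ∧
      mu i (cst DM hC N hN).val β * f = mu i (cst DM hC N hN).val α := by
  set F := cst DM hC N hN with hF
  let CM := cst DM hC ⊤ (fun _ => trivial)
  obtain ⟨α, β, hβ, hαβ⟩ : ∃ α β : E ⊗[C] CM, mu i CM.val β ≠ 0 ∧ mu i CM.val β * f = mu i CM.val α := by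
    have hle : Subring.closure (Set.range i ∪ {m | DM m = 0}) ≤ (mu i CM.val).toRingHom.range := by
      rw [Subring.closure_le]
      rintro m (⟨e, rfl⟩ | hm)
      · exact ⟨e ⊗ₜ 1, by change mu i CM.val _ = _; simp⟩
      · exact ⟨1 ⊗ₜ ⟨m, trivial, hm⟩, by change mu i CM.val _ = _; simp⟩
    obtain ⟨y, hy, z, hz, rfl⟩ := Subfield.mem_closure_iff.1 hf
    obtain ⟨α, rfl⟩ := hle hy
    obtain ⟨β, rfl⟩ := hle hz
    by_cases h : mu i CM.val β = 0
    · refine ⟨0, 1, by simp, ?_⟩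
      change _ * (mu i CM.val α / mu i CM.val β) = _
      simp [h]
    · refine ⟨α, β, h, ?_⟩
      change _ * (mu i CM.val α / mu i CM.val β) = _
      field_simp
  let cF : Submodule F M :=
    { carrier := {m | DM m = 0}
      zero_mem' := map_zero DM
      add_mem' := by intro a b ha hb; change DM _ = 0; rw [map_add, ha, hb, add_zero]
      smul_mem' := by
        intro c x hx
        change DM ((c : M) * x) = 0
        rw [Derivation.leibniz, hx, c.2.2, smul_zero, smul_zero, add_zero] }
  let b := Module.Free.chooseBasis F cF
  let lam (j) : CM →ₗ[C] F :=
    { toFun := fun c => b.repr ⟨c, c.2.2⟩ j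
      map_add' := by
        intro x y
        rw [← Finsupp.add_apply, ← map_add]; rfl
      map_smul' := by
        intro r x
        have h : (⟨((r • x : CM) : M), (r • x).2.2⟩ : cF) = (algebraMap C F r) • ⟨x, x.2.2⟩ :=
          Subtype.ext (Algebra.smul_def r (x : M))
        rw [h, map_smul, RingHom.id_apply, Algebra.smul_def]; rfl }
  let _ : Algebra F N := ((Subfield.inclusion (fun x hx => hx.1 : F.toSubfield ≤ N))).toAlgebra
  have hst : IsScalarTower F N M := IsScalarTower.of_algebraMap_eq fun c => rfl
  have hli : LinearIndependent N (fun j => (b j : M)) := by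
    refine indep_const (F := F) DM (fun n : N => (⟨DM n, hND n n.2⟩ : N)) (fun n => rfl) ?_ _ (fun j => (b j).2) ?_
    · rintro ⟨n, hn⟩ h
      exact ⟨⟨n, hn, congrArg Subtype.val h⟩, rfl⟩
    · exact b.linearIndependent.map' cF.subtype (Submodule.ker_subtype cF)
  have key : ∀ x : E ⊗[C] CM, ∃ g : _ →₀ N, (∀ j, (g j : M) = mu i F.val (LinearMap.lTensor E (lam j) x)) ∧
      mu i CM.val x = Finsupp.linearCombination N (fun j => (b j : M)) g := by
    intro x
    induction x using TensorProduct.induction_on with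
    | zero => exact ⟨0, by simp, by simp⟩
    | add x y hx hy =>
      obtain ⟨g, h1, h2⟩ := hx
      obtain ⟨g', h1', h2'⟩ := hy
      refine ⟨g + g', fun j => ?_, ?_⟩
      · rw [Finsupp.add_apply, map_add, map_add, ← h1, ← h1']; rfl
      · rw [map_add, map_add, h2, h2']
    | tmul e c =>
      let g : _ →₀ N := (b.repr ⟨c, c.2.2⟩).mapRange (fun f => (⟨i e, hiN e⟩ : N) * algebraMap F N f) (by simp)
      refine ⟨g, fun j => ?_, ?_⟩
      · rw [LinearMap.lTensor_tmul, mu_tmul]; rfl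
      · have h := congrArg Subtype.val (b.linearCombination_repr ⟨c, c.2.2⟩)
        rw [Finsupp.linearCombination_apply, Finsupp.sum] at h
        rw [mu_tmul, Finsupp.linearCombination_apply, Finsupp.sum_of_support_subset g Finsupp.support_mapRange _ (by simp)]
        change _ * (c : M) = _
        refine (congrArg (fun z => i e * z) h.symm).trans ?_
        rw [AddSubmonoidClass.coe_finset_sum, Finset.mul_sum]
        refine Finset.sum_congr rfl fun j _ => ?_
        change _ * (((b.repr ⟨c, c.2.2⟩ j : F) : M) * (b j : M)) = (i e * ((b.repr ⟨c, c.2.2⟩ j : F) : M)) * (b j : M)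
        ring
  obtain ⟨gα, h1, h2⟩ := key α
  obtain ⟨gβ, h3, h4⟩ := key β
  have heq : (⟨f, hfN⟩ : N) • gβ = gα := by
    have : Function.Injective (Finsupp.linearCombination N (fun j => (b j : M))) := hli
    apply this
    rw [map_smul, ← h4, ← h2, ← hαβ, mul_comm]; rfl
  have hne : gβ ≠ 0 := by
    rintro h
    rw [h, map_zero] at h4
    exact hβ h4
  obtain ⟨j, hj⟩ := Finsupp.ne_iff.1 hne
  refine ⟨LinearMap.lTensor E (lam j) α, LinearMap.lTensor E (lam j) β, ?_, ?_⟩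
  · rw [← h3]; exact fun h => hj (Subtype.ext h)
  · rw [← h3, ← h1, ← heq, mul_comm]; rfl
end mu
end SNPV

namespace SNPV
open TensorProduct

lemma phi_inj {k E : Type*} [Field k] [Field E] [Algebra k E] [Algebra.EssFiniteType k E] (B : Subalgebra k E)
    (φ : B →ₐ[k] E) (h : IntermediateField.adjoin k (Set.range φ) = ⊤) : Function.Injective φ := by
  have : Algebra.IsAlgebraic (Algebra.adjoin k (Set.range φ)) E := by
    rw [← IntermediateField.isAlgebraic_adjoin_iff_top, h, Algebra.isAlgebraic_iff_isIntegral]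
    exact Algebra.isIntegral_of_surjective IntermediateField.topEquiv.surjective
  have ⟨t, hts, ht⟩ := exists_isTranscendenceBasis_subset (R := k) (Set.range φ)
  choose u hu using fun j : t => hts j.2
  have hu' : (φ ∘ u) = ((↑) : t → E) := funext hu
  have hind : AlgebraicIndependent k u := AlgebraicIndependent.of_comp φ (by rw [hu']; exact ht.1)
  have hle := trdeg_le_of_injective (R := k) B.val Subtype.val_injective
  have hb : IsTranscendenceBasis k u := hind.isTranscendenceBasis_of_trdeg_le
    (hle.trans_lt (trdeg_lt_aleph0 k E)) (hle.trans_eq ht.cardinalMk_eq_trdeg.symm)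
  have halg := hb.isAlgebraic
  rw [injective_iff_map_eq_zero]
  intro b hb0
  by_contra hne
  obtain ⟨⟨r, hr⟩, hr0, hdvd⟩ := (halg.1 b).exists_nonzero_dvd (mem_nonZeroDivisors_of_ne_zero hne)
  have h1 : φ r = 0 := by
    have := map_dvd φ hdvd
    rw [hb0, zero_dvd_iff] at this
    exact this
  rw [Algebra.adjoin_range_eq_range_aeval] at hr
  obtain ⟨P, rfl⟩ := hr
  apply hr0
  have h2 : MvPolynomial.aeval ((↑) : t → E) P = 0 := by
    rw [← hu']
    rw [← h1]
    change _ = φ (MvPolynomial.aeval u P)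
    exact (MvPolynomial.comp_aeval_apply u φ P).symm
  have : P = 0 := (injective_iff_map_eq_zero _).1 ht.1 P h2
  apply Subtype.ext
  simp [this]

section core
variable {C E M : Type*} [Field C] [Field E] [Field M] [Algebra C E] [Algebra C M]

/-- all constants of `M` -/
abbrev cM (DM : Derivation ℤ M M) (hC : ∀ c : C, DM (algebraMap C M c) = 0) : IntermediateField C M :=
  cst DM hC ⊤ (fun _ => trivial)

lemma mu_inc {Ω : Type*} [CommRing Ω] [Algebra C Ω] (i : E →ₐ[C] M) (v : Ω →ₐ[C] M) (A : Subalgebra C Ω)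
    (x : E ⊗[C] A) : mu i v (inc E A x) = mu i (v.comp A.val) x := by
  induction x using TensorProduct.induction_on with
  | zero => simp
  | add x y hx hy => rw [map_add, map_add, map_add, hx, hy]
  | tmul e a => simp

set_option maxHeartbeats 1000000 in
lemma core (D : Derivation ℤ E E) (DM : Derivation ℤ M M)
    (hDC : ∀ c : C, D (algebraMap C E c) = 0)
    (hconst : ∀ x, D x = 0 → ∃ c : C, algebraMap C E c = x)
    (hC : ∀ c : C, DM (algebraMap C M c) = 0)
    (i σ : E →ₐ[C] M) (hi : ∀ x, i (D x) = DM (i x)) (hσ : ∀ x, σ (D x) = DM (σ x))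
    (k : Subfield E) (hCk : ∀ c : C, algebraMap C E c ∈ k) (hik : ∀ x ∈ k, σ x = i x)
    (s : Finset E) (hs : Subfield.closure ((k : Set E) ∪ s) = ⊤)
    (SN1 : ∀ e, σ e ∈ Subfield.closure (Set.range i ∪ {m | DM m = 0}))
    (SN2 : ∀ e, i e ∈ Subfield.closure (Set.range σ ∪ {m | DM m = 0})) :
    ∃ (S H : Set (E ⊗[C] (cM DM hC))) (T : Set (cM DM hC)), S.Finite ∧ H.Finite ∧ T.Finite ∧ 0 ∉ H ∧
    ∀ (A : Subalgebra C (cM DM hC)) (t : A →ₐ[C] C), T ⊆ A →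
      (∀ x ∈ S, ∃ x', inc E A x' = x) → (∀ x ∈ H, ∃ x', inc E A x' = x ∧ pis t x' ≠ 0) →
      ∃ g : E →ₐ[C] E, (∀ x, g (D x) = D (g x)) ∧ (∀ x ∈ k, g x = x) ∧
        ∀ (e : E) (α β : E ⊗[C] A), mu i ((cM DM hC).val.comp A.val) β * σ e = mu i ((cM DM hC).val.comp A.val) α →
          pis t β * g e = pis t α := by
  classical
  set CM := cM DM hC with hCM
  have K1 : ∀ f ∈ Subfield.closure (Set.range i ∪ {m | DM m = 0}),
      ∃ α β : E ⊗[C] CM, mu i CM.val β ≠ 0 ∧ mu i CM.val β * f = mu i CM.val α := fun f hf =>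
    kolchin D DM hC i hi ⊤ (fun _ => trivial) (fun _ _ => trivial) (fun _ => trivial) f trivial hf
  have K2 : ∀ f ∈ Subfield.closure (Set.range σ ∪ {m | DM m = 0}),
      ∃ α β : E ⊗[C] CM, mu σ CM.val β ≠ 0 ∧ mu σ CM.val β * f = mu σ CM.val α := fun f hf =>
    kolchin D DM hC σ hσ ⊤ (fun _ => trivial) (fun _ _ => trivial) (fun _ => trivial) f trivial hf
  have K3 : ∀ z : E ⊗[C] CM, mu σ CM.val z ∈ Subfield.closure (Set.range i ∪ {m | DM m = 0}) := by
    intro z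
    induction z using TensorProduct.induction_on with
    | zero => rw [map_zero]; exact zero_mem _
    | add x y hx hy => rw [map_add]; exact add_mem hx hy
    | tmul e c => rw [mu_tmul]; exact mul_mem (SN1 e) (Subfield.subset_closure (Or.inr c.2.2))
  choose α β hβ hαβ using fun e => K1 _ (SN1 e)
  choose γ δ hδ hγδ using fun e => K2 _ (SN2 e)
  choose α2 β2 hβ2 hαβ2 using fun z => K1 _ (K3 z)
  choose R hR using fun z : E ⊗[C] CM => TensorProduct.exists_finset z
  let P : Finset (E × CM) := s.biUnion (fun y => R (γ y) ∪ R (δ y))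
  let X : Finset E := s ∪ P.image Prod.fst
  let H : Finset (E ⊗[C] CM) := X.image β ∪ s.image (fun y => β2 (δ y)) ∪ s.image (fun y => α2 (δ y))
  refine ⟨X.image α, H, P.image Prod.snd,
    Finset.finite_toSet _, Finset.finite_toSet _, Finset.finite_toSet _, ?_, ?_⟩
  · intro h
    simp only [H, Finset.mem_coe, Finset.mem_union, Finset.mem_image] at h
    rcases h with (⟨x, -, hx⟩ | ⟨y, -, hy⟩) | ⟨y, -, hy⟩
    · exact hβ x (by rw [hx, map_zero])
    · exact hβ2 (δ y) (by rw [hy, map_zero])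
    · have := hαβ2 (δ y)
      rw [hy, map_zero, mul_eq_zero] at this
      rcases this with h | h
      · exact hβ2 _ h
      · exact hδ _ h
  intro A t hT hS hH
  set w : A →ₐ[C] M := CM.val.comp A.val with hw
  have hinj : Function.Injective (mu i w) := mu_inj D DM hconst i hi w
    (fun a b h => Subtype.ext (Subtype.ext h)) (fun a => (a : CM).2.2)
  have hdom : IsDomain (E ⊗[C] A) := hinj.isDomain (mu i w).toRingHom
  obtain ⟨𝓡, θ, p1, p2, p3, p4⟩ := place (mu i w).toRingHom hinj (pis t : E ⊗[C] A →ₐ[E] E).toRingHom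
  simp only [AlgHom.toRingHom_eq_coe, RingHom.coe_coe] at p1 p2 p3
  have hb1 : (pis t (1 : E ⊗[C] A) : E) ≠ 0 := by rw [map_one]; exact one_ne_zero
  have q1 : ∀ a : E ⊗[C] A, mu i w a ∈ 𝓡 := fun a => p1 _ a 1 hb1 (by rw [map_one, one_mul])
  have q2 : ∀ a : E ⊗[C] A, θ ⟨mu i w a, q1 a⟩ = pis t a := by
    intro a
    have := p3 ⟨mu i w a, q1 a⟩ a 1 (by rw [map_one, one_mul])
    rwa [map_one, one_mul] at this
  have f1 : ∀ e, ∃ h : i e ∈ 𝓡, θ ⟨i e, h⟩ = e := by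
    intro e
    have h1 : mu i w (e ⊗ₜ 1) = i e := by simp
    have h2 := q1 (e ⊗ₜ 1)
    have h3 := q2 (e ⊗ₜ 1)
    simp only [h1] at h2 h3
    exact ⟨h2, by rw [h3]; simp⟩
  have f2 : ∀ c : A, ∃ h : ((c : CM) : M) ∈ 𝓡, θ ⟨((c : CM) : M), h⟩ = algebraMap C E (t c) := by
    intro c
    have h1 : mu i w (1 ⊗ₜ c) = ((c : CM) : M) := by simp [hw]
    have h2 := q1 (1 ⊗ₜ c)
    have h3 := q2 (1 ⊗ₜ c)
    simp only [h1] at h2 h3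
    exact ⟨h2, by rw [h3]; simp⟩
  have f3 : ∀ x ∈ X, σ x ∈ 𝓡 := by
    intro x hx
    obtain ⟨a, ha⟩ := hS (α x) (Finset.mem_coe.2 (Finset.mem_image_of_mem _ hx))
    obtain ⟨b, hb, hb'⟩ := hH (β x) (Finset.mem_coe.2 (Finset.mem_union_left _ (Finset.mem_union_left _ (Finset.mem_image_of_mem _ hx))))
    refine p1 _ a b hb' ?_
    have := hαβ x
    rwa [← ha, ← hb, mu_inc, mu_inc] at this
  have f4 : ∀ x ∈ k, ∃ h : σ x ∈ 𝓡, θ ⟨σ x, h⟩ = x := by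
    intro x hx
    simp only [hik x hx]
    exact f1 x
  let B : Subalgebra k E :=
    { 𝓡.comap σ.toRingHom with
      algebraMap_mem' := fun r => (f4 r r.2).1 }
  have hB : ∀ x, x ∈ B ↔ σ x ∈ 𝓡 := fun x => Iff.rfl
  let φ : B →ₐ[k] E :=
    { toFun := fun b => θ ⟨σ b, b.2⟩
      map_zero' := by rw [← map_zero θ]; congr 1; ext; simp
      map_one' := by rw [← map_one θ]; congr 1; ext; simp
      map_add' := fun x y => by rw [← map_add θ]; congr 1; ext; simp
      map_mul' := fun x y => by rw [← map_mul θ]; congr 1; ext; simp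
      commutes' := fun r => (f4 r r.2).2 }
  have hess : Algebra.EssFiniteType k E := by
    rw [← IntermediateField.fg_top_iff]
    refine ⟨s, ?_⟩
    rw [eq_top_iff]
    intro x _
    have hx : x ∈ Subfield.closure ((k : Set E) ∪ s) := by rw [hs]; trivial
    have hle : Subfield.closure ((k : Set E) ∪ s) ≤ (IntermediateField.adjoin k (s : Set E)).toSubfield := by
      rw [Subfield.closure_le]
      rintro y (hy | hy)
      · exact (IntermediateField.adjoin k (s : Set E)).algebraMap_mem ⟨y, hy⟩
      · exact IntermediateField.subset_adjoin k _ hy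
    exact hle hx
  let E1 := IntermediateField.adjoin k (Set.range φ)
  -- tensors with entries in P
  have f5 : ∀ z : E ⊗[C] CM, R z ⊆ P → ∃ h : mu σ CM.val z ∈ 𝓡, θ ⟨mu σ CM.val z, h⟩ ∈ E1 := by
    intro z hz
    have hterm : ∀ p ∈ P, ∃ h : σ p.1 * (p.2 : M) ∈ 𝓡, θ ⟨σ p.1 * (p.2 : M), h⟩ ∈ E1 := by
      intro p hp
      have hx : σ p.1 ∈ 𝓡 := f3 _ (Finset.mem_union_right _ (Finset.mem_image_of_mem _ hp))
      obtain ⟨hc1, hc2⟩ := f2 ⟨p.2, hT (Finset.mem_coe.2 (Finset.mem_image_of_mem _ hp))⟩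
      refine ⟨𝓡.mul_mem hx hc1, ?_⟩
      have : (⟨σ p.1 * (p.2 : M), 𝓡.mul_mem hx hc1⟩ : 𝓡) = ⟨σ p.1, hx⟩ * ⟨_, hc1⟩ := rfl
      rw [this, map_mul, hc2]
      exact mul_mem (IntermediateField.subset_adjoin k _ ⟨⟨p.1, hx⟩, rfl⟩)
        (E1.algebraMap_mem ⟨_, hCk _⟩)
    have hsum : ∀ Q : Finset (E × CM), Q ⊆ P → ∃ h : ∑ p ∈ Q, σ p.1 * (p.2 : M) ∈ 𝓡,
        θ ⟨∑ p ∈ Q, σ p.1 * (p.2 : M), h⟩ ∈ E1 := by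
      intro Q
      induction Q using Finset.induction_on with
      | empty =>
        intro _
        simp only [Finset.sum_empty]
        refine ⟨𝓡.zero_mem, ?_⟩
        have : (⟨0, 𝓡.zero_mem⟩ : 𝓡) = 0 := rfl
        rw [this, map_zero]; exact zero_mem _
      | insert p Q hp ih =>
        intro hQ
        obtain ⟨h1, h2⟩ := ih (fun x hx => hQ (Finset.mem_insert_of_mem hx))
        obtain ⟨h3, h4⟩ := hterm p (hQ (Finset.mem_insert_self _ _))
        simp only [Finset.sum_insert hp]
        refine ⟨𝓡.add_mem h3 h1, ?_⟩
        have : (⟨_, 𝓡.add_mem h3 h1⟩ : 𝓡) = ⟨_, h3⟩ + ⟨_, h1⟩ := rfl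
        rw [this, map_add]
        exact add_mem h4 h2
    have hz2 : mu σ CM.val z = ∑ p ∈ R z, σ p.1 * (p.2 : M) := by
      conv_lhs => rw [hR z]
      rw [map_sum]
      refine Finset.sum_congr rfl fun p _ => ?_
      rw [mu_tmul]; rfl
    simp only [hz2]
    exact hsum _ hz
  have f6 : ∀ y ∈ s, y ∈ E1 := by
    intro y hy
    have hPγ : R (γ y) ⊆ P := fun p hp => Finset.mem_biUnion.2 ⟨y, hy, Finset.mem_union_left _ hp⟩
    have hPδ : R (δ y) ⊆ P := fun p hp => Finset.mem_biUnion.2 ⟨y, hy, Finset.mem_union_right _ hp⟩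
    obtain ⟨h1, h2⟩ := f5 _ hPγ
    obtain ⟨h3, h4⟩ := f5 _ hPδ
    obtain ⟨h5, h6⟩ := f1 y
    have e1 : θ ⟨_, h3⟩ * y = θ ⟨_, h1⟩ := by
      have h7 : θ ⟨_, h3⟩ * θ ⟨i y, h5⟩ = θ ⟨_, h1⟩ := by
        rw [← map_mul]
        exact congrArg θ (Subtype.ext (hγδ y))
      rwa [h6] at h7
    have hne : θ ⟨_, h3⟩ ≠ 0 := by
      obtain ⟨b, hb, hb'⟩ := hH (β2 (δ y)) (Finset.mem_coe.2 (Finset.mem_union_left _ (Finset.mem_union_right _ (Finset.mem_image_of_mem (fun y => β2 (δ y)) hy))))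
      obtain ⟨a, ha, ha'⟩ := hH (α2 (δ y)) (Finset.mem_coe.2 (Finset.mem_union_right _ (Finset.mem_image_of_mem (fun y => α2 (δ y)) hy)))
      have := hαβ2 (δ y)
      rw [← ha, ← hb, mu_inc, mu_inc] at this
      have := p3 ⟨_, h3⟩ a b this
      intro h0
      rw [h0, mul_zero] at this
      exact ha' this.symm
    have : y = θ ⟨_, h1⟩ / θ ⟨_, h3⟩ := by rw [← e1]; field_simp
    rw [this]
    exact div_mem h2 h4
  have hE1 : E1 = ⊤ := by
    rw [eq_top_iff]
    intro x _
    have hx : x ∈ Subfield.closure ((k : Set E) ∪ s) := by rw [hs]; trivial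
    have hle : Subfield.closure ((k : Set E) ∪ s) ≤ E1.toSubfield := by
      rw [Subfield.closure_le]
      rintro y (hy | hy)
      · exact E1.algebraMap_mem ⟨y, hy⟩
      · exact f6 y hy
    exact hle hx
  have hφ := phi_inj B φ hE1
  have hBtop : ∀ x, x ∈ B := by
    intro x
    let Bf : Subfield E :=
      { B with
        neg_mem' := fun {x} hx => by
          change σ (-x) ∈ 𝓡
          rw [map_neg]; exact 𝓡.neg_mem hx
        inv_mem' := fun x hx => by
          change σ x⁻¹ ∈ 𝓡
          by_cases h0 : x = 0
          · rw [h0, inv_zero, map_zero]; exact 𝓡.zero_mem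
          · rw [map_inv₀]
            refine p4 ⟨σ x, hx⟩ ?_
            intro h
            have : φ ⟨x, hx⟩ = φ 0 := by rw [map_zero]; exact h
            exact h0 (congrArg Subtype.val (hφ this)) }
    have hx : x ∈ Subfield.closure ((k : Set E) ∪ s) := by rw [hs]; trivial
    have hle : Subfield.closure ((k : Set E) ∪ s) ≤ Bf := by
      rw [Subfield.closure_le]
      rintro y (hy | hy)
      · exact (f4 y hy).1
      · exact f3 y (Finset.mem_union_left _ hy)
    exact hle hx
  have hgk : ∀ x ∈ k, φ ⟨x, hBtop x⟩ = x := fun x hx => (f4 x hx).2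
  let g : E →ₐ[C] E :=
    { toFun := fun x => φ ⟨x, hBtop x⟩
      map_zero' := map_zero φ
      map_one' := map_one φ
      map_add' := fun x y => map_add φ ⟨x, _⟩ ⟨y, _⟩
      map_mul' := fun x y => map_mul φ ⟨x, _⟩ ⟨y, _⟩
      commutes' := fun c => hgk _ (hCk c) }
  have hg : ∀ (e : E) (α β : E ⊗[C] A), mu i w β * σ e = mu i w α → pis t β * g e = pis t α :=
    fun e a b h => p3 ⟨σ e, hBtop e⟩ a b h
  refine ⟨g, ?_, hgk, hg⟩
  intro x
  obtain ⟨a, b, hb, hab⟩ := p2 ⟨σ x, hBtop x⟩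
  change mu i w b * σ x = mu i w a at hab
  let d : E ⊗[C] A →ₗ[C] E ⊗[C] A := LinearMap.rTensor A (Dl D hDC)
  have hd1 : ∀ z, mu i w (d z) = DM (mu i w z) := by
    intro z
    induction z using TensorProduct.induction_on with
    | zero => simp
    | add x y hx hy => rw [map_add, map_add, map_add, map_add, hx, hy]
    | tmul e c =>
      have : DM (w c) = 0 := (c : CM).2.2
      rw [LinearMap.rTensor_tmul, mu_tmul, mu_tmul, Derivation.leibniz, this, smul_zero, zero_add, smul_eq_mul, mul_comm, ← hi]
      rfl
  have hd2 : ∀ z : E ⊗[C] A, pis t (d z) = D (pis t z) := by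
    intro z
    induction z using TensorProduct.induction_on with
    | zero => simp
    | add x y hx hy => rw [map_add, map_add, map_add, map_add, hx, hy]
    | tmul e c =>
      rw [LinearMap.rTensor_tmul, pis_tmul, pis_tmul, Derivation.leibniz, hDC, smul_zero, zero_add, smul_eq_mul, mul_comm]
      rfl
  have h1 := hg x a b hab
  have h2 := congrArg D h1
  rw [Derivation.leibniz, smul_eq_mul, smul_eq_mul, ← hd2, ← hd2] at h2
  have h3 := congrArg DM hab
  rw [Derivation.leibniz, smul_eq_mul, smul_eq_mul, ← hd1, ← hd1, ← hσ] at h3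
  have h4 : (⟨_, q1 b⟩ : 𝓡) * ⟨σ (D x), hBtop (D x)⟩ + ⟨σ x, hBtop x⟩ * ⟨_, q1 (d b)⟩ = ⟨_, q1 (d a)⟩ :=
    Subtype.ext h3
  have h5 := congrArg θ h4
  rw [map_add, map_mul, map_mul, q2, q2, q2] at h5
  change pis t b * g (D x) + g x * pis t (d b) = _ at h5
  have : pis t b * g (D x) = pis t b * D (g x) := by linear_combination h5 - h2
  exact mul_left_cancel₀ hb this
end core
end SNPV

namespace SNPV
open TensorProduct

section vm
variable {C E F Ω : Type*} [Field C] [Field E] [CommRing F] [CommRing Ω] [Algebra C E] [Algebra C F] [Algebra C Ω]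

/-- base change of an algebra map -/
noncomputable def vm (E : Type*) [Field E] [Algebra C E] (v : F →ₐ[C] Ω) : E ⊗[C] F →ₐ[E] E ⊗[C] Ω :=
  Algebra.TensorProduct.map (AlgHom.id E E) v

@[simp] lemma vm_tmul (v : F →ₐ[C] Ω) (e : E) (a : F) : vm E v (e ⊗ₜ a) = e ⊗ₜ (v a) := rfl

lemma vm_inj (v : F →ₐ[C] Ω) (hv : Function.Injective v) : Function.Injective (vm E v) := by
  have := Module.Flat.lTensor_preserves_injective_linearMap (M := E) v.toLinearMap hv
  exact this

lemma vm_vm {Ω' : Type*} [CommRing Ω'] [Algebra C Ω'] (v : F →ₐ[C] Ω) (w : Ω →ₐ[C] Ω') (x : E ⊗[C] F) :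
    vm E w (vm E v x) = vm E (w.comp v) x := by
  induction x using TensorProduct.induction_on with
  | zero => simp
  | add x y hx hy => rw [map_add, map_add, map_add, hx, hy]
  | tmul e a => simp

lemma inc_eq_vm (A : Subalgebra C Ω) (x : E ⊗[C] A) : inc E A x = vm E A.val x := rfl

lemma pis_vm (v : F →ₐ[C] Ω) (s : Ω →ₐ[C] C) (x : E ⊗[C] F) : pis s (vm E v x) = pis (s.comp v) x := by
  induction x using TensorProduct.induction_on with
  | zero => simp
  | add x y hx hy => rw [map_add, map_add, map_add, hx, hy]
  | tmul e a => simp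

lemma mu_vm {M : Type*} [Field M] [Algebra C M] (i : E →ₐ[C] M) (v : F →ₐ[C] Ω) (s : Ω →ₐ[C] M) (x : E ⊗[C] F) :
    mu i s (vm E v x) = mu i (s.comp v) x := by
  induction x using TensorProduct.induction_on with
  | zero => simp
  | add x y hx hy => rw [map_add, map_add, map_add, hx, hy]
  | tmul e a => simp
end vm

lemma spec2 {C E F Ω : Type*} [Field C] [IsAlgClosed C] [Field E] [Field F] [Field Ω] [Algebra C E] [Algebra C F] [Algebra C Ω]
    (v : F →ₐ[C] Ω) (S H : Set (E ⊗[C] F)) (T : Set F) (hS : S.Finite) (hH : H.Finite) (hT : T.Finite) (h0 : 0 ∉ H)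
    (S2 : Set (E ⊗[C] Ω)) (T2 : Set Ω) (hS2 : S2.Finite) (hT2 : T2.Finite) (h : E ⊗[C] Ω) (hh : h ≠ 0) :
    ∃ (A1 : Subalgebra C F) (A : Subalgebra C Ω) (v1 : A1 →ₐ[C] A) (s : A →ₐ[C] C),
      (∀ a, (v1 a : Ω) = v a) ∧ T ⊆ A1 ∧ T2 ⊆ A ∧ (∀ x ∈ S, ∃ x', inc E A1 x' = x) ∧
      (∀ x ∈ H, ∃ x', inc E A1 x' = x ∧ pis (s.comp v1) x' ≠ 0) ∧
      (∀ x ∈ S2, ∃ x', inc E A x' = x) ∧ ∃ h', inc E A h' = h ∧ pis s h' ≠ 0 := by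
  classical
  obtain ⟨A1, hA1, hTA1, hL1⟩ := exists_lift (S ∪ H) (hS.union hH) T hT
  obtain ⟨G, hG⟩ := (Subalgebra.fg_iff_finiteType A1).2 hA1
  obtain ⟨A, hA, hTA, hL⟩ := exists_lift (insert h S2) (hS2.insert h) (v '' G ∪ T2) ((G.finite_toSet.image v).union hT2)
  have hle : A1.map v ≤ A := by
    rw [← hG, AlgHom.map_adjoin, Algebra.adjoin_le_iff]
    exact fun x hx => hTA (Or.inl hx)
  let v1 : A1 →ₐ[C] A := (v.comp A1.val).codRestrict A (fun a => hle ⟨a, a.2, rfl⟩)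
  obtain ⟨h', hh'⟩ := hL h (Set.mem_insert _ _)
  choose l hl using fun x : H => hL1 x (Or.inr x.2)
  have : Fintype H := hH.fintype
  have hdom : IsDomain (E ⊗[C] A) := tensor_domain
  have hv1 : Function.Injective v1 := fun a b hab => Subtype.ext (v.injective (congrArg Subtype.val hab))
  have hne : h' * ∏ x : H, vm E v1 (l x) ≠ 0 := by
    refine mul_ne_zero ?_ (Finset.prod_ne_zero_iff.2 fun x _ => ?_)
    · rintro rfl; exact hh (by rw [← hh', map_zero])
    · intro h1
      have : l x = 0 := vm_inj v1 hv1 (by rw [h1, map_zero])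
      apply h0
      have h2 := hl x
      rw [this, map_zero] at h2
      rw [h2]; exact x.2
  obtain ⟨c, hc, hc'⟩ := pis_ne _ hne
  obtain ⟨s, hs⟩ := null (C := C) c hc
  have hs' := hc' s hs
  rw [map_mul, map_prod, mul_ne_zero_iff, Finset.prod_ne_zero_iff] at hs'
  refine ⟨A1, A, v1, s, fun _ => rfl, hTA1, fun x hx => hTA (Or.inr hx), fun x hx => hL1 x (Or.inl hx),
    fun x hx => ⟨l ⟨x, hx⟩, hl _, ?_⟩, fun x hx => hL x (Set.mem_insert_of_mem _ hx), h', hh', hs'.1⟩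
  rw [← pis_vm]
  exact hs'.2 ⟨x, hx⟩ (Finset.mem_univ _)

section gp
variable {C E M : Type*} [Field C] [Field E] [Field M] [Algebra C E] [Algebra C M] [IsAlgClosed C]

/-- differential endomorphisms over `k` -/
def Gp (D : Derivation ℤ E E) (k : Subfield E) : Set (E →ₐ[C] E) :=
  {g | (∀ x, g (D x) = D (g x)) ∧ ∀ x ∈ k, g x = x}

lemma spz (D : Derivation ℤ E E) (DM : Derivation ℤ M M)
    (hDC : ∀ c : C, D (algebraMap C E c) = 0)
    (hconst : ∀ x, D x = 0 → ∃ c : C, algebraMap C E c = x)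
    (hC : ∀ c : C, DM (algebraMap C M c) = 0)
    (i σ : E →ₐ[C] M) (hi : ∀ x, i (D x) = DM (i x)) (hσ : ∀ x, σ (D x) = DM (σ x))
    (k : Subfield E) (hCk : ∀ c : C, algebraMap C E c ∈ k) (hik : ∀ x ∈ k, σ x = i x)
    (s : Finset E) (hs : Subfield.closure ((k : Set E) ∪ s) = ⊤)
    (SN1 : ∀ e, σ e ∈ Subfield.closure (Set.range i ∪ {m | DM m = 0}))
    (SN2 : ∀ e, i e ∈ Subfield.closure (Set.range σ ∪ {m | DM m = 0}))
    {Ω : Type*} [Field Ω] [Algebra C Ω] (v : cM DM hC →ₐ[C] Ω)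
    (S1 : Set (E ⊗[C] (cM DM hC))) (hS1 : S1.Finite)
    (S2 : Set (E ⊗[C] Ω)) (hS2 : S2.Finite) (T2 : Set Ω) (hT2 : T2.Finite) (h : E ⊗[C] Ω) (hh : h ≠ 0) :
    ∃ (g : E →ₐ[C] E) (A : Subalgebra C Ω) (t : A →ₐ[C] C), g ∈ Gp (C := C) D k ∧ T2 ⊆ A ∧
      (∀ x ∈ S2, ∃ x', inc E A x' = x) ∧ (∃ h', inc E A h' = h ∧ pis t h' ≠ 0) ∧
      ∀ e, ∀ α ∈ S1, ∀ β ∈ S1, mu i (cM DM hC).val β * σ e = mu i (cM DM hC).val α →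
        ∀ a b, inc E A a = vm E v α → inc E A b = vm E v β → pis t b * g e = pis t a := by
  obtain ⟨S, H, T, fS, fH, fT, h0, hcore⟩ := core D DM hDC hconst hC i σ hi hσ k hCk hik s hs SN1 SN2
  obtain ⟨A1, A, v1, t, hv1, hTA1, hTA, hL1, hLH, hL2, hh'⟩ := spec2 v (S ∪ S1) H T (fS.union hS1) fH fT h0 S2 T2 hS2 hT2 h hh
  obtain ⟨g, hg1, hg2, hg3⟩ := hcore A1 (t.comp v1) hTA1 (fun x hx => hL1 x (Or.inl hx)) hLH
  refine ⟨g, A, t, ⟨hg1, hg2⟩, hTA, hL2, hh', ?_⟩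
  intro e α hα β hβ heq a b ha hb
  obtain ⟨α', rfl⟩ := hL1 α (Or.inr hα)
  obtain ⟨β', rfl⟩ := hL1 β (Or.inr hβ)
  rw [mu_inc, mu_inc] at heq
  have h1 := hg3 e α' β' heq
  rw [← pis_vm, ← pis_vm] at h1
  have key : ∀ z, inc E A (vm E v1 z) = vm E v (inc E A1 z) := by
    intro z
    rw [inc_eq_vm, inc_eq_vm, vm_vm, vm_vm]
    have : A.val.comp v1 = v.comp A1.val := AlgHom.ext hv1
    rw [this]
  have ea : a = vm E v1 α' := inc_inj A (by rw [ha, key])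
  have eb : b = vm E v1 β' := inc_inj A (by rw [hb, key])
  rw [ea, eb]; exact h1
end gp
end SNPV

namespace SNPV
open TensorProduct

/-- the situation of two embeddings -/
structure Dat {C E M : Type*} [Field C] [Field E] [Field M] [Algebra C E] [Algebra C M]
    (D : Derivation ℤ E E) (DM : Derivation ℤ M M) (hC : ∀ c : C, DM (algebraMap C M c) = 0)
    (i σ : E →ₐ[C] M) (k : Subfield E) : Prop where
  hDC : ∀ c : C, D (algebraMap C E c) = 0
  hconst : ∀ x, D x = 0 → ∃ c : C, algebraMap C E c = x
  hi : ∀ x, i (D x) = DM (i x)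
  hσ : ∀ x, σ (D x) = DM (σ x)
  hCk : ∀ c : C, algebraMap C E c ∈ k
  hik : ∀ x ∈ k, σ x = i x
  fg : ∃ s : Finset E, Subfield.closure ((k : Set E) ∪ s) = ⊤
  SN1 : ∀ e, σ e ∈ Subfield.closure (Set.range i ∪ {m | DM m = 0})
  SN2 : ∀ e, i e ∈ Subfield.closure (Set.range σ ∪ {m | DM m = 0})

section
variable {C E M : Type*} [Field C] [Field E] [Field M] [Algebra C E] [Algebra C M] [IsAlgClosed C]
  {D : Derivation ℤ E E} {DM : Derivation ℤ M M} {hC : ∀ c : C, DM (algebraMap C M c) = 0}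
    {i σ : E →ₐ[C] M} {k : Subfield E}

lemma Dat.spz (d : Dat D DM hC i σ k)
    {Ω : Type*} [Field Ω] [Algebra C Ω] (v : cM DM hC →ₐ[C] Ω)
    (S1 : Set (E ⊗[C] (cM DM hC))) (hS1 : S1.Finite)
    (S2 : Set (E ⊗[C] Ω)) (hS2 : S2.Finite) (T2 : Set Ω) (hT2 : T2.Finite) (h : E ⊗[C] Ω) (hh : h ≠ 0) :
    ∃ (g : E →ₐ[C] E) (A : Subalgebra C Ω) (t : A →ₐ[C] C), g ∈ Gp (C := C) D k ∧ T2 ⊆ A ∧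
      (∀ x ∈ S2, ∃ x', inc E A x' = x) ∧ (∃ h', inc E A h' = h ∧ pis t h' ≠ 0) ∧
      ∀ e, ∀ α ∈ S1, ∀ β ∈ S1, mu i (cM DM hC).val β * σ e = mu i (cM DM hC).val α →
        ∀ a b, inc E A a = vm E v α → inc E A b = vm E v β → pis t b * g e = pis t a := by
  obtain ⟨s, hs⟩ := d.fg
  exact SNPV.spz D DM d.hDC d.hconst hC i σ d.hi d.hσ k d.hCk d.hik s hs d.SN1 d.SN2 v S1 hS1 S2 hS2 T2 hT2 h hh

lemma Dat.moves (d : Dat D DM hC i σ k) (e : E) (he : i e ≠ σ e) : ∃ g ∈ Gp (C := C) D k, g e ≠ e := by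
  obtain ⟨α, β, hβ, hαβ⟩ := kolchin D DM hC i d.hi ⊤ (fun _ => trivial) (fun _ _ => trivial) (fun _ => trivial)
    (σ e) trivial (d.SN1 e)
  have hh : (α - (e ⊗ₜ 1) * β) * β ≠ 0 := by
    intro h0
    have := congrArg (mu i (cM DM hC).val) h0
    rw [map_mul, map_sub, map_mul, ← hαβ, mu_tmul, map_one, mul_one, map_zero, mul_eq_zero] at this
    rcases this with h | h
    · apply he
      have h2 : mu i (cM DM hC).val β * (σ e - i e) = 0 := by linear_combination h
      exact (sub_eq_zero.1 ((mul_eq_zero.1 h2).resolve_left hβ)).symm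
    · exact hβ h
  obtain ⟨g, A, t, hg, -, hS, ⟨h', hh', ht⟩, H⟩ := d.spz (AlgHom.id C _) {α, β} (Set.toFinite _) {α, β} (Set.toFinite _) ∅ Set.finite_empty
    _ hh
  obtain ⟨a, rfl⟩ := hS α (by simp)
  obtain ⟨b, rfl⟩ := hS β (by simp)
  have hv : ∀ z : E ⊗[C] (cM DM hC), vm E (AlgHom.id C _) z = z := by
    intro z
    induction z using TensorProduct.induction_on with
    | zero => simp
    | add x y hx hy => rw [map_add, hx, hy]
    | tmul e a => simp
  have h1 := H e _ (by simp) _ (by simp) hαβ a b (hv _).symm (hv _).symm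
  have h2 : h' = (a - (e ⊗ₜ 1) * b) * b := inc_inj A (by rw [hh']; simp)
  refine ⟨g, hg, fun h3 => ht ?_⟩
  rw [h2, map_mul, map_sub, map_mul, ← h1, h3, pis_tmul]
  simp [mul_comm]
end


lemma exists_dat {E : Type u} [Field E] [CharZero E] (D : Derivation ℤ E E)
    (k : Subfield E) (hSN : IsSN (⇑D) k) (p : Ideal (E ⊗[k] E)) (hp : p ∈ minimalPrimes (E ⊗[k] E)) :
    ∃ (M : Type u) (_ : Field M) (_ : Algebra (constantsOf D k) M) (DM : Derivation ℤ M M)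
      (hC : ∀ c : constantsOf D k, DM (algebraMap _ M c) = 0) (i σ : E →ₐ[constantsOf D k] M),
      Dat D DM hC i σ k ∧ ∃ q : E ⊗[k] E →+* M, RingHom.ker q = p ∧ ∀ a b, q (a ⊗ₜ b) = i a * σ b := by
  obtain ⟨hk, ⟨s, hs⟩, hc, hM⟩ := hSN
  obtain ⟨M, i, σ, hi, hσ, hik, q, hq, hq'⟩ := exists_M D (fun x : k => (⟨D x, hk x x.2⟩ : k)) (fun x => rfl) p hp
  let DM : Derivation ℤ M.carrier M.carrier := Derivation.mk'
    (AddMonoidHom.toIntLinearMap (AddMonoidHom.mk' M.deriv M.deriv_add))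
    (fun a b => by
      simp only [AddMonoidHom.coe_toIntLinearMap, AddMonoidHom.mk'_apply, smul_eq_mul, M.deriv_mul]
      ring)
  letI : Algebra (constantsOf D k) M.carrier := (i.comp (algebraMap (constantsOf D k) E)).toAlgebra
  have hC : ∀ c : constantsOf D k, DM (algebraMap _ M.carrier c) = 0 := by
    intro c
    change M.deriv (i c) = 0
    rw [← hi, c.2.2, map_zero]
  have hik' : ∀ x ∈ k, σ x = i x := fun x hx => hik ⟨x, hx⟩
  let i' : E →ₐ[constantsOf D k] M.carrier := { i with commutes' := fun c => rfl }
  let σ' : E →ₐ[constantsOf D k] M.carrier := { σ with commutes' := fun c => hik' c c.2.1 }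
  refine ⟨M.carrier, inferInstance, this, DM, hC, i', σ', ?_, q, hq, hq'⟩
  exact
  { hDC := fun c => c.2.2
    hconst := fun x hx => ⟨⟨x, hc x hx, hx⟩, rfl⟩
    hi := hi
    hσ := hσ
    hCk := fun c => c.2.1
    hik := hik'
    fg := ⟨s, hs⟩
    SN1 := hM M i σ hi hσ hik'
    SN2 := hM M σ i hσ hi (fun x hx => (hik' x hx).symm) }

lemma fixed {E : Type u} [Field E] [CharZero E] (D : Derivation ℤ E E)
    (k : Subfield E) (hSN : IsSN (⇑D) k) [IsAlgClosed (constantsOf D k)] (x : E)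
    (hx : ∀ g ∈ Gp (C := constantsOf D k) D k, g x = x) : x ∈ k := by
  by_contra h
  obtain ⟨p, hp, hp'⟩ := avoid (k := k) x (by rintro ⟨y, rfl⟩; exact h y.2)
  obtain ⟨M, _, _, DM, hC, i, σ, d, q, hq, hq'⟩ := exists_dat D k hSN p hp
  obtain ⟨g, hg, hg'⟩ := d.moves x (by
    intro h1
    apply hp'
    rw [← hq, RingHom.mem_ker, map_sub, hq', hq', map_one, map_one, h1, mul_one, one_mul, sub_self])
  exact hg' (hx g hg)
end SNPV

namespace SNPV
open TensorProduct

lemma big_frac {R M X J : Type*} [CommRing R] [IsDomain R] [Field M] [Field X] (DM : Derivation ℤ M M)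
    (j0 : R →+* M) (hj : Function.Injective j0) (jg : J → R →+* M) (hjg : ∀ g, Function.Injective (jg g))
    (hD : ∀ r, ∃ r', DM (j0 r) = j0 r' ∧ ∀ g, DM (jg g r) = jg g r') (Ψ : R →+* X) (hΨ : Function.Injective Ψ) :
    ∃ N : Subfield M, (∀ r, j0 r ∈ N) ∧ (∀ n ∈ N, DM n ∈ N) ∧ (∃ τ : N →+* X, ∀ r h, τ ⟨j0 r, h⟩ = Ψ r) ∧
      ∀ g, ∃ γ : N →+* M, (∀ r h, γ ⟨j0 r, h⟩ = jg g r) ∧ ∀ n : N, DM n = 0 → DM (γ n) = 0 := by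
  let j : FractionRing R →+* M := IsFractionRing.lift hj
  have hjr : ∀ r, j (algebraMap R _ r) = j0 r := fun r => IsFractionRing.lift_algebraMap hj r
  let l : J → FractionRing R →+* M := fun g => IsFractionRing.lift (hjg g)
  have hlr : ∀ g r, l g (algebraMap R _ r) = jg g r := fun g r => IsFractionRing.lift_algebraMap (hjg g) r
  have key : ∀ n, ∃ m, DM (j n) = j m ∧ ∀ g, DM (l g n) = l g m := by
    intro n
    obtain ⟨a, b, hb, rfl⟩ := IsFractionRing.div_surjective (A := R) n
    obtain ⟨a', ha1, ha2⟩ := hD a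
    obtain ⟨b', hb1, hb2⟩ := hD b
    have hb0 : algebraMap R (FractionRing R) b ≠ 0 := by
      simpa using nonZeroDivisors.ne_zero hb
    refine ⟨(algebraMap R _ a' - algebraMap R _ a / algebraMap R _ b * algebraMap R _ b') / algebraMap R _ b, ?_, ?_⟩
    · have h1 : j (algebraMap R _ a / algebraMap R _ b) * j0 b = j0 a := by
        rw [← hjr, ← hjr, ← map_mul, div_mul_cancel₀ _ hb0]
      have hb1' : j0 b ≠ 0 := by rw [← hjr]; exact (map_ne_zero j).2 hb0
      have h2 := congrArg DM h1
      rw [Derivation.leibniz, ha1, hb1, smul_eq_mul, smul_eq_mul] at h2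
      rw [map_div₀ j (_ - _), map_sub, map_mul, hjr, hjr, hjr, eq_div_iff hb1']
      linear_combination h2
    · intro g
      have h1 : l g (algebraMap R _ a / algebraMap R _ b) * jg g b = jg g a := by
        rw [← hlr, ← hlr, ← map_mul, div_mul_cancel₀ _ hb0]
      have hb1' : jg g b ≠ 0 := by rw [← hlr]; exact (map_ne_zero (l g)).2 hb0
      have h2 := congrArg DM h1
      rw [Derivation.leibniz, ha2, hb2, smul_eq_mul, smul_eq_mul] at h2
      rw [map_div₀ (l g) (_ - _), map_sub, map_mul, hlr, hlr, hlr, eq_div_iff hb1']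
      linear_combination h2
  let e : FractionRing R ≃+* j.fieldRange := RingEquiv.ofBijective j.rangeRestrictField
    ⟨fun a b h => j.injective (congrArg Subtype.val h), by rintro ⟨_, x, rfl⟩; exact ⟨x, rfl⟩⟩
  have he : ∀ x, (e x : M) = j x := fun x => rfl
  have her : ∀ r h, e.symm ⟨j0 r, h⟩ = algebraMap R _ r := by
    intro r h
    rw [RingEquiv.symm_apply_eq]
    exact Subtype.ext (hjr r).symm
  refine ⟨j.fieldRange, fun r => ⟨algebraMap R _ r, hjr r⟩, ?_, ⟨(IsFractionRing.lift hΨ).comp e.symm.toRingHom, ?_⟩, ?_⟩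
  · rintro _ ⟨n, rfl⟩
    obtain ⟨m, hm, -⟩ := key n
    exact ⟨m, hm.symm⟩
  · intro r h
    change IsFractionRing.lift hΨ (e.symm _) = _
    rw [her]; exact IsFractionRing.lift_algebraMap hΨ r
  · intro g
    refine ⟨(l g).comp e.symm.toRingHom, ?_, ?_⟩
    · intro r h
      change l g (e.symm _) = _
      rw [her]; exact hlr g r
    · intro n hn
      change DM (l g (e.symm n)) = 0
      obtain ⟨n, rfl⟩ := e.surjective n
      rw [RingEquiv.symm_apply_apply]
      obtain ⟨m, hm, hm2⟩ := key n
      rw [he, hm, map_eq_zero] at hn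
      rw [hm2, hn, map_zero]

section
variable {k E ι : Type*} [Field k] [Field E] [Algebra k E]

lemma clear_den (z : E ⊗[k] FractionRing (MvPolynomial ι k)) : ∃ (d : MvPolynomial ι k) (y : E ⊗[k] MvPolynomial ι k),
    d ≠ 0 ∧ (1 ⊗ₜ (IsScalarTower.toAlgHom k _ (FractionRing (MvPolynomial ι k)) d)) * z =
      vm E (IsScalarTower.toAlgHom k _ (FractionRing (MvPolynomial ι k))) y := by
  let a : MvPolynomial ι k →ₐ[k] FractionRing (MvPolynomial ι k) := IsScalarTower.toAlgHom k _ _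
  change ∃ (d : MvPolynomial ι k) (y : E ⊗[k] MvPolynomial ι k), d ≠ 0 ∧ (1 ⊗ₜ a d) * z = vm E a y
  induction z using TensorProduct.induction_on with
  | zero => exact ⟨1, 0, one_ne_zero, by simp⟩
  | add x y hx hy =>
    obtain ⟨d1, y1, hd1, e1⟩ := hx
    obtain ⟨d2, y2, hd2, e2⟩ := hy
    refine ⟨d1 * d2, (1 ⊗ₜ d2) * y1 + (1 ⊗ₜ d1) * y2, mul_ne_zero hd1 hd2, ?_⟩
    rw [map_mul a, map_add, map_mul (vm E a), map_mul (vm E a), ← e1, ← e2, vm_tmul, vm_tmul]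
    have : (1 : E) ⊗ₜ[k] (a d1 * a d2) = (1 ⊗ₜ a d1) * (1 ⊗ₜ a d2) := by simp
    rw [this]; ring
  | tmul e f =>
    obtain ⟨p, d, hd, rfl⟩ := IsFractionRing.div_surjective (A := MvPolynomial ι k) f
    have hd0 := nonZeroDivisors.ne_zero hd
    refine ⟨d, e ⊗ₜ p, hd0, ?_⟩
    have : algebraMap _ (FractionRing (MvPolynomial ι k)) d ≠ 0 := by simpa using hd0
    rw [vm_tmul, Algebra.TensorProduct.tmul_mul_tmul, one_mul]
    congr 1
    change algebraMap _ _ d * _ = algebraMap _ _ p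
    field_simp

lemma rat_dom : ∃ Ψ : E ⊗[k] FractionRing (MvPolynomial ι k) →ₐ[E] FractionRing (MvPolynomial ι E),
    Function.Injective Ψ := by
  let g : MvPolynomial ι k →ₐ[k] FractionRing (MvPolynomial ι E) :=
    (IsScalarTower.toAlgHom k (MvPolynomial ι E) (FractionRing (MvPolynomial ι E))).comp
      (MvPolynomial.mapAlgHom (Algebra.ofId k E))
  have hg : Function.Injective g := (IsFractionRing.injective (MvPolynomial ι E) _).comp
    (MvPolynomial.map_injective _ (algebraMap k E).injective)
  let G : FractionRing (MvPolynomial ι k) →ₐ[k] FractionRing (MvPolynomial ι E) := IsFractionRing.liftAlgHom hg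
  have hG : ∀ p, G (algebraMap _ _ p) = g p := fun p => IsFractionRing.lift_algebraMap (K := FractionRing (MvPolynomial ι k)) hg p
  let Ψ : E ⊗[k] FractionRing (MvPolynomial ι k) →ₐ[E] FractionRing (MvPolynomial ι E) :=
    Algebra.TensorProduct.lift (Algebra.ofId E _) G (fun _ _ => Commute.all _ _)
  let a : MvPolynomial ι k →ₐ[k] FractionRing (MvPolynomial ι k) := IsScalarTower.toAlgHom k _ _
  have h1 : ∀ y : E ⊗[k] MvPolynomial ι k, Ψ (vm E a y) = algebraMap _ _ (MvPolynomial.algebraTensorAlgEquiv k E y) := by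
    intro y
    induction y using TensorProduct.induction_on with
    | zero => simp
    | add x y hx hy => rw [map_add, map_add, map_add, map_add, hx, hy]
    | tmul e p =>
      rw [vm_tmul, MvPolynomial.algebraTensorAlgEquiv_tmul, Algebra.TensorProduct.lift_tmul, Algebra.smul_def, map_mul]
      congr 1
      exact hG p
  have h2 := fun z => clear_den (ι := ι) (k := k) (E := E) z
  refine ⟨Ψ, (injective_iff_map_eq_zero _).2 fun z hz => ?_⟩
  obtain ⟨d, y, hd, e⟩ := h2 z
  have h3 := congrArg Ψ e
  rw [map_mul, hz, mul_zero, h1] at h3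
  have h4 : y = 0 := by
    apply (MvPolynomial.algebraTensorAlgEquiv k E).injective
    rw [map_zero]
    apply IsFractionRing.injective (MvPolynomial ι E) (FractionRing (MvPolynomial ι E))
    rw [← h3, map_zero]
  rw [h4, map_zero] at e
  have ha : a d ≠ 0 := by
    have : algebraMap _ (FractionRing (MvPolynomial ι k)) d ≠ 0 := by simpa using hd
    exact this
  have hu : (1 ⊗ₜ (a d)⁻¹ : E ⊗[k] FractionRing (MvPolynomial ι k)) * (1 ⊗ₜ a d) = 1 := by
    simp [ha, Algebra.TensorProduct.one_def]
  rw [← one_mul z, ← hu, mul_assoc, e, mul_zero]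

lemma inter_zero (K : IntermediateField k E) [IsDomain (E ⊗[k] K)] (p : Ideal (E ⊗[k] E))
    (hp : p ∈ minimalPrimes (E ⊗[k] E)) (x : E ⊗[k] K) (hx : vm E K.val x ∈ p) : x = 0 := by
  by_contra h
  have hflat : (vm E K.val).toRingHom.Flat := by
    refine RingHom.Flat.tensorProductMap (f := AlgHom.id E E) (g := K.val) ?_ ?_
    · exact RingHom.Flat.id E
    · change RingHom.Flat (algebraMap K E)
      rw [RingHom.flat_algebraMap_iff]
      infer_instance
  refine notMem_nonZeroDivisors_of_mem_mem_minimalPrimes hx hp ?_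
  rw [mem_nonZeroDivisors_iff_right]
  intro z hz
  have := flat_dvd _ hflat x 0 (by
    intro w hw
    rw [zero_dvd_iff] at hw ⊢
    exact (mul_eq_zero.1 hw).resolve_left h) z (by
      rw [map_zero, zero_dvd_iff, mul_comm]; exact hz)
  rwa [map_zero, zero_dvd_iff] at this
end
end SNPV

namespace SNPV
open TensorProduct

lemma map_id_inj {k E F : Type*} [Field k] [CommRing E] [CommRing F] [Algebra k E] [Algebra k F] (g : E →ₐ[k] E)
    (hg : Function.Injective g) : Function.Injective (Algebra.TensorProduct.map g (AlgHom.id k F)) :=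
  Module.Flat.rTensor_preserves_injective_linearMap (M := F) g.toLinearMap hg

set_option maxHeartbeats 1000000 in
lemma exists_N {C E M ι : Type*} [Field C] [Field E] [Field M] [Algebra C E] [Algebra C M]
    {D : Derivation ℤ E E} {DM : Derivation ℤ M M} {hC : ∀ c : C, DM (algebraMap C M c) = 0}
    {i σ : E →ₐ[C] M} {k : Subfield E} (d : Dat D DM hC i σ k) (K : IntermediateField k E) (hK : ∀ x ∈ K, D x ∈ K)
    (ψ : K →ₐ[k] FractionRing (MvPolynomial ι k)) (p : Ideal (E ⊗[k] E)) (hp : p ∈ minimalPrimes (E ⊗[k] E))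
    (q : E ⊗[k] E →+* M) (hq : RingHom.ker q = p) (hq' : ∀ a b, q (a ⊗ₜ b) = i a * σ b) :
    ∃ N : Subfield M, ∃ hiN : ∀ e, i e ∈ N, ∃ hσN : ∀ x ∈ K, σ x ∈ N, (∀ n ∈ N, DM n ∈ N) ∧
      (∃ τ : N →+* FractionRing (MvPolynomial ι E), ∀ e, τ ⟨i e, hiN e⟩ = algebraMap E _ e) ∧
      ∀ g ∈ Gp (C := C) D k, ∃ γ : N →+* M, (∀ e, γ ⟨i e, hiN e⟩ = i (g e)) ∧
        (∀ x (hx : x ∈ K), γ ⟨σ x, hσN x hx⟩ = σ x) ∧ ∀ n : N, DM n = 0 → DM (γ n) = 0 := by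
  obtain ⟨Ψ0, hΨ0⟩ := rat_dom (k := k) (E := E) (ι := ι)
  let Ψ : E ⊗[k] K →ₐ[E] FractionRing (MvPolynomial ι E) := Ψ0.comp (vm E ψ)
  have hΨ : Function.Injective Ψ := hΨ0.comp (vm_inj ψ ψ.injective)
  have hdom : IsDomain (E ⊗[k] K) := hΨ.isDomain Ψ.toRingHom
  let j0 : E ⊗[k] K →+* M := q.comp (vm E K.val).toRingHom
  have hj0 : ∀ e (x : K), j0 (e ⊗ₜ x) = i e * σ x := fun e x => hq' e x
  have hj : Function.Injective j0 := by
    rw [injective_iff_map_eq_zero]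
    intro x hx
    refine inter_zero K p hp x ?_
    rw [← hq]; exact hx
  let gk : Gp (C := C) D k → (E →ₐ[k] E) := fun g => { (g : E →ₐ[C] E) with commutes' := fun r => g.2.2 r r.2 }
  let jg : Gp (C := C) D k → (E ⊗[k] K →+* M) := fun g =>
    j0.comp (Algebra.TensorProduct.map (gk g) (AlgHom.id k K)).toRingHom
  have hjg0 : ∀ g e (x : K), jg g (e ⊗ₜ x) = i ((g : E →ₐ[C] E) e) * σ x := fun g e x => hq' _ x
  have hjg : ∀ g, Function.Injective (jg g) := fun g => hj.comp (map_id_inj (gk g) (gk g).injective)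
  have hD : ∀ r, ∃ r', DM (j0 r) = j0 r' ∧ ∀ g, DM (jg g r) = jg g r' := by
    intro r
    induction r using TensorProduct.induction_on with
    | zero => exact ⟨0, by simp, by simp⟩
    | add x y hx hy =>
      obtain ⟨x', hx1, hx2⟩ := hx
      obtain ⟨y', hy1, hy2⟩ := hy
      refine ⟨x' + y', by rw [map_add, map_add, map_add, hx1, hy1], fun g => by rw [map_add, map_add, map_add, hx2, hy2]⟩
    | tmul e x =>
      refine ⟨D e ⊗ₜ x + e ⊗ₜ ⟨D x, hK x x.2⟩, ?_, fun g => ?_⟩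
      · rw [map_add, hj0, hj0, hj0, Derivation.leibniz, ← d.hi, ← d.hσ, smul_eq_mul, smul_eq_mul]
        ring
      · rw [map_add, hjg0, hjg0, hjg0, Derivation.leibniz, ← d.hi, ← d.hσ, ← g.2.1, smul_eq_mul, smul_eq_mul]
        ring
  obtain ⟨N, h1, h2, ⟨τ, hτ⟩, hγ⟩ := big_frac DM j0 hj jg hjg hD Ψ.toRingHom hΨ
  have e1 : ∀ e, j0 (e ⊗ₜ 1) = i e := fun e => by rw [hj0]; simp
  have e2 : ∀ x : K, j0 (1 ⊗ₜ x) = σ x := fun e => by rw [hj0]; simp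
  have hiN : ∀ e, i e ∈ N := fun e => by rw [← e1]; exact h1 _
  have hσN : ∀ x ∈ K, σ x ∈ N := fun x hx => by rw [← e2 ⟨x, hx⟩]; exact h1 _
  refine ⟨N, hiN, hσN, h2, ⟨τ, fun e => ?_⟩, fun g hg => ?_⟩
  · have := hτ (e ⊗ₜ 1) (h1 _)
    simp only [e1] at this
    rw [this]
    exact Ψ.commutes e
  · obtain ⟨γ, hγ1, hγ2⟩ := hγ ⟨g, hg⟩
    refine ⟨γ, fun e => ?_, fun x hx => ?_, hγ2⟩
    · have := hγ1 (e ⊗ₜ 1) (h1 _)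
      simp only [e1] at this
      rw [this, hjg0]; simp
    · have := hγ1 (1 ⊗ₜ ⟨x, hx⟩) (h1 _)
      simp only [e2] at this
      rw [this, hjg0]; simp
end SNPV

namespace SNPV
open TensorProduct

lemma comp_alg.{v} {C A F1 F2 : Type v} [Field C] [CommRing A] [IsDomain A] [Field F1] [Field F2] [Algebra C A] [Algebra C F1]
    [Algebra C F2] (f1 : A →ₐ[C] F1) (f2 : A →ₐ[C] F2) (h1 : Function.Injective f1) (h2 : Function.Injective f2) :
    ∃ (Ω : Type v) (_ : Field Ω) (_ : Algebra C Ω) (g1 : F1 →ₐ[C] Ω) (g2 : F2 →ₐ[C] Ω), ∀ a, g1 (f1 a) = g2 (f2 a) := by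
  obtain ⟨Ω, _, g1, g2, h⟩ := compositum f1.toRingHom f2.toRingHom h1 h2
  let : Algebra C Ω := (g1.comp (algebraMap C F1)).toAlgebra
  refine ⟨Ω, inferInstance, this, { g1 with commutes' := fun c => rfl }, { g2 with commutes' := fun c => ?_ }, h⟩
  have := h (algebraMap C A c)
  change g1 (f1 _) = g2 (f2 _) at this
  rw [AlgHom.commutes, AlgHom.commutes] at this
  exact this.symm

section
variable {C E Ω κ : Type*} [Field C] [Field E] [Field Ω] [Algebra C E] [Algebra C Ω]

lemma ev_map {Ω' : Type*} [Field Ω'] [Algebra C Ω'] (w : κ → Ω) (g : E →ₐ[C] E) (u : Ω →ₐ[C] Ω') (p : MvPolynomial κ E) :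
    Algebra.TensorProduct.map g u (ev (AlgHom.id C E) w p) = ev g (u ∘ w) p := by
  rw [ev_eq_sum, ev_eq_sum, map_sum]
  refine Finset.sum_congr rfl fun m _ => ?_
  rw [Algebra.TensorProduct.map_tmul]
  congr 1
  exact MvPolynomial.comp_aeval_apply w u _

lemma ev_lift (A : Subalgebra C Ω) (w : κ → Ω) (p : MvPolynomial κ E)
    (hA : ∀ m ∈ p.support, MvPolynomial.aeval w (MvPolynomial.monomial m (1 : C)) ∈ A) :
    ∃ y' : E ⊗[C] A, inc E A y' = ev (AlgHom.id C E) w p ∧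
      ∀ (t : A →ₐ[C] C) (Y : Submodule C E), (∀ m, p.coeff m ∈ Y) → pis t y' ∈ Y := by
  classical
  refine ⟨∑ m : p.support, (p.coeff m) ⊗ₜ ⟨_, hA m m.2⟩, ?_, fun t Y hY => ?_⟩
  · rw [ev_eq_sum, map_sum, ← Finset.sum_coe_sort p.support]
    refine Finset.sum_congr rfl fun m _ => ?_
    rw [inc_tmul]; rfl
  · rw [map_sum]
    refine Submodule.sum_mem _ fun m _ => ?_
    rw [pis_tmul, mul_comm, ← Algebra.smul_def]
    exact Y.smul_mem _ (hY _)

lemma redux (w0 : κ → FractionRing (MvPolynomial κ C))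
    (hw0 : w0 = fun j => algebraMap (MvPolynomial κ C) _ (MvPolynomial.X j)) [IsAlgClosed C]
    (a b : E ⊗[C] FractionRing (MvPolynomial κ C)) (hb : b ≠ 0) :
    ∃ α β : MvPolynomial κ E, β ≠ 0 ∧ (∀ z, β ∣ α * z → β ∣ z) ∧
      a * ev (AlgHom.id C E) w0 β = b * ev (AlgHom.id C E) w0 α := by
  have hdom : IsDomain (E ⊗[C] FractionRing (MvPolynomial κ C)) := tensor_domain
  let a0 : MvPolynomial κ C →ₐ[C] FractionRing (MvPolynomial κ C) := IsScalarTower.toAlgHom C _ _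
  have ha0 : ∀ q, MvPolynomial.aeval w0 q = a0 q := by
    intro q
    have : MvPolynomial.aeval w0 = a0 := by
      ext j; simp [hw0, a0]
    rw [this]
  have hind : AlgebraicIndependent C w0 := by
    intro p q h
    rw [ha0, ha0] at h
    exact IsFractionRing.injective _ _ h
  have h1 : ∀ y : E ⊗[C] MvPolynomial κ C, vm E a0 y = ev (AlgHom.id C E) w0 (MvPolynomial.algebraTensorAlgEquiv C E y) := by
    intro y
    induction y using TensorProduct.induction_on with
    | zero => simp
    | add x y hx hy => rw [map_add, map_add, map_add, hx, hy]
    | tmul e p =>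
      induction p using MvPolynomial.induction_on' with
      | add p q hp hq => rw [TensorProduct.tmul_add, map_add, map_add, map_add, hp, hq]
      | monomial m c =>
        have : MvPolynomial.algebraTensorAlgEquiv C E (e ⊗ₜ MvPolynomial.monomial m c)
            = MvPolynomial.monomial m (c • e) := by
          rw [MvPolynomial.algebraTensorAlgEquiv_tmul, MvPolynomial.map_monomial, MvPolynomial.smul_monomial, smul_eq_mul,
            mul_comm, ← Algebra.smul_def]
        rw [this, ev_monomial, vm_tmul, ha0, AlgHom.id_apply, TensorProduct.smul_tmul, ← map_smul, MvPolynomial.smul_monomial,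
          smul_eq_mul, mul_one]
  obtain ⟨d1, y1, hd1, e1⟩ := clear_den (ι := κ) a
  obtain ⟨d2, y2, hd2, e2⟩ := clear_den (ι := κ) b
  change (1 ⊗ₜ a0 d1) * a = vm E a0 y1 at e1
  change (1 ⊗ₜ a0 d2) * b = vm E a0 y2 at e2
  let ae := MvPolynomial.algebraTensorAlgEquiv C E (σ := κ)
  have e3 : ∀ p : MvPolynomial κ C, (1 ⊗ₜ a0 p) = ev (AlgHom.id C E) w0 (ae (1 ⊗ₜ p)) := by
    intro p; rw [← h1]; rfl
  rw [h1, e3] at e1 e2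
  have hevinj : ∀ p, p ≠ 0 → ev (AlgHom.id C E) w0 p ≠ 0 := fun p hp => ev_ne _ w0 hind p hp
  have hae : ∀ p : MvPolynomial κ C, p ≠ 0 → ae (1 ⊗ₜ p) ≠ 0 := by
    intro p hp h
    rw [MvPolynomial.algebraTensorAlgEquiv_tmul, one_smul] at h
    exact hp (MvPolynomial.map_injective _ (algebraMap C E).injective (by rw [h, map_zero]))
  have hy2 : ae y2 ≠ 0 := by
    intro h
    change _ = ev (AlgHom.id C E) w0 (ae y2) at e2
    rw [h, map_zero, mul_eq_zero] at e2
    exact e2.elim (hevinj _ (hae _ hd2)) hb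
  obtain ⟨β, α, c, hrel, hβ, hα⟩ := UniqueFactorizationMonoid.exists_reduced_factors (ae y2 * ae (1 ⊗ₜ d1))
    (mul_ne_zero hy2 (hae _ hd1)) (ae y1 * ae (1 ⊗ₜ d2))
  have hne := mul_ne_zero hy2 (hae _ hd1)
  rw [← hβ] at hne
  have hc : c ≠ 0 := left_ne_zero_of_mul hne
  refine ⟨α, β, right_ne_zero_of_mul hne, fun z hz => hrel.dvd_of_dvd_mul_left hz, ?_⟩
  apply mul_left_cancel₀ (hevinj c hc)
  have h2 := congrArg (ev (AlgHom.id C E) w0) hα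
  have h3 := congrArg (ev (AlgHom.id C E) w0) hβ
  rw [map_mul, map_mul] at h2 h3
  change _ = ev (AlgHom.id C E) w0 (ae y1) at e1
  change _ = ev (AlgHom.id C E) w0 (ae y2) at e2
  linear_combination a * h3 - b * h2 + b * (ev (AlgHom.id C E) w0) (ae (1 ⊗ₜ[C] d2)) * e1 - a * (ev (AlgHom.id C E) w0) (ae (1 ⊗ₜ[C] d1)) * e2
end
end SNPV

namespace SNPV
open TensorProduct

section
variable {C E M : Type u} [Field C] [Field E] [Field M] [Algebra C E] [Algebra C M] [IsAlgClosed C]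
  {D : Derivation ℤ E E} {DM : Derivation ℤ M M} {hC : ∀ c : C, DM (algebraMap C M c) = 0}
    {i σ : E →ₐ[C] M} {k : Subfield E}

lemma vm_eq_map {F Ω : Type*} [CommRing F] [CommRing Ω] [Algebra C F] [Algebra C Ω] (v : F →ₐ[C] Ω) (x : E ⊗[C] F) :
    vm E v x = Algebra.TensorProduct.map (AlgHom.id C E) v x := rfl

/-- Step one: reduction to polynomials. -/
lemma step1 {ι : Type u} (d : Dat D DM hC i σ k) (N : Subfield M) (hN : ∀ c : C, algebraMap C M c ∈ N)
    (hiN : ∀ e, i e ∈ N) (hND : ∀ n ∈ N, DM n ∈ N)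
    (τ : N →+* FractionRing (MvPolynomial ι E)) (hτ : ∀ e, τ ⟨i e, hiN e⟩ = algebraMap E _ e)
    (x : E) (hx : σ x ∈ N) :
    ∃ (A : Subalgebra C (cst DM hC N hN)) (a1 b1 : E ⊗[C] A) (κ : Type u)
      (ν : A →ₐ[C] FractionRing (MvPolynomial κ C)), Function.Injective ν ∧ b1 ≠ 0 ∧
      mu i ((cst DM hC N hN).val.comp A.val) b1 * σ x = mu i ((cst DM hC N hN).val.comp A.val) a1 := by
  obtain ⟨α1, β1, hβ1, hαβ⟩ := kolchin D DM hC i d.hi N hN hND hiN (σ x) hx (d.SN1 x)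
  obtain ⟨A, hA, -, hL⟩ := exists_lift {α1, β1} (Set.toFinite _) ∅ Set.finite_empty
  obtain ⟨a1, rfl⟩ := hL α1 (by simp)
  obtain ⟨b1, rfl⟩ := hL β1 (by simp)
  rw [mu_inc] at hβ1
  rw [mu_inc, mu_inc] at hαβ
  set m := mu i ((cst DM hC N hN).val.comp A.val) with hm
  have hminj : Function.Injective m := mu_inj D DM d.hconst i d.hi _
    (fun a b h => Subtype.ext (Subtype.ext h)) (fun a => (a : cst DM hC N hN).2.2)
  have hmN : ∀ z, m z ∈ N := by
    intro z
    induction z using TensorProduct.induction_on with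
    | zero => rw [map_zero]; exact N.zero_mem
    | add x y hx hy => rw [map_add]; exact N.add_mem hx hy
    | tmul e a => rw [hm, mu_tmul]; exact N.mul_mem (hiN e) (a : cst DM hC N hN).2.1
  let φ0 : A →+* N :=
    { toFun := fun a => ⟨((a : cst DM hC N hN) : M), (a : cst DM hC N hN).2.1⟩
      map_zero' := rfl
      map_one' := rfl
      map_add' := fun _ _ => rfl
      map_mul' := fun _ _ => rfl }
  let φ : A →ₐ[C] FractionRing (MvPolynomial ι E) :=
    { τ.comp φ0 with
      commutes' := fun c => by
        change τ ⟨algebraMap C M c, _⟩ = _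
        have h1 : i (algebraMap C E c) = algebraMap C M c := i.commutes c
        have h2 := hτ (algebraMap C E c)
        simp only [h1] at h2
        rw [h2, ← IsScalarTower.algebraMap_apply] }
  have key : ∀ z : E ⊗[C] A, Algebra.TensorProduct.lift (Algebra.ofId E (FractionRing (MvPolynomial ι E))) φ (fun _ _ => Commute.all _ _) z =
      τ ⟨m z, hmN z⟩ := by
    intro z
    induction z using TensorProduct.induction_on with
    | zero =>
      have : (⟨m 0, hmN 0⟩ : N) = 0 := Subtype.ext (map_zero m)
      rw [this, map_zero, map_zero]
    | add x y hx hy =>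
      have : (⟨m (x + y), hmN (x + y)⟩ : N) = ⟨m x, hmN x⟩ + ⟨m y, hmN y⟩ := Subtype.ext (map_add m x y)
      rw [this, map_add, map_add, hx, hy]
    | tmul e a =>
      have : (⟨m (e ⊗ₜ a), hmN (e ⊗ₜ a)⟩ : N) = ⟨i e, hiN e⟩ * φ0 a := Subtype.ext (mu_tmul i _ e a)
      rw [this, map_mul, hτ, Algebra.TensorProduct.lift_tmul]
      rfl
  obtain ⟨κ, ν, hν⟩ := descent φ (by
    intro z z' h
    rw [key, key] at h
    exact hminj (congrArg Subtype.val (τ.injective h)))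
  exact ⟨A, a1, b1, κ, ν, hν, fun h => hβ1 (by rw [h, map_zero]), hαβ⟩
end
end SNPV

namespace SNPV
open TensorProduct

section

lemma map_tens_inj {C E A B : Type*} [Field C] [Field E] [CommRing A] [CommRing B] [Algebra C E] [Algebra C A] [Algebra C B]
    (g : E →ₐ[C] E) (u : A →ₐ[C] B) (hu : Function.Injective u) :
    Function.Injective (Algebra.TensorProduct.map g u) := by
  have h : ∀ x, Algebra.TensorProduct.map g u x = vm E u (Algebra.TensorProduct.map g (AlgHom.id C A) x) := by
    intro x
    induction x using TensorProduct.induction_on with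
    | zero => simp
    | add x y hx hy => rw [map_add, hx, hy, map_add, map_add]
    | tmul e a => simp
  intro x y hxy
  rw [h, h] at hxy
  exact map_id_inj g g.injective (vm_inj u hu hxy)

lemma map_map_vm {C E A B B' : Type*} [Field C] [Field E] [CommRing A] [CommRing B] [CommRing B'] [Algebra C E] [Algebra C A] [Algebra C B]
    [Algebra C B'] (g : E →ₐ[C] E) (v : A →ₐ[C] B) (u : B →ₐ[C] B') (x : E ⊗[C] A) :
    Algebra.TensorProduct.map g u (vm E v x) = Algebra.TensorProduct.map g (u.comp v) x := by
    induction x using TensorProduct.induction_on with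
    | zero => simp
    | add x y hx hy => rw [map_add, map_add, hx, hy, map_add]
    | tmul e a => simp

lemma vm_map_map {C E A B B' : Type*} [Field C] [Field E] [CommRing A] [CommRing B] [CommRing B'] [Algebra C E] [Algebra C A] [Algebra C B]
    [Algebra C B'] (g : E →ₐ[C] E) (v : A →ₐ[C] B) (u : B →ₐ[C] B') (x : E ⊗[C] A) :
    vm E u (Algebra.TensorProduct.map g v x) = Algebra.TensorProduct.map g (u.comp v) x := by
    induction x using TensorProduct.induction_on with
    | zero => simp
    | add x y hx hy => rw [map_add, map_add, hx, hy, map_add]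
    | tmul e a => simp

lemma step2a {C E A F Q Ω' κ : Type u} [Field C] [IsAlgClosed C] [Field E] [CommRing A] [IsDomain A] [Field F] [Field Q] [Field Ω']
    [Algebra C E] [Algebra C A] [Algebra C F] [Algebra C Q] [Algebra C Ω']
    (f1 γA : A →ₐ[C] F) (hf1 : Function.Injective f1) (hγA : Function.Injective γA)
    (ν : A →ₐ[C] Q) (hν : Function.Injective ν) (gA : F →ₐ[C] Ω') (u1 : Q →ₐ[C] Ω') (hcomp : ∀ a, gA (f1 a) = u1 (ν a))
    (w0 : κ → Q) (hind : AlgebraicIndependent C w0) (g : E →ₐ[C] E) (a1 b1 : E ⊗[C] A) (hb1 : b1 ≠ 0)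
    (α β : MvPolynomial κ E) (hβ : β ≠ 0) (hcop : ∀ z, β ∣ α * z → β ∣ z)
    (hred : vm E ν a1 * ev (AlgHom.id C E) w0 β = vm E ν b1 * ev (AlgHom.id C E) w0 α)
    (hrel : vm E f1 a1 * Algebra.TensorProduct.map g γA b1 = Algebra.TensorProduct.map g γA a1 * vm E f1 b1) :
    ∃ s, s ≠ 0 ∧ ∀ y ∈ cspan (C := C) α β, ∃ y' ∈ cspan (C := C) α β, g y = s * y' := by
  obtain ⟨Ω3, _, _, h3, u2, hc3⟩ := comp_alg (gA.comp γA) ν (gA.injective.comp hγA) hν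
  have e1 : (h3.comp gA).comp f1 = (h3.comp u1).comp ν := by
    ext a; exact congrArg h3 (hcomp a)
  have e2 : (h3.comp gA).comp γA = u2.comp ν := by
    ext a; exact hc3 a
  have r0 := congrArg (vm E (h3.comp gA)) hrel
  simp only [map_mul, vm_vm, vm_map_map, e1, e2] at r0
  have r1 := congrArg (vm E (h3.comp u1)) hred
  simp only [map_mul, vm_vm] at r1
  rw [vm_eq_map _ (ev _ _ _), vm_eq_map _ (ev _ _ _), ev_map, ev_map] at r1
  have r2 := congrArg (Algebra.TensorProduct.map g u2) hred
  simp only [map_mul, map_map_vm, ev_map] at r2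
  have hdom : IsDomain (E ⊗[C] Ω3) := tensor_domain
  have n1 : vm E ((h3.comp u1).comp ν) b1 ≠ 0 := fun h =>
    hb1 (vm_inj ((h3.comp u1).comp ν) ((h3.comp u1).injective.comp hν) (by rw [h, map_zero]))
  have n2 : Algebra.TensorProduct.map g (u2.comp ν) b1 ≠ 0 := fun h =>
    hb1 (map_tens_inj g (u2.comp ν) (u2.injective.comp hν) (by rw [h, map_zero]))
  refine coef g α β hcop hβ ((h3.comp u1) ∘ w0) (u2 ∘ w0) ?_ ?_ ?_
  · exact hind.map' (h3.comp u1).injective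
  · exact hind.map' u2.injective
  · apply mul_left_cancel₀ (mul_ne_zero n1 n2)
    generalize vm E ((h3.comp u1).comp ν) b1 = b at *
    generalize vm E ((h3.comp u1).comp ν) a1 = a at *
    generalize Algebra.TensorProduct.map g (u2.comp ν) b1 = b' at *
    generalize Algebra.TensorProduct.map g (u2.comp ν) a1 = a' at *
    generalize ev (AlgHom.id C E) ((h3.comp u1) ∘ w0) α = A1 at *
    generalize ev (AlgHom.id C E) ((h3.comp u1) ∘ w0) β = B1 at *
    generalize ev g (u2 ∘ w0) α = A2 at *
    generalize ev g (u2 ∘ w0) β = B2 at *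
    linear_combination B1 * B2 * r0 - b' * B2 * r1 + b * B1 * r2
end
end SNPV

namespace SNPV
open TensorProduct

section
variable {C E M : Type u} [Field C] [Field E] [Field M] [Algebra C E] [Algebra C M] [IsAlgClosed C]
  {D : Derivation ℤ E E} {DM : Derivation ℤ M M} {hC : ∀ c : C, DM (algebraMap C M c) = 0}
    {i σ : E →ₐ[C] M} {k : Subfield E}

lemma step2 {ι : Type u} (d : Dat D DM hC i σ k) (N : Subfield M)
    (hiN : ∀ e, i e ∈ N) (hND : ∀ n ∈ N, DM n ∈ N)
    (τ : N →+* FractionRing (MvPolynomial ι E)) (hτ : ∀ e, τ ⟨i e, hiN e⟩ = algebraMap E _ e)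
    (x : E) (hx : σ x ∈ N)
    (hγ : ∀ g ∈ Gp (C := C) D k, ∃ γ : N →+* M, (∀ e, γ ⟨i e, hiN e⟩ = i (g e)) ∧ γ ⟨σ x, hx⟩ = σ x ∧
      ∀ n : N, DM n = 0 → DM (γ n) = 0) :
    ∃ T : Submodule C E, Module.Finite C T ∧ (∀ g ∈ Gp (C := C) D k, ∀ t ∈ T, g t ∈ T) ∧
      ∀ L : Subfield E, (T : Set E) ⊆ L → ∃ g ∈ Gp (C := C) D k, g x ∈ L := by
  classical
  have hN : ∀ c : C, algebraMap C M c ∈ N := fun c => by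
    rw [← i.commutes c]; exact hiN _
  obtain ⟨A, a1, b1, κ, ν, hν, hb1, hab⟩ := step1 d N hN hiN hND τ hτ x hx
  obtain ⟨w0, hw0⟩ : ∃ w0 : κ → FractionRing (MvPolynomial κ C), w0 = fun j => algebraMap (MvPolynomial κ C) _ (MvPolynomial.X j) := ⟨_, rfl⟩
  have hind : AlgebraicIndependent C w0 := by
    let a0 : MvPolynomial κ C →ₐ[C] FractionRing (MvPolynomial κ C) := IsScalarTower.toAlgHom C _ _
    have ha0 : ∀ q, MvPolynomial.aeval w0 q = a0 q := by
      intro q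
      have : MvPolynomial.aeval w0 = a0 := by
        ext j; simp [hw0, a0]
      rw [this]
    intro p q h
    rw [ha0, ha0] at h
    exact IsFractionRing.injective _ _ h
  obtain ⟨α, β, hβ, hcop, hred⟩ := redux w0 hw0 (vm E ν a1) (vm E ν b1) (fun h => hb1 (vm_inj ν hν (by rw [h, map_zero])))
  let f1 : A →ₐ[C] cM DM hC :=
    { toFun := fun a => ⟨((a : cst DM hC N hN) : M), trivial, (a : cst DM hC N hN).2.2⟩
      map_zero' := rfl
      map_one' := rfl
      map_add' := fun _ _ => rfl
      map_mul' := fun _ _ => rfl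
      commutes' := fun _ => rfl }
  have hf1 : Function.Injective f1 := fun a b h => Subtype.ext (Subtype.ext (congrArg (fun z : cM DM hC => (z : M)) h))
  have hv1 : (cM DM hC).val.comp f1 = (cst DM hC N hN).val.comp A.val := rfl
  have hab' : mu i (cM DM hC).val (vm E f1 b1) * σ x = mu i (cM DM hC).val (vm E f1 a1) := by
    rw [mu_vm, mu_vm, hv1]; exact hab
  have hminj : Function.Injective (mu i (cM DM hC).val) := mu_inj D DM d.hconst i d.hi _
    (fun a b h => Subtype.ext h) (fun a => a.2.2)
  obtain ⟨Ω', _, _, gA, u1, hcomp⟩ := comp_alg f1 ν hf1 hν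
  have hY : ∀ g ∈ Gp (C := C) D k, ∃ s, s ≠ 0 ∧ ∀ y ∈ cspan (C := C) α β, ∃ y' ∈ cspan (C := C) α β, g y = s * y' := by
    intro g hg
    obtain ⟨γ, hγi, hγx, hγD⟩ := hγ g hg
    let φ0 : A →+* N :=
      { toFun := fun a => ⟨((a : cst DM hC N hN) : M), (a : cst DM hC N hN).2.1⟩
        map_zero' := rfl
        map_one' := rfl
        map_add' := fun _ _ => rfl
        map_mul' := fun _ _ => rfl }
    let γA : A →ₐ[C] cM DM hC :=
      { toFun := fun a => ⟨γ (φ0 a), trivial, hγD _ (a : cst DM hC N hN).2.2⟩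
        map_zero' := Subtype.ext (map_zero (γ.comp φ0))
        map_one' := Subtype.ext (map_one (γ.comp φ0))
        map_add' := fun _ _ => Subtype.ext (map_add (γ.comp φ0) _ _)
        map_mul' := fun _ _ => Subtype.ext (map_mul (γ.comp φ0) _ _)
        commutes' := fun c => Subtype.ext (by
          change γ ⟨algebraMap C M c, _⟩ = algebraMap C M c
          have h1 : i (algebraMap C E c) = algebraMap C M c := i.commutes c
          have h2 := hγi (algebraMap C E c)
          simp only [h1, g.commutes] at h2
          exact h2) }
    have hγA : Function.Injective γA := fun a b h => by
      have h1 := congrArg (fun z : cM DM hC => (z : M)) h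
      have h2 := γ.injective h1
      exact Subtype.ext (Subtype.ext (congrArg (fun z : N => (z : M)) h2))
    set m := mu i ((cst DM hC N hN).val.comp A.val) with hm
    have hmN : ∀ z, m z ∈ N := by
      intro z
      induction z using TensorProduct.induction_on with
      | zero => rw [map_zero]; exact N.zero_mem
      | add x y hx hy => rw [map_add]; exact N.add_mem hx hy
      | tmul e a => rw [hm, mu_tmul]; exact N.mul_mem (hiN e) (a : cst DM hC N hN).2.1
    have key : ∀ z : E ⊗[C] A, mu i (cM DM hC).val (Algebra.TensorProduct.map g γA z) = γ ⟨m z, hmN z⟩ := by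
      intro z
      induction z using TensorProduct.induction_on with
      | zero =>
        have : (⟨m 0, hmN 0⟩ : N) = 0 := Subtype.ext (map_zero m)
        rw [this, map_zero, map_zero, map_zero]
      | add x y hx hy =>
        have : (⟨m (x + y), hmN (x + y)⟩ : N) = ⟨m x, hmN x⟩ + ⟨m y, hmN y⟩ := Subtype.ext (map_add m x y)
        rw [this, map_add, map_add, hx, hy, map_add]
      | tmul e a =>
        have : (⟨m (e ⊗ₜ a), hmN (e ⊗ₜ a)⟩ : N) = ⟨i e, hiN e⟩ * ⟨((a : cst DM hC N hN) : M), (a : cst DM hC N hN).2.1⟩ := Subtype.ext (mu_tmul i _ e a)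
        rw [this, map_mul, hγi, Algebra.TensorProduct.map_tmul, mu_tmul]
        rfl
    have hab2 : γ ⟨m b1, hmN b1⟩ * σ x = γ ⟨m a1, hmN a1⟩ := by
      rw [← hγx, ← map_mul]
      exact congrArg γ (Subtype.ext hab)
    refine step2a f1 γA hf1 hγA ν hν gA u1 hcomp w0 hind g a1 b1 hb1 α β hβ hcop hred (hminj ?_)
    rw [map_mul, map_mul, key, key, ← hab', ← hab2]
    ring
  obtain ⟨T, hTf, hTs, hTL⟩ := semi D d.hDC d.hconst (Gp (C := C) D k) (fun g hg => hg.1) (cspan (C := C) α β) hY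
  refine ⟨T, hTf, hTs, fun L hL => ?_⟩
  have hdom : IsDomain (E ⊗[C] Ω') := tensor_domain
  have hh : vm E gA (vm E f1 b1) * ev (AlgHom.id C E) (u1 ∘ w0) β ≠ 0 := by
    refine mul_ne_zero (fun h => hb1 ?_) (ev_ne _ _ (hind.map' u1.injective) β hβ)
    rw [vm_vm] at h
    exact vm_inj (gA.comp f1) (gA.injective.comp hf1) (by rw [h, map_zero])
  obtain ⟨g, B, t, hg, hTB, hS, ⟨h', hh', hth⟩, H⟩ := d.spz gA {vm E f1 a1, vm E f1 b1} (Set.toFinite _)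
    {vm E gA (vm E f1 a1), vm E gA (vm E f1 b1)} (Set.toFinite _)
    ((fun m => MvPolynomial.aeval (u1 ∘ w0) (MvPolynomial.monomial m (1 : C))) '' (α.support ∪ β.support : Finset _))
    ((Finset.finite_toSet _).image _) _ hh
  refine ⟨g, hg, ?_⟩
  obtain ⟨a, ha⟩ := hS _ (Set.mem_insert _ _)
  obtain ⟨b, hb⟩ := hS _ (Set.mem_insert_of_mem _ rfl)
  obtain ⟨α', hα', hα''⟩ := ev_lift B (u1 ∘ w0) α (fun m hm => hTB ⟨m, by simp [MvPolynomial.mem_support_iff.1 hm], rfl⟩)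
  obtain ⟨β', hβ', hβ''⟩ := ev_lift B (u1 ∘ w0) β (fun m hm => hTB ⟨m, by simp [MvPolynomial.mem_support_iff.1 hm], rfl⟩)
  have h1 := H x _ (Set.mem_insert _ _) _ (Set.mem_insert_of_mem _ rfl) hab' a b ha hb
  have h2 : h' = b * β' := inc_inj B (by rw [hh', map_mul, hb, hβ'])
  rw [h2, map_mul] at hth
  have e1 : gA.comp f1 = u1.comp ν := by ext a; exact hcomp a
  have h3 : a * β' = b * α' := inc_inj B (by
    rw [map_mul, map_mul, ha, hb, hα', hβ', vm_vm, vm_vm, e1]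
    have r1 := congrArg (vm E u1) hred
    simp only [map_mul, vm_vm] at r1
    rw [vm_eq_map _ (ev _ _ _), vm_eq_map _ (ev _ _ _), ev_map, ev_map] at r1
    exact r1)
  have h4 := congrArg (pis t) h3
  rw [map_mul, map_mul, ← h1] at h4
  have nb := left_ne_zero_of_mul hth
  have nβ := right_ne_zero_of_mul hth
  have h5 : g x = pis t α' / pis t β' := by
    rw [eq_div_iff nβ]
    apply mul_left_cancel₀ nb
    linear_combination h4
  rw [h5]
  exact hTL L hL _ (hα'' t _ fun m => Submodule.subset_span (Or.inl ⟨m, rfl⟩)) _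
    (hβ'' t _ fun m => Submodule.subset_span (Or.inr ⟨m, rfl⟩))
end
end SNPV

namespace SNPV
open TensorProduct

lemma dg_k {E : Type u} [Field E] (D : E → E) (k : Subfield E) (S : Set E) : k ≤ diffGen D k S :=
  le_sInf fun _ h => h.1
lemma dg_S {E : Type u} [Field E] (D : E → E) (k : Subfield E) (S : Set E) : S ⊆ diffGen D k S := by
  intro x hx
  rw [diffGen, SetLike.mem_coe, Subfield.mem_sInf]
  exact fun F h => h.2.1 hx
lemma dg_D {E : Type u} [Field E] (D : E → E) (k : Subfield E) (S : Set E) : ∀ x ∈ diffGen D k S, D x ∈ diffGen D k S := by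
  intro x hx
  rw [diffGen, Subfield.mem_sInf] at hx ⊢
  exact fun F h => h.2.2 x (hx F h)
lemma dg_le {E : Type u} [Field E] (D : E → E) (k : Subfield E) (S : Set E) (F : Subfield E) (h1 : k ≤ F) (h2 : S ⊆ F)
    (h3 : ∀ x ∈ F, D x ∈ F) : diffGen D k S ≤ F := sInf_le ⟨h1, h2, h3⟩

lemma ess {E : Type u} [Field E] (k : Subfield E) (s : Finset E) (hs : Subfield.closure ((k : Set E) ∪ s) = ⊤) :
    Algebra.EssFiniteType k E := by
  rw [← IntermediateField.fg_top_iff]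
  refine ⟨s, ?_⟩
  rw [eq_top_iff]
  intro x _
  have hx : x ∈ Subfield.closure ((k : Set E) ∪ s) := by rw [hs]; trivial
  have hle : Subfield.closure ((k : Set E) ∪ s) ≤ (IntermediateField.adjoin k (s : Set E)).toSubfield := by
    rw [Subfield.closure_le]
    rintro y (hy | hy)
    · exact (IntermediateField.adjoin k (s : Set E)).algebraMap_mem ⟨y, hy⟩
    · exact IntermediateField.subset_adjoin k _ hy
  exact hle hx

lemma back {C E : Type u} [Field C] [Field E] [Algebra C E] (D : Derivation ℤ E E) (k : Subfield E) (T : Submodule C E) [Module.Finite C T]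
    (g : E →ₐ[C] E) (hg : g ∈ Gp (C := C) D k) (hT : ∀ t ∈ T, g t ∈ T) (x : E) (hx : g x ∈ diffGen D k T) : x ∈ diffGen D k T := by
  let gT : T →ₗ[C] T := g.toLinearMap.restrict hT
  have hinj : Function.Injective gT := fun a b h => Subtype.ext (g.injective (congrArg Subtype.val h))
  have hsurj : Function.Surjective gT := LinearMap.injective_iff_surjective.1 hinj
  have hle : diffGen D k T ≤ (diffGen D k T).map g.toRingHom := by
    apply dg_le
    · intro y hy
      exact ⟨y, dg_k _ _ _ hy, hg.2 y hy⟩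
    · intro y hy
      obtain ⟨t, ht⟩ := hsurj ⟨y, hy⟩
      exact ⟨t, dg_S _ _ _ t.2, congrArg Subtype.val ht⟩
    · rintro _ ⟨y, hy, rfl⟩
      exact ⟨D y, dg_D _ _ _ y hy, hg.1 y⟩
  obtain ⟨y, hy, hy'⟩ := hle hx
  rwa [← g.injective hy']

theorem main {E : Type u} [Field E] [CharZero E] (D : Derivation ℤ E E)
    (k K : Subfield E) (hk : ∀ x ∈ k, D x ∈ k) (hK : ∀ x ∈ K, D x ∈ K)
    (hC : IsAlgClosed ↥(constantsOf D k))
    (hkK : k < K)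
    (hSN : IsSN (⇑D) k)
    (hembed : ∃ (ι : Type u) (ψ : ↥K →+* FractionRing (MvPolynomial ι ↥k)),
      ∀ (x : E) (hx : x ∈ k),
        ψ ⟨x, hkK.le hx⟩ =
          algebraMap (MvPolynomial ι ↥k) (FractionRing (MvPolynomial ι ↥k))
            (MvPolynomial.C ⟨x, hx⟩)) :
    ∃ L : Subfield E, K ≤ L ∧ IsPV (⇑D) k L := by
  classical
  obtain ⟨ι, ψ0, hψ0⟩ := hembed
  obtain ⟨-, ⟨s, hs⟩, hc, -⟩ := id hSN
  have := ess k s hs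
  let K' : IntermediateField k E := K.toIntermediateField (fun x => hkK.le x.2)
  let ψ : K' →ₐ[k] FractionRing (MvPolynomial ι k) :=
    { toFun := fun x => ψ0 ⟨x, x.2⟩
      map_zero' := map_zero ψ0
      map_one' := map_one ψ0
      map_add' := fun x y => map_add ψ0 ⟨x, x.2⟩ ⟨y, y.2⟩
      map_mul' := fun x y => map_mul ψ0 ⟨x, x.2⟩ ⟨y, y.2⟩
      commutes' := fun x => by
        refine (hψ0 x x.2).trans ?_
        rw [IsScalarTower.algebraMap_apply k (MvPolynomial ι k) (FractionRing (MvPolynomial ι k))]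
        rfl }
  obtain ⟨p, hp⟩ : (minimalPrimes (E ⊗[k] E)).Nonempty := by
    obtain ⟨m, hm⟩ := Ideal.exists_maximal (E ⊗[k] E)
    have := hm.isPrime
    obtain ⟨p, hp, -⟩ := Ideal.exists_minimalPrimes_le (I := (⊥ : Ideal (E ⊗[k] E))) (J := m) bot_le
    exact ⟨p, hp⟩
  obtain ⟨M, _, _, DM, hCM, i, σ, d, q, hq, hq'⟩ := exists_dat D k hSN p hp
  obtain ⟨N, hiN, hσN, hND, ⟨τ, hτ⟩, hγ⟩ := exists_N d K' hK ψ p hp q hq hq'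
  obtain ⟨F, hF, hFK, hKF⟩ := fg_sub K'
  have hst : ∀ x : F, ∃ T : Submodule (constantsOf D k) E, Module.Finite (constantsOf D k) T ∧ (∀ g ∈ Gp (C := constantsOf D k) D k, ∀ t ∈ T, g t ∈ T) ∧
      ∀ L : Subfield E, (T : Set E) ⊆ L → ∃ g ∈ Gp (C := constantsOf D k) D k, g x ∈ L := by
    intro x
    refine step2 d N hiN hND τ hτ x (hσN x (hFK x.2)) fun g hg => ?_
    obtain ⟨γ, h1, h2, h3⟩ := hγ g hg
    exact ⟨γ, h1, h2 x (hFK x.2), h3⟩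
  choose T hTf hTs hTL using hst
  have := hF.to_subtype
  let T' : Submodule (constantsOf D k) E := ⨆ x, T x
  have hT'f : Module.Finite (constantsOf D k) T' := by
    have := Submodule.finite_iSup T
    exact this
  have hT's : ∀ g ∈ Gp (C := constantsOf D k) D k, ∀ t ∈ T', g t ∈ T' := by
    intro g hg t ht
    have : T' ≤ T'.comap g.toLinearMap := iSup_le fun x t ht => (le_iSup T x) (hTs x g hg t ht)
    exact this ht
  let L := diffGen D k T'
  have hFL : ∀ x ∈ F, x ∈ L := by
    intro x hx
    obtain ⟨g, hg, hgx⟩ := hTL ⟨x, hx⟩ L (fun t ht => dg_S _ _ _ ((le_iSup T ⟨x, hx⟩) ht))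
    exact back D k T' g hg (hT's g hg) x hgx
  refine ⟨L, ?_, ?_⟩
  · let L' : IntermediateField k E := L.toIntermediateField (fun x => dg_k _ _ _ x.2)
    have : IntermediateField.adjoin k F ≤ L' := IntermediateField.adjoin_le_iff.2 hFL
    exact fun x hx => this (hKF hx)
  · obtain ⟨n, a, y, ha, hy, hsp, hLy⟩ := pv D (fun c : constantsOf D k => c.2.2) (fun x hx => ⟨⟨x, hc x hx, hx⟩, rfl⟩) k (Gp (C := constantsOf D k) D k)
      (fun g hg => hg.1) (fixed D k hSN) T' hT's
    have hyT : ∀ j, y j ∈ T' := fun j => by rw [← hsp]; exact Submodule.subset_span ⟨j, rfl⟩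
    refine ⟨n, a, dg_k _ _ _, hk, dg_D _ _ _, fun x _ => hc x, ha, y, fun j => dg_S _ _ _ (hyT j), hLy, ?_, ?_⟩
    · intro c hc' h0 j
      have := Fintype.linearIndependent_iff.1 hy (fun j => ⟨c j, hc' j⟩) h0 j
      exact congrArg Subtype.val this
    · apply le_antisymm
      · refine dg_le _ _ _ _ (dg_k _ _ _) ?_ (dg_D _ _ _)
        rintro _ ⟨j, rfl⟩
        exact dg_S _ _ _ (hyT j)
      · refine dg_le _ _ _ _ (dg_k _ _ _) ?_ (dg_D _ _ _)
        intro t ht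
        rw [SetLike.mem_coe, ← hsp] at ht
        induction ht using Submodule.span_induction with
        | mem x hx => exact dg_S _ _ _ hx
        | zero => exact Subfield.zero_mem _
        | add x y _ _ hx hy => exact Subfield.add_mem _ hx hy
        | smul c x _ hx =>
          rw [Algebra.smul_def]
          exact Subfield.mul_mem _ (dg_k _ _ _ c.2.1) hx
end SNPV

/-- If `E` is a strongly normal extension of `k` and the intermediate
differential field `K` embeds, as a field over `k`, into a purely transcendental extension
`k(Xᵢ : i ∈ ι)` of `k`, then `K` lies inside a Picard–Vessiot extension `L` of `k`
intermediate between `k` and `E`. -/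
theorem stmt1 {E : Type u} [Field E] [CharZero E] (D : Derivation ℤ E E)
    (k K : Subfield E)
    (hk : ∀ x ∈ k, D x ∈ k) (hK : ∀ x ∈ K, D x ∈ K)
    (hC : IsAlgClosed ↥(constantsOf D k))
    (hkK : k < K)
    (hSN : IsSN (⇑D) k)
    (hembed : ∃ (ι : Type u) (ψ : ↥K →+* FractionRing (MvPolynomial ι ↥k)),
      ∀ (x : E) (hx : x ∈ k),
        ψ ⟨x, hkK.le hx⟩ =
          algebraMap (MvPolynomial ι ↥k) (FractionRing (MvPolynomial ι ↥k))
            (MvPolynomial.C ⟨x, hx⟩)) :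
    ∃ L : Subfield E, K ≤ L ∧ IsPV (⇑D) k L := by
  exact SNPV.main D k K hk hK hC hkK hSN hembed
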